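/- arXiv:2507.16730 — 2 statements merged into one kernel-verified Lean document; each statement's English description precedes it below -/
import Mathlib

section
/- Almost all cographs have a generalized cospectral mate that is itself a cograph. Precisely, letting c(n) denote the number of isomorphism classes of cographs on n vertices and g(n) denote the number of isomorphism classes of cographs G on n vertices for which there exists a cograph H on n vertices that is generalized cospectral with G but not isomorphic to G, one has lim_{n→∞} g(n)/c(n) = 1. -/
open SimpleGraph

/-- The characteristic polynomial (over `ℝ`) of the adjacency matrix of a finite graph. -/
noncomputable def adjCharPoly {V : Type} [Fintype V] [DecidableEq V] (G : SimpleGraph V) :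
    Polynomial ℝ :=
  letI := Classical.decRel G.Adj
  Matrix.charpoly (G.adjMatrix ℝ)

/-- Two finite graphs are cospectral if their adjacency matrices have the same
characteristic polynomial. -/
def Cospectral {V W : Type} [Fintype V] [DecidableEq V] [Fintype W] [DecidableEq W]
    (G : SimpleGraph V) (H : SimpleGraph W) : Prop :=
  adjCharPoly G = adjCharPoly H

/-- Generalized cospectrality: the graphs are cospectral and so are their complements. -/
def GenCospectral {V W : Type} [Fintype V] [DecidableEq V] [Fintype W] [DecidableEq W]
    (G : SimpleGraph V) (H : SimpleGraph W) : Prop :=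
  Cospectral G H ∧ Cospectral Gᶜ Hᶜ

/-- A cograph is a graph with no induced path `P₄` (on 4 vertices). -/
def IsCograph {V : Type} (G : SimpleGraph V) : Prop :=
  ¬ ∃ f : Fin 4 ↪ V, ∀ i j, G.Adj (f i) (f j) ↔ (SimpleGraph.pathGraph 4).Adj i j

/-- The number of isomorphism classes of graphs on `n` vertices satisfying an
isomorphism-invariant property `P`. -/
noncomputable def classCount (n : ℕ) (P : SimpleGraph (Fin n) → Prop) : ℕ :=
  Nat.card (Quot fun G H : {G : SimpleGraph (Fin n) // P G} => Nonempty (G.1 ≃g H.1))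

/-!
Isomorphism classes of finite graphs form a free commutative monoid under disjoint union, whose
generators are the connected classes. A class is generalized cospectral to another one exactly when
their pairs (characteristic polynomial, numerator of the walk generating function) agree, and
disjoint union and complementation act on these pairs. Hence the cographs without a cograph mate are
closed under passing to summands and to complements.

Let `c n` and `t n` count the cographs and the connected cographs on `n` vertices. Unique
factorization gives Euler's recursion `n * c n = ∑ s * t s * c k` over the pairs `(s, k)` with
`s ∣ n - k`, and for `n ≥ 2` exactly one of a cograph and its complement is connected, so
`c n = 2 * t n`. For mateless cographs the recursion is an inequality. Dividing, the proportion
`r n` of mateless cographs is at most a weighted average of the products `r s * r k` with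
`s, k < n`.

A mated cograph on 15 vertices, padded with isolated vertices, gives `r n < 1` for `n ≥ 15`. The
averaging bounds `r n` away from `1` uniformly, and then contracts every eventual upper bound of `r`
by a fixed factor, so that `r n` tends to `0`.
-/

/-! ### Isomorphism classes of finite graphs -/

/-- The relation of isomorphism between graphs on the vertex sets `Fin n`, for varying `n`. -/
def graphSetoid : Setoid (Σ n : ℕ, SimpleGraph (Fin n)) where
  r G H := Nonempty (G.2 ≃g H.2)
  iseqv := ⟨fun _ => ⟨Iso.refl⟩, fun ⟨e⟩ => ⟨e.symm⟩, fun ⟨e⟩ ⟨f⟩ => ⟨e.trans f⟩⟩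

/-- The type of isomorphism classes of finite graphs. Invariants and operations are defined on
the representative `GraphClass.graph`, and computed on `GraphClass.cls G` for arbitrary `G`. -/
def GraphClass : Type := Quotient graphSetoid

namespace GraphClass

variable {V W : Type}

/-- The isomorphism class of a finite graph. -/
noncomputable def cls [Finite V] (G : SimpleGraph V) : GraphClass :=
  Quotient.mk graphSetoid ⟨Nat.card V, G.map (Finite.equivFin V)⟩

/-- The number of vertices. -/
noncomputable def size (g : GraphClass) : ℕ := (Quotient.out g).1

/-- A representative of the class. -/
noncomputable def graph (g : GraphClass) : SimpleGraph (Fin g.size) := (Quotient.out g).2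

theorem cls_eq_iff [Finite V] [Finite W] {G : SimpleGraph V} {H : SimpleGraph W} :
    cls G = cls H ↔ Nonempty (G ≃g H) := by
  have toFin := Iso.map (Finite.equivFin V) G
  have toFin' := Iso.map (Finite.equivFin W) H
  exact (Quotient.eq (r := graphSetoid)).trans
    ⟨fun ⟨e⟩ => ⟨(toFin.trans e).trans toFin'.symm⟩, fun ⟨e⟩ => ⟨(toFin.symm.trans e).trans toFin'⟩⟩

@[simp]
theorem cls_graph (g : GraphClass) : cls g.graph = g :=
  (Quotient.sound (s := graphSetoid) ⟨(Iso.map (Finite.equivFin _) _).symm⟩).trans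
    (Quotient.out_eq g)

theorem exists_cls (g : GraphClass) : ∃ (n : ℕ) (G : SimpleGraph (Fin n)), cls G = g :=
  ⟨_, _, cls_graph g⟩

/-- The isomorphism between a graph and the representative of its class. -/
noncomputable def graphIso [Finite V] (G : SimpleGraph V) : (cls G).graph ≃g G :=
  (cls_eq_iff.1 (cls_graph (cls G))).some

@[simp]
theorem size_cls [Finite V] (G : SimpleGraph V) : size (cls G) = Nat.card V := by
  simpa using Nat.card_congr (graphIso G).toEquiv

theorem finite_setOf_size_eq (n : ℕ) : {g : GraphClass | g.size = n}.Finite := by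
  refine (Set.finite_range fun G : SimpleGraph (Fin n) => cls G).subset ?_
  rintro g rfl
  exact ⟨g.graph, cls_graph g⟩

/-- The class of the complement graph. -/
noncomputable instance : Compl GraphClass := ⟨fun g => cls g.graphᶜ⟩

/-- Isomorphic graphs have isomorphic complements. -/
def complIso {G : SimpleGraph V} {H : SimpleGraph W} (e : G ≃g H) : Gᶜ ≃g Hᶜ :=
  ⟨e.toEquiv, by simp [compl_adj, e.map_adj_iff]⟩

theorem compl_cls [Finite V] (G : SimpleGraph V) : (cls G)ᶜ = cls Gᶜ :=
  cls_eq_iff.2 ⟨complIso (graphIso G)⟩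

@[simp]
theorem compl_compl (g : GraphClass) : gᶜᶜ = g := by
  obtain ⟨n, G, rfl⟩ := g.exists_cls
  rw [compl_cls, compl_cls, _root_.compl_compl]

theorem compl_injective : Function.Injective (Compl.compl : GraphClass → GraphClass) :=
  Function.LeftInverse.injective compl_compl

@[simp]
theorem size_compl (g : GraphClass) : gᶜ.size = g.size :=
  (size_cls _).trans (by simp)

/-- The class of the graph without vertices. -/
noncomputable instance : Zero GraphClass := ⟨cls (⊥ : SimpleGraph (Fin 0))⟩

/-- The class of the one-vertex graph. -/
noncomputable def point : GraphClass := cls (⊥ : SimpleGraph (Fin 1))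

/-- Addition of classes is disjoint union of graphs. -/
noncomputable instance : Add GraphClass := ⟨fun a b => cls (a.graph ⊕g b.graph)⟩

theorem cls_add_cls [Finite V] [Finite W] (G : SimpleGraph V) (H : SimpleGraph W) :
    cls G + cls H = cls (G ⊕g H) :=
  cls_eq_iff.2 ⟨Iso.sumCongr (graphIso G) (graphIso H)⟩

theorem cls_eq_zero_iff [Finite V] (G : SimpleGraph V) : cls G = 0 ↔ IsEmpty V := by
  refine cls_eq_iff.trans ⟨fun ⟨e⟩ => e.toEquiv.isEmpty, fun h => ⟨⟨Equiv.equivOfIsEmpty _ _, ?_⟩⟩⟩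
  exact fun {a} => h.elim a

theorem cls_ne_zero_iff [Finite V] (G : SimpleGraph V) : cls G ≠ 0 ↔ Nonempty V := by
  rw [Ne, cls_eq_zero_iff, not_isEmpty_iff]

/-- Disjoint union with the empty graph does not change a graph. -/
def emptySumIso (G : SimpleGraph V) : (⊥ : SimpleGraph (Fin 0)) ⊕g G ≃g G :=
  ⟨Equiv.emptySum _ _, by
    rintro (a | a) (b | b) <;> first | exact a.elim0 | exact b.elim0 | simp⟩

noncomputable instance : AddCommMonoid GraphClass where
  add_comm _ _ := cls_eq_iff.2 ⟨Iso.sumComm⟩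
  add_assoc a b c := by
    obtain ⟨n, G, rfl⟩ := a.exists_cls
    obtain ⟨m, H, rfl⟩ := b.exists_cls
    obtain ⟨k, I, rfl⟩ := c.exists_cls
    simp only [cls_add_cls]
    exact cls_eq_iff.2 ⟨Iso.sumAssoc⟩
  zero_add a := by
    obtain ⟨n, G, rfl⟩ := a.exists_cls
    exact (cls_add_cls _ _).trans (cls_eq_iff.2 ⟨emptySumIso G⟩)
  add_zero a := by
    obtain ⟨n, G, rfl⟩ := a.exists_cls
    exact (cls_add_cls _ _).trans (cls_eq_iff.2 ⟨Iso.sumComm.trans (emptySumIso G)⟩)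
  nsmul := nsmulRec

@[simp]
theorem size_add (a b : GraphClass) : size (a + b) = size a + size b :=
  (size_cls _).trans (by simp)

@[simp]
theorem size_zero : size 0 = 0 := (size_cls _).trans (by simp)

@[simp]
theorem size_point : size point = 1 := (size_cls _).trans (by simp)

/-- The number of vertices, as an additive homomorphism. -/
noncomputable def sizeHom : GraphClass →+ ℕ := ⟨⟨size, size_zero⟩, size_add⟩

@[simp]
theorem size_nsmul (k : ℕ) (g : GraphClass) : size (k • g) = k * size g := map_nsmul sizeHom k g

theorem size_eq_zero_iff {g : GraphClass} : g.size = 0 ↔ g = 0 := by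
  obtain ⟨n, G, rfl⟩ := g.exists_cls
  rw [cls_eq_zero_iff, size_cls, Finite.card_eq_zero_iff]

theorem eq_point_of_size_eq_one {g : GraphClass} (h : g.size = 1) : g = point := by
  obtain ⟨n, G, rfl⟩ := g.exists_cls
  obtain rfl : n = 1 := by simpa using h
  rw [point, Subsingleton.elim G ⊥]

/-- Connectedness of the graphs in a class. -/
def Connected (g : GraphClass) : Prop := g.graph.Connected

theorem connected_cls [Finite V] {G : SimpleGraph V} : Connected (cls G) ↔ G.Connected :=
  (graphIso G).connected_iff

theorem connected_point : Connected point :=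
  connected_cls.2 ⟨fun u v => by rw [Subsingleton.elim u v]⟩

theorem Connected.ne_zero {g : GraphClass} (h : Connected g) : g ≠ 0 := by
  rw [← cls_graph g, cls_ne_zero_iff]
  exact SimpleGraph.Connected.nonempty h

theorem connected_or_connected_compl {g : GraphClass} (h : g ≠ 0) : Connected g ∨ Connected gᶜ := by
  rw [← cls_graph g, cls_ne_zero_iff] at h
  exact (SimpleGraph.connected_or_connected_compl g.graph).imp id connected_cls.2

theorem not_connected_add {a b : GraphClass} (ha : a ≠ 0) (hb : b ≠ 0) : ¬ Connected (a + b) := by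
  rw [← cls_graph a, cls_ne_zero_iff] at ha
  rw [← cls_graph b, cls_ne_zero_iff] at hb
  exact mt connected_cls.1 not_connected_sum

theorem exists_eq_add_of_not_connected {g : GraphClass} (h0 : g ≠ 0) (h : ¬ Connected g) :
    ∃ a b, a ≠ 0 ∧ b ≠ 0 ∧ g = a + b := by
  classical
  rw [← cls_graph g, cls_ne_zero_iff] at h0
  obtain ⟨u, v, huv⟩ : ∃ u v, ¬ g.graph.Reachable u v := by
    by_contra! hreach
    exact h ⟨hreach⟩
  let S : Set (Fin g.size) := {w | g.graph.Reachable u w}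
  have no_edge : ∀ a ∈ S, ∀ b ∉ S, ¬ g.graph.Adj a b := fun a ha b hb hab =>
    hb (ha.trans hab.reachable)
  refine ⟨cls (g.graph.induce S), cls (g.graph.induce Sᶜ), ?_, ?_, ?_⟩
  · exact (cls_ne_zero_iff _).2 ⟨⟨u, Reachable.refl u⟩⟩
  · exact (cls_ne_zero_iff _).2 ⟨⟨v, huv⟩⟩
  · refine (cls_graph g).symm.trans ((cls_add_cls _ _).trans (cls_eq_iff.2 ⟨?_⟩)).symm
    refine (⟨Equiv.Set.sumCompl S, ?_⟩ : (_ ⊕g _) ≃g g.graph)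
    rintro (⟨a, ha⟩ | ⟨a, ha⟩) (⟨b, hb⟩ | ⟨b, hb⟩)
    · simp
    · simpa using no_edge a ha b hb
    · simpa [SimpleGraph.adj_comm] using no_edge b hb a ha
    · simp

end GraphClass

/-! ### Components -/

namespace GraphClass

section Components

variable {V W : Type} {G : SimpleGraph V} {H : SimpleGraph W}

theorem exists_reachable_of_reachable_map (f : G ↪g H)
    (hf : ∀ v w, H.Adj (f v) w → w ∈ Set.range f) {v : V} {w : W} (h : H.Reachable (f v) w) :
    ∃ u, f u = w ∧ G.Reachable v u := by
  by_contra! hw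
  obtain ⟨d, -, ⟨u, hu, hvu⟩, hd⟩ := h.some.exists_boundary_dart
    {x | ∃ u, f u = x ∧ G.Reachable v u} ⟨v, rfl, Reachable.refl v⟩ fun ⟨u, hu, hvu⟩ => hw u hu hvu
  obtain ⟨z, hz⟩ := hf u d.snd (hu ▸ d.adj)
  exact hd ⟨z, hz, hvu.trans (f.map_adj_iff.1 (by rw [hu, hz]; exact d.adj)).reachable⟩

theorem map_connectedComponent_injective (f : G ↪g H)
    (hf : ∀ v w, H.Adj (f v) w → w ∈ Set.range f) :
    Function.Injective (ConnectedComponent.map f.toHom) := by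
  refine ConnectedComponent.ind₂ fun v w h => ?_
  obtain ⟨u, hu, hvu⟩ := exists_reachable_of_reachable_map f hf (ConnectedComponent.exact h)
  exact ConnectedComponent.sound (f.injective hu ▸ hvu)

theorem cls_map_connectedComponent [Finite V] [Finite W] (f : G ↪g H)
    (hf : ∀ v w, H.Adj (f v) w → w ∈ Set.range f) (C : G.ConnectedComponent) :
    cls (C.map f.toHom).toSimpleGraph = cls C.toSimpleGraph := by
  have mem_map_iff : ∀ v, f v ∈ (C.map f.toHom).supp ↔ v ∈ C.supp := fun v =>
    (map_connectedComponent_injective f hf).eq_iff (a := G.connectedComponentMk v)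
  have hbij : Function.Bijective fun v : C.supp =>
      (⟨f v, (mem_map_iff v).2 v.2⟩ : (C.map f.toHom).supp) := by
    refine ⟨fun v w h => Subtype.ext (f.injective (congrArg Subtype.val h)), ?_⟩
    rintro ⟨w, hw⟩
    obtain ⟨v, rfl⟩ := C.exists_rep
    obtain ⟨u, rfl, -⟩ := exists_reachable_of_reachable_map f hf (ConnectedComponent.exact hw).symm
    exact ⟨⟨u, (mem_map_iff u).1 hw⟩, rfl⟩
  exact cls_eq_iff.2 ⟨Iso.symm ⟨Equiv.ofBijective _ hbij, f.map_adj_iff⟩⟩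

/-- The multiset of the classes of the connected components of a graph. -/
noncomputable def graphComponents [Finite V] (G : SimpleGraph V) : Multiset GraphClass :=
  ∑ᶠ C : G.ConnectedComponent, {cls C.toSimpleGraph}

theorem graphComponents_congr [Finite V] [Finite W] (e : G ≃g H) :
    graphComponents G = graphComponents H :=
  finsum_eq_of_bijective _ e.connectedComponentEquiv.bijective fun C => congrArg _
    (cls_map_connectedComponent e.toEmbedding (fun _ w _ => e.surjective w) C).symm

/-- The map sending the components of two graphs to components of their disjoint union. -/
def sumComponent : G.ConnectedComponent ⊕ H.ConnectedComponent → (G ⊕g H).ConnectedComponent :=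
  Sum.elim (ConnectedComponent.map Embedding.sumInl.toHom)
    (ConnectedComponent.map Embedding.sumInr.toHom)

theorem sumInl_closed (v : V) (w : V ⊕ W)
    (h : (G ⊕g H).Adj (Embedding.sumInl (G := G) (H := H) v) w) :
    w ∈ Set.range (Embedding.sumInl (G := G) (H := H)) := by
  rcases w with w | w
  · exact ⟨w, rfl⟩
  · exact absurd h (not_adj_sum_inl_inr v w)

theorem sumInr_closed (v : W) (w : V ⊕ W)
    (h : (G ⊕g H).Adj (Embedding.sumInr (G := G) (H := H) v) w) :
    w ∈ Set.range (Embedding.sumInr (G := G) (H := H)) := by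
  rcases w with w | w
  · exact absurd h.symm (not_adj_sum_inl_inr w v)
  · exact ⟨w, rfl⟩

theorem sumComponent_bijective : Function.Bijective (sumComponent (G := G) (H := H)) := by
  constructor
  · refine (map_connectedComponent_injective _ sumInl_closed).sumElim
      (map_connectedComponent_injective _ sumInr_closed) fun C D => ?_
    obtain ⟨v, rfl⟩ := C.exists_rep
    obtain ⟨w, rfl⟩ := D.exists_rep
    exact fun h => not_reachable_sum_inl_inr v w (ConnectedComponent.exact h)
  · refine ConnectedComponent.ind ?_
    rintro (v | w)
    exacts [⟨Sum.inl (G.connectedComponentMk v), rfl⟩, ⟨Sum.inr (H.connectedComponentMk w), rfl⟩]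

theorem graphComponents_sum [Finite V] [Finite W] (G : SimpleGraph V) (H : SimpleGraph W) :
    graphComponents (G ⊕g H) = graphComponents G + graphComponents H := by
  have := Fintype.ofFinite G.ConnectedComponent
  have := Fintype.ofFinite H.ConnectedComponent
  rw [graphComponents, ← finsum_eq_of_bijective (f := fun C => {cls (sumComponent C).toSimpleGraph})
    _ (sumComponent_bijective (G := G) (H := H)) fun _ => rfl]
  simp only [graphComponents, finsum_eq_sum_of_fintype, Fintype.sum_sum_type, sumComponent,
    Sum.elim_inl, Sum.elim_inr, cls_map_connectedComponent _ sumInl_closed,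
    cls_map_connectedComponent _ sumInr_closed]

theorem graphComponents_of_connected [Finite V] (h : G.Connected) :
    graphComponents G = {cls G} := by
  have := h.preconnected.subsingleton_connectedComponent
  obtain ⟨v⟩ := h.nonempty
  rw [graphComponents, finsum_eq_single _ (G.connectedComponentMk v)
    fun C hC => absurd (Subsingleton.elim C _) hC]
  refine congrArg _ (cls_eq_iff.2 ⟨⟨Equiv.subtypeUnivEquiv fun w => ?_, Iff.rfl⟩⟩)
  exact ConnectedComponent.sound (h.preconnected w v)

end Components

/-- The multiset of connected components of a class. -/
noncomputable def components (g : GraphClass) : Multiset GraphClass := graphComponents g.graph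

@[simp]
theorem components_add (a b : GraphClass) : components (a + b) = components a + components b :=
  (graphComponents_congr (graphIso _)).trans (graphComponents_sum _ _)

theorem Connected.components {g : GraphClass} (h : Connected g) : components g = {g} :=
  (graphComponents_of_connected h).trans (by rw [cls_graph])

@[simp]
theorem components_zero : components 0 = 0 := by
  simpa using components_add 0 0

theorem components_multiset_sum {M : Multiset GraphClass} (hM : ∀ c ∈ M, Connected c) :
    components M.sum = M := by
  induction M using Multiset.induction_on with
  | empty => simp
  | cons a M ih =>
    rw [Multiset.forall_mem_cons] at hM
    rw [Multiset.sum_cons, components_add, hM.1.components, ih hM.2, Multiset.singleton_add]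

theorem exists_multiset_sum_eq (g : GraphClass) :
    ∃ M : Multiset GraphClass, (∀ c ∈ M, Connected c) ∧ M.sum = g := by
  induction hn : g.size using Nat.strong_induction_on generalizing g with
  | _ n ih =>
    by_cases h0 : g = 0
    · exact ⟨0, by simp [h0]⟩
    by_cases hc : Connected g
    · exact ⟨{g}, by simpa using hc⟩
    obtain ⟨a, b, ha, hb, rfl⟩ := exists_eq_add_of_not_connected h0 hc
    rw [Ne, ← size_eq_zero_iff] at ha hb
    rw [size_add] at hn
    obtain ⟨M, hM, hMa⟩ := ih a.size (by lia) a rfl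
    obtain ⟨N, hN, hNb⟩ := ih b.size (by lia) b rfl
    refine ⟨M + N, fun c hc => ?_, by rw [Multiset.sum_add, hMa, hNb]⟩
    exact (Multiset.mem_add.1 hc).elim (hM c) (hN c)

@[simp]
theorem sum_components (g : GraphClass) : (components g).sum = g := by
  obtain ⟨M, hM, rfl⟩ := g.exists_multiset_sum_eq
  rw [components_multiset_sum hM]

theorem connected_of_mem_components {g c : GraphClass} (hc : c ∈ components g) : Connected c := by
  obtain ⟨M, hM, rfl⟩ := g.exists_multiset_sum_eq
  rw [components_multiset_sum hM] at hc
  exact hM c hc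

instance : IsRightCancelAdd GraphClass where
  add_right_cancel c a b h := by
    have := congrArg components h
    simp only [components_add, add_left_inj] at this
    rw [← sum_components a, this, sum_components]

end GraphClass

/-! ### Cographs -/

namespace IsCograph

variable {V W : Type} {G : SimpleGraph V} {H : SimpleGraph W}

theorem iff_forall_adj : IsCograph G ↔
    ∀ a b c d, G.Adj a b → G.Adj b c → G.Adj c d → ¬ G.Adj a c → ¬ G.Adj a d → G.Adj b d := by
  rw [IsCograph, not_iff_comm]
  push Not
  constructor
  · rintro ⟨a, b, c, d, hab, hbc, hcd, hac, had, hbd⟩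
    have := hab.ne
    have := hbc.ne
    have := hcd.ne
    have : a ≠ c := by rintro rfl; exact had hcd
    have : a ≠ d := by rintro rfl; exact hac hcd.symm
    have : b ≠ d := by rintro rfl; exact had hab
    refine ⟨⟨![a, b, c, d], fun i j hij => ?_⟩, fun i j => ?_⟩
    · fin_cases i <;> fin_cases j <;> simp_all
    · change G.Adj (![a, b, c, d] i) (![a, b, c, d] j) ↔ _
      fin_cases i <;> fin_cases j <;>
        simp_all [pathGraph_adj, G.adj_comm b a, G.adj_comm c b, G.adj_comm d c,
          G.adj_comm c a, G.adj_comm d a, G.adj_comm d b]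
  · rintro ⟨f, hf⟩
    refine ⟨f 0, f 1, f 2, f 3, ?_, ?_, ?_, ?_, ?_, ?_⟩ <;> rw [hf] <;> simp [pathGraph_adj]

theorem of_embedding (f : G ↪g H) (h : IsCograph H) : IsCograph G := by
  rw [iff_forall_adj] at h ⊢
  intro a b c d
  simpa only [f.map_adj_iff] using h (f a) (f b) (f c) (f d)

theorem congr (e : G ≃g H) : IsCograph G ↔ IsCograph H :=
  ⟨of_embedding e.symm.toEmbedding, of_embedding e.toEmbedding⟩

theorem of_subsingleton [Subsingleton V] : IsCograph G :=
  iff_forall_adj.2 fun a b _ _ hab => absurd (Subsingleton.elim a b) hab.ne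

/-- The complement of the path `a b c d` is the path `c a d b`. -/
theorem compl (h : IsCograph G) : IsCograph Gᶜ := by
  rw [iff_forall_adj] at h ⊢
  intro a b c d hab hbc hcd hac had
  have hac_ne : a ≠ c := by rintro rfl; exact had hcd
  have had_ne : a ≠ d := by rintro rfl; exact hac hcd.symm
  have hbd_ne : b ≠ d := by rintro rfl; exact had hab
  simp only [compl_adj, not_and, not_not] at *
  exact ⟨hbd_ne, fun hbd => hab.2 <| h c a d b (hac hac_ne).symm (had had_ne) hbd.symm
    hcd.2 fun hcb => hbc.2 hcb.symm⟩

theorem sum (hG : IsCograph G) (hH : IsCograph H) : IsCograph (G ⊕g H) := by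
  rw [iff_forall_adj] at *
  rintro (a | a) (b | b) (c | c) (d | d) <;>
    first | exact hG a b c d | exact hH a b c d | simp

/-- If `v` were a cut vertex with component `K` of `G - v` containing a non-neighbour of `v`, then
`b, v, s, t` would be an induced path, with `b ∉ K` adjacent to `v` and `s t` an edge of `K`. -/
theorem connected_induce_compl_singleton [Nontrivial V] (hG : IsCograph G) (hc : G.Connected)
    (hcc : Gᶜ.Connected) (v : V) : (G.induce {v}ᶜ).Connected := by
  by_contra hcut
  obtain ⟨u, hvu⟩ := hcc.preconnected.exists_adj_of_nontrivial v
  let K : Set V := {x | ∃ hx : x ≠ v, (G.induce {v}ᶜ).Reachable ⟨u, hvu.ne'⟩ ⟨x, hx⟩}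
  have mem_K_of_adj {x y} (hx : x ∈ K) (hxy : G.Adj x y) (hy : y ≠ v) : y ∈ K :=
    ⟨hy, hx.2.trans (Adj.reachable hxy)⟩
  have hvK : v ∉ K := fun h => h.1 rfl
  obtain ⟨a, ha, hva⟩ : ∃ a ∈ K, G.Adj v a := by
    obtain ⟨d, -, hd, hd'⟩ := (hc u v).some.exists_boundary_dart K ⟨hvu.ne', .refl _⟩ hvK
    have : d.snd = v := by_contra fun h => hd' (mem_K_of_adj hd d.adj h)
    exact ⟨d.fst, hd, this ▸ d.adj.symm⟩
  obtain ⟨b, hb, hvb⟩ : ∃ b ∉ K, G.Adj v b := by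
    obtain ⟨w, hwv, hw⟩ : ∃ w ≠ v, w ∉ K := by
      by_contra! h
      have reach (x : ({v}ᶜ : Set V)) := (h x.1 x.2).2
      exact hcut ((connected_iff _).2
        ⟨fun x y => (reach x).symm.trans (reach y), ⟨⟨u, hvu.ne'⟩⟩⟩)
    obtain ⟨d, -, ⟨hdK, hdv⟩, hd'⟩ := (hc w v).some.exists_boundary_dart {x | x ∉ K ∧ x ≠ v}
      ⟨hw, hwv⟩ fun h => h.2 rfl
    have : d.snd = v := by_contra fun h =>
      hd' ⟨fun hK => hdK (mem_K_of_adj hK d.adj.symm hdv), h⟩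
    exact ⟨d.fst, hdK, this ▸ d.adj.symm⟩
  obtain ⟨s, t, hs, ht, hst, hvs, hvt⟩ :
      ∃ s t, s ∈ K ∧ t ∈ K ∧ G.Adj s t ∧ G.Adj v s ∧ ¬ G.Adj v t := by
    obtain ⟨d, -, ⟨ht, hvt⟩, hs⟩ := ha.2.some.exists_boundary_dart
      {x | x.1 ∈ K ∧ ¬ G.Adj v x} ⟨⟨hvu.ne', .refl _⟩, hvu.2⟩ fun h => h.2 hva
    have hsK : d.snd.1 ∈ K := mem_K_of_adj ht d.adj d.snd.2
    exact ⟨d.snd, d.fst, hsK, ht, d.adj.symm, by_contra fun h => hs ⟨hsK, h⟩, hvt⟩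
  have not_adj_b {x} (hx : x ∈ K) : ¬ G.Adj b x := fun h => hb (mem_K_of_adj hx h.symm hvb.ne')
  exact hvt (iff_forall_adj.1 hG b v s t hvb.symm hvs hst (not_adj_b hs) (not_adj_b ht))

theorem subsingleton_of_connected [Finite V] (hG : IsCograph G) (hc : G.Connected)
    (hcc : Gᶜ.Connected) : Subsingleton V := by
  induction hn : Nat.card V using Nat.strong_induction_on generalizing V with
  | _ n ih =>
  by_contra! hV
  obtain ⟨v⟩ := hc.nonempty
  have compl_induce : (G.induce {v}ᶜ)ᶜ = Gᶜ.induce {v}ᶜ := by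
    ext a b
    simp [compl_adj, Subtype.ext_iff]
  have hlt : Nat.card ({v}ᶜ : Set V) < n := hn ▸ Finite.card_subtype_lt (x := v) (by simp)
  have hsub : Subsingleton ({v}ᶜ : Set V) := ih _ hlt (hG.of_embedding (Embedding.induce _))
    (hG.connected_induce_compl_singleton hc hcc v)
    (compl_induce ▸ hG.compl.connected_induce_compl_singleton hcc (by rwa [compl_compl]) v) rfl
  obtain ⟨a, hva⟩ := hc.preconnected.exists_adj_of_nontrivial v
  obtain ⟨b, hvb⟩ := hcc.preconnected.exists_adj_of_nontrivial v
  obtain rfl : a = b := congrArg Subtype.val (hsub.elim ⟨a, hva.ne'⟩ ⟨b, hvb.ne'⟩)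
  exact hvb.2 hva

end IsCograph

namespace GraphClass

variable {g a b : GraphClass}

/-- The classes of cographs. -/
def Cograph (g : GraphClass) : Prop := IsCograph g.graph

theorem cograph_cls {V : Type} [Finite V] {G : SimpleGraph V} : Cograph (cls G) ↔ IsCograph G :=
  IsCograph.congr (graphIso G)

theorem Cograph.compl (h : Cograph g) : Cograph gᶜ := cograph_cls.2 (IsCograph.compl h)

theorem cograph_compl : Cograph gᶜ ↔ Cograph g :=
  ⟨fun h => compl_compl g ▸ h.compl, Cograph.compl⟩

theorem cograph_add : Cograph (a + b) ↔ Cograph a ∧ Cograph b :=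
  cograph_cls.trans ⟨fun h => ⟨h.of_embedding Embedding.sumInl, h.of_embedding Embedding.sumInr⟩,
    fun h => IsCograph.sum h.1 h.2⟩

theorem cograph_point : Cograph point := cograph_cls.2 .of_subsingleton

theorem cograph_zero : Cograph 0 := cograph_cls.2 .of_subsingleton

theorem cograph_nsmul (k : ℕ) (h : Cograph g) : Cograph (k • g) := by
  induction k with
  | zero => simpa using cograph_zero
  | succ k ih => rw [succ_nsmul, cograph_add]; exact ⟨ih, h⟩

theorem Cograph.not_connected_compl (hg : Cograph g) (hc : Connected g) (hsize : 2 ≤ g.size) :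
    ¬ Connected gᶜ := fun hcc => by
  have := IsCograph.subsingleton_of_connected hg hc (connected_cls.1 hcc)
  exact absurd (Fin.subsingleton_iff_le_one.1 this) (by lia)

/-- The join: disjoint union with all edges between the two sides added. -/
noncomputable def join (a b : GraphClass) : GraphClass := (aᶜ + bᶜ)ᶜ

@[simp]
theorem size_join (a b : GraphClass) : size (join a b) = size a + size b := by
  simp [join]

theorem cograph_join : Cograph (join a b) ↔ Cograph a ∧ Cograph b := by
  simp only [join, cograph_compl, cograph_add]

theorem compl_eq_zero_iff : gᶜ = 0 ↔ g = 0 := by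
  simp only [← size_eq_zero_iff, size_compl]

theorem connected_join (ha : a ≠ 0) (hb : b ≠ 0) : Connected (join a b) := by
  have ha' : aᶜ ≠ 0 := mt compl_eq_zero_iff.1 ha
  have hb' : bᶜ ≠ 0 := mt compl_eq_zero_iff.1 hb
  refine (connected_or_connected_compl fun h => ?_).resolve_left (not_connected_add ha' hb')
  exact ha' (size_eq_zero_iff.1 (by have := congrArg size h; rw [size_add, size_zero] at this; lia))

theorem join_point_injective : Function.Injective fun g => join g point := fun _ _ h =>
  compl_injective (add_right_cancel (compl_injective h))

end GraphClass

/-! ### Characteristic and walk polynomials -/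

section Polynomials

open Matrix Polynomial

section MatrixLemmas

variable {R K m n : Type*} [CommRing R] [Field K] [Fintype n] [DecidableEq n] [Fintype m]
  [DecidableEq m]

theorem det_add_ones {A : Matrix n n K} (hA : A.det ≠ 0) :
    (A + of fun _ _ => 1).det = A.det * (1 + ∑ i, ∑ j, A⁻¹ i j) := by
  have hones : (of fun _ _ => 1 : Matrix n n K) =
      replicateCol Unit (fun _ => (1 : K)) * replicateRow Unit fun _ => (1 : K) := by
    ext i j
    simp [Matrix.mul_apply]
  rw [hones, det_add_replicateCol_mul_replicateRow (isUnit_iff_ne_zero.2 hA),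
    det_unique (n := Unit)]
  simp only [Matrix.add_apply, Matrix.one_apply_eq, Matrix.mul_apply, replicateRow_apply,
    replicateCol_apply, one_mul, mul_one]
  rw [Finset.sum_comm]

theorem det_fromBlocks_add_ones {A : Matrix m m K} {B : Matrix n n K} (hA : A.det ≠ 0)
    (hB : B.det ≠ 0) :
    (fromBlocks A 0 0 B + of fun _ _ => 1).det =
      (A + of fun _ _ => 1).det * B.det + A.det * (B + of fun _ _ => 1).det - A.det * B.det := by
  have hdet : (fromBlocks A 0 0 B).det = A.det * B.det := det_fromBlocks_zero₂₁ _ _ _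
  have hinv : (fromBlocks A 0 0 B)⁻¹ = fromBlocks A⁻¹ 0 0 B⁻¹ := by
    apply inv_eq_right_inv
    simp [fromBlocks_multiply, mul_nonsing_inv, isUnit_iff_ne_zero, hA, hB]
  rw [det_add_ones (hdet ▸ mul_ne_zero hA hB), det_add_ones hA, det_add_ones hB, hdet, hinv]
  simp only [Fintype.sum_sum_type, fromBlocks_apply₁₁, fromBlocks_apply₁₂, fromBlocks_apply₂₁,
    fromBlocks_apply₂₂, Matrix.zero_apply, Finset.sum_const_zero, add_zero, zero_add]
  ring

theorem map_charpoly (φ : R[X] →+* K) (A : Matrix n n R) :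
    φ A.charpoly = (φ.mapMatrix A.charmatrix).det :=
  φ.map_det _

theorem map_charpoly_sub_ones (φ : R[X] →+* K) (A : Matrix n n R) :
    φ (A - of fun _ _ => 1).charpoly = (φ.mapMatrix A.charmatrix + of fun _ _ => 1).det := by
  rw [map_charpoly]
  congr 1
  ext i j
  simp [charmatrix_apply, sub_add]

/-- The numerator `charpoly (A - J) - charpoly A = 1ᵀ adj(X - A) 1` of the walk generating
function of `A`, where `J` is the all-ones matrix. -/
noncomputable def walkPoly (A : Matrix n n R) : R[X] :=
  (A - of fun _ _ => 1).charpoly - A.charpoly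

theorem walkPoly_reindex (e : m ≃ n) (A : Matrix m m R) :
    walkPoly (reindex e e A) = walkPoly A := by
  rw [walkPoly, walkPoly, charpoly_reindex, ← charpoly_reindex e (A - _)]
  rfl

theorem walkPoly_fromBlocks [IsDomain R] (A : Matrix m m R) (B : Matrix n n R) :
    walkPoly (fromBlocks A 0 0 B) = walkPoly A * B.charpoly + A.charpoly * walkPoly B := by
  let φ := algebraMap R[X] (FractionRing R[X])
  have hφ : Function.Injective φ := IsFractionRing.injective _ _
  have hA : (φ.mapMatrix A.charmatrix).det ≠ 0 :=
    map_charpoly φ A ▸ (map_ne_zero_iff φ hφ).2 A.charpoly_monic.ne_zero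
  have hB : (φ.mapMatrix B.charmatrix).det ≠ 0 :=
    map_charpoly φ B ▸ (map_ne_zero_iff φ hφ).2 B.charpoly_monic.ne_zero
  have hblocks : φ.mapMatrix (fromBlocks A 0 0 B).charmatrix =
      fromBlocks (φ.mapMatrix A.charmatrix) 0 0 (φ.mapMatrix B.charmatrix) := by
    simp [charmatrix_fromBlocks, fromBlocks_map]
  apply hφ
  simp only [walkPoly, map_sub, map_add, map_mul, map_charpoly_sub_ones, charpoly_fromBlocks_zero₁₂]
  rw [hblocks, det_fromBlocks_add_ones hA hB, map_charpoly, map_charpoly]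
  ring

theorem comp_neg_one_sub_X_comp (p : R[X]) : (p.comp (-1 - X)).comp (-1 - X) = p := by
  simp [comp_assoc]

theorem charpoly_neg_sub_one (A : Matrix n n R) :
    (-A - 1).charpoly = (-1) ^ Fintype.card n * A.charpoly.comp (-1 - X) := by
  rw [charpoly, charpoly, ← coe_compRingHom_apply, RingHom.map_det, ← det_neg]
  congr 1
  ext1 i j
  rcases eq_or_ne i j with rfl | hij
  · simp only [charmatrix_apply_eq, Matrix.sub_apply, Matrix.neg_apply, one_apply_eq, map_sub,
      map_neg, map_one, RingHom.mapMatrix_apply, coe_compRingHom, map_apply, sub_comp, X_comp,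
      C_comp, neg_sub]
    ring
  · simp [hij]

theorem walkPoly_neg_sub_ones_sub_one (A : Matrix n n R) :
    walkPoly (-(A - of fun _ _ => 1) - 1) =
      -((-1) ^ Fintype.card n * (walkPoly A).comp (-1 - X)) := by
  have : -(A - of fun _ _ => 1) - 1 - (of fun _ _ => 1) = -A - 1 := by abel
  rw [walkPoly, this, charpoly_neg_sub_one, charpoly_neg_sub_one, walkPoly, sub_comp]
  ring

end MatrixLemmas

section AdjacencyMatrix

variable {V W : Type}

open scoped Classical in
/-- The adjacency matrix over `ℝ`, with the decidability instance of `adjCharPoly`. -/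
noncomputable def adjacency (G : SimpleGraph V) : Matrix V V ℝ := G.adjMatrix ℝ

theorem adjacency_compl [DecidableEq V] (G : SimpleGraph V) :
    adjacency Gᶜ = -(adjacency G - of fun _ _ => 1) - 1 := by
  ext i j
  rcases eq_or_ne i j with rfl | hij
  · simp [adjacency]
  · by_cases hadj : G.Adj i j <;> simp [adjacency, adjMatrix_apply, hij, hadj]

theorem adjacency_sum (G : SimpleGraph V) (H : SimpleGraph W) :
    adjacency (G ⊕g H) = fromBlocks (adjacency G) 0 0 (adjacency H) := by
  classical
  ext (i | i) (j | j)
  · exact if_congr sum_adj_inl rfl rfl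
  · exact if_neg (by simp)
  · exact if_neg (by simp)
  · exact if_congr sum_adj_inr rfl rfl

theorem reindex_adjacency {G : SimpleGraph V} {H : SimpleGraph W} (e : G ≃g H) :
    reindex e.toEquiv e.toEquiv (adjacency G) = adjacency H := by
  classical
  ext i j
  exact if_congr e.symm.map_adj_iff rfl rfl

end AdjacencyMatrix

namespace GraphClass

variable {V W : Type} [Fintype V] [DecidableEq V] [Fintype W] [DecidableEq W]

/-- The characteristic polynomial of the adjacency matrix. -/
noncomputable def chi (g : GraphClass) : ℝ[X] := (adjacency g.graph).charpoly

/-- The numerator of the generating function of the numbers of walks. -/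
noncomputable def walk (g : GraphClass) : ℝ[X] := walkPoly (adjacency g.graph)

theorem chi_cls (G : SimpleGraph V) : chi (cls G) = (adjacency G).charpoly := by
  rw [chi, ← reindex_adjacency (graphIso G), charpoly_reindex]

theorem walk_cls (G : SimpleGraph V) : walk (cls G) = walkPoly (adjacency G) := by
  rw [walk, ← reindex_adjacency (graphIso G), walkPoly_reindex]

theorem natDegree_chi (g : GraphClass) : (chi g).natDegree = g.size := by
  rw [chi, charpoly_natDegree_eq_dim, Fintype.card_fin]

@[simp]
theorem chi_point : chi point = X := by
  rw [point, chi_cls, charpoly, det_unique]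
  simp [adjacency]

@[simp]
theorem walk_point : walk point = 1 := by
  rw [point, walk_cls, walkPoly, charpoly, charpoly, det_unique, det_unique]
  simp [adjacency]

@[simp]
theorem chi_add (a b : GraphClass) : chi (a + b) = chi a * chi b :=
  (chi_cls _).trans (by rw [adjacency_sum, charpoly_fromBlocks_zero₁₂]; rfl)

@[simp]
theorem walk_add (a b : GraphClass) : walk (a + b) = walk a * chi b + chi a * walk b :=
  (walk_cls _).trans (by rw [adjacency_sum, walkPoly_fromBlocks]; rfl)

@[simp]
theorem chi_zero : chi 0 = 1 := (chi_cls _).trans det_isEmpty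

@[simp]
theorem walk_zero : walk 0 = 0 := by
  refine (walk_cls _).trans ?_
  rw [walkPoly, charpoly, charpoly, det_isEmpty, det_isEmpty, sub_self]

@[simp]
theorem chi_nsmul (k : ℕ) (g : GraphClass) : chi (k • g) = chi g ^ k := by
  induction k with
  | zero => rw [zero_nsmul, pow_zero, chi_zero]
  | succ k ih => rw [succ_nsmul, chi_add, ih, pow_succ]

@[simp]
theorem walk_nsmul (k : ℕ) (g : GraphClass) : walk (k • g) = k * chi g ^ (k - 1) * walk g := by
  induction k with
  | zero => simp
  | succ k ih =>
    rw [succ_nsmul, walk_add, ih, chi_nsmul, Nat.add_sub_cancel]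
    cases k with
    | zero => simp
    | succ k =>
      rw [Nat.add_sub_cancel]
      push_cast
      ring

theorem chi_compl (g : GraphClass) :
    chi gᶜ = (-1) ^ g.size * (chi g + walk g).comp (-1 - X) := by
  refine (chi_cls _).trans ?_
  rw [adjacency_compl, charpoly_neg_sub_one, Fintype.card_fin, chi, walk, walkPoly,
    add_sub_cancel]

theorem walk_compl (g : GraphClass) : walk gᶜ = -((-1) ^ g.size * (walk g).comp (-1 - X)) := by
  refine (walk_cls _).trans ?_
  rw [adjacency_compl, walkPoly_neg_sub_ones_sub_one, Fintype.card_fin, walk]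

@[simp]
theorem chi_join (a b : GraphClass) : chi (join a b) = chi a * chi b - walk a * walk b := by
  have sign_sq (n : ℕ) : ((-1 : ℝ[X]) ^ n) ^ 2 = 1 := by rw [pow_right_comm, neg_one_sq, one_pow]
  simp only [join, chi_compl, walk_compl, chi_add, walk_add, size_add, size_compl, mul_comp,
    add_comp, neg_comp, pow_comp, one_comp, comp_neg_one_sub_X_comp, pow_add]
  linear_combination
    ((-1) ^ b.size) ^ 2 * (chi a * chi b - walk a * walk b) * sign_sq a.size +
      (chi a * chi b - walk a * walk b) * sign_sq b.size

@[simp]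
theorem walk_join (a b : GraphClass) :
    walk (join a b) = walk a * chi b + chi a * walk b + 2 * walk a * walk b := by
  have sign_sq (n : ℕ) : ((-1 : ℝ[X]) ^ n) ^ 2 = 1 := by rw [pow_right_comm, neg_one_sq, one_pow]
  simp only [join, chi_compl, walk_compl, walk_add, size_add, size_compl, mul_comp, add_comp,
    neg_comp, pow_comp, one_comp, comp_neg_one_sub_X_comp, pow_add]
  linear_combination
    ((-1) ^ b.size) ^ 2 * (walk a * chi b + chi a * walk b + 2 * walk a * walk b) *
        sign_sq a.size +
      (walk a * chi b + chi a * walk b + 2 * walk a * walk b) * sign_sq b.size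

/-- Generalized cospectrality of classes. Complementation acts on the pair `(chi, walk)`, so this
is the same as equality of `chi` for the classes and for their complements. -/
def GenCospectral (g h : GraphClass) : Prop := chi g = chi h ∧ walk g = walk h

variable {g h : GraphClass}

theorem GenCospectral.size_eq (H : GenCospectral g h) : g.size = h.size := by
  rw [← natDegree_chi, H.1, natDegree_chi]

theorem GenCospectral.add_right (H : GenCospectral g h) (k : GraphClass) :
    GenCospectral (g + k) (h + k) := by
  simp only [GenCospectral, chi_add, walk_add, H.1, H.2, and_self]

theorem GenCospectral.compl (H : GenCospectral g h) : GenCospectral gᶜ hᶜ := by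
  simp only [GenCospectral, chi_compl, walk_compl, H.1, H.2, H.size_eq, and_self]

theorem genCospectral_iff_chi : GenCospectral g h ↔ chi g = chi h ∧ chi gᶜ = chi hᶜ := by
  refine ⟨fun H => ⟨H.1, H.compl.1⟩, fun ⟨hchi, hcompl⟩ => ⟨hchi, ?_⟩⟩
  have hsize : g.size = h.size := by rw [← natDegree_chi, hchi, natDegree_chi]
  rw [chi_compl, chi_compl, hsize, hchi] at hcompl
  have := mul_left_cancel₀ (pow_ne_zero _ (neg_ne_zero.2 one_ne_zero)) hcompl
  rw [← comp_neg_one_sub_X_comp (walk g), ← comp_neg_one_sub_X_comp (walk h)]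
  rw [add_comp, add_comp, add_right_inj] at this
  rw [this]

theorem genCospectral_cls {G : SimpleGraph V} {H : SimpleGraph W} :
    GenCospectral (cls G) (cls H) ↔ _root_.GenCospectral G H := by
  rw [genCospectral_iff_chi, compl_cls, compl_cls, chi_cls, chi_cls, chi_cls, chi_cls]
  rfl

end GraphClass

end Polynomials

/-! ### A pair of generalized cospectral cographs -/

namespace GraphClass

/-- `K₁ ∨ (K_{1,2,4} + K_{1,2}) + K_{2,2}`, where `+` is disjoint union and `∨` is the join. The
pair formed with `seedMate` was found by computer search. -/
noncomputable def seed : GraphClass :=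
  join point (join point (join (2 • point) (4 • point)) + join point (2 • point)) +
    join (2 • point) (2 • point)

/-- `2K₁ ∨ (K_{1,2,2} + K_{1,2}) + K_{1,4}`. -/
noncomputable def seedMate : GraphClass :=
  join (2 • point) (join point (join (2 • point) (2 • point)) + join point (2 • point)) +
    join point (4 • point)

@[simp]
theorem size_seed : size seed = 15 := by simp [seed]

theorem cograph_seed : Cograph seed := by
  simp only [seed, cograph_add, cograph_join, cograph_nsmul, cograph_point, and_self]

theorem cograph_seedMate : Cograph seedMate := by
  simp only [seedMate, cograph_add, cograph_join, cograph_nsmul, cograph_point, and_self]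

theorem genCospectral_seed_seedMate : GenCospectral seed seedMate := by
  constructor <;>
    simp only [seed, seedMate, chi_add, walk_add, chi_join, walk_join, chi_nsmul, walk_nsmul,
      chi_point, walk_point] <;>
    norm_num <;> ring

theorem seed_ne_seedMate : seed ≠ seedMate := by
  intro h
  have ne_zero {g : GraphClass} (hg : 0 < g.size) : g ≠ 0 := fun h => by simp [h] at hg
  have componentSizes_eq := congrArg (fun g => (components g).map size) h
  simp only [seed, seedMate, components_add] at componentSizes_eq
  rw [(connected_join _ _).components, (connected_join _ _).components,
    (connected_join _ _).components, (connected_join _ _).components] at componentSizes_eq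
  · have : ({11, 4} : Multiset ℕ) = {10, 5} := by simpa using componentSizes_eq
    revert this
    decide
  all_goals exact ne_zero (by simp)

end GraphClass

/-! ### The Euler recursion -/

section Counting

open Finset

/-- The index set of the Euler recursion for the coefficients of `∏ (1 - X ^ s) ^ (-t s)`: the pairs
`(s, k)` such that `n - k` is a positive multiple of `s`. -/
def eulerPairs (n : ℕ) : Finset (ℕ × ℕ) := {p ∈ Icc 1 n ×ˢ range n | p.1 ∣ n - p.2}

theorem mem_eulerPairs {n : ℕ} {p : ℕ × ℕ} :
    p ∈ eulerPairs n ↔ (1 ≤ p.1 ∧ p.1 ≤ n) ∧ p.2 < n ∧ p.1 ∣ n - p.2 := by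
  simp only [eulerPairs, mem_filter, mem_product, mem_Icc, mem_range, and_assoc]

theorem div_mul_add_of_mem_eulerPairs {n s k : ℕ} (h : (s, k) ∈ eulerPairs n) :
    (n - k) / s * s + k = n := by
  obtain ⟨-, hk, hdvd⟩ := mem_eulerPairs.1 h
  rw [Nat.div_mul_cancel hdvd, Nat.sub_add_cancel hk.le]

theorem card_filter_dvd_sub_div_le {n s q : ℕ} (hs : 0 < s) (hq : q * s ≤ n) :
    #{k ∈ range n | s ∣ n - k ∧ (n - k) / s ≤ q} = q := by
  have reflect : #{k ∈ range n | s ∣ n - k ∧ (n - k) / s ≤ q} =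
      #{m ∈ Ioc 0 (q * s) | s ∣ m} := by
    refine card_nbij' (n - ·) (n - ·) ?_ ?_ ?_ ?_ <;> intro k hk <;>
      simp only [coe_filter, mem_range, mem_Ioc, Set.mem_ofPred_eq] at hk ⊢
    · obtain ⟨hk, hdvd, hle⟩ := hk
      rw [Nat.div_le_iff_le_mul_of_dvd hs.ne' hdvd] at hle
      exact ⟨⟨by omega, hle⟩, hdvd⟩
    · obtain ⟨⟨hpos, hle⟩, hdvd⟩ := hk
      rw [Nat.sub_sub_self (hle.trans hq), Nat.div_le_iff_le_mul_of_dvd hs.ne' hdvd]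
      exact ⟨by omega, hdvd, hle⟩
    · omega
    · omega
  rw [reflect, Nat.Ioc_filter_dvd_card_eq_div, Nat.mul_div_cancel _ hs]

namespace GraphClass

variable {P : GraphClass → Prop} {n : ℕ} {g c : GraphClass}

open scoped Classical in
/-- The classes with property `P` of graphs with `n` vertices. -/
noncomputable def ofSize (P : GraphClass → Prop) (n : ℕ) : Finset GraphClass :=
  {g ∈ (finite_setOf_size_eq n).toFinset | P g}

/-- The classes with property `P` of connected graphs with `n` vertices. -/
noncomputable def connectedOfSize (P : GraphClass → Prop) : ℕ → Finset GraphClass :=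
  ofSize fun g => P g ∧ Connected g

theorem mem_ofSize : g ∈ ofSize P n ↔ g.size = n ∧ P g := by
  simp only [ofSize, mem_filter, Set.Finite.mem_toFinset, Set.mem_ofPred_eq]

theorem mem_connectedOfSize : g ∈ connectedOfSize P n ↔ g.size = n ∧ P g ∧ Connected g :=
  mem_ofSize

theorem Connected.one_le_size (h : Connected g) : 1 ≤ g.size :=
  Nat.one_le_iff_ne_zero.2 (mt size_eq_zero_iff.1 h.ne_zero)

open scoped Classical in
theorem le_count_components_iff (hc : Connected c) {i : ℕ} :
    i ≤ (components g).count c ↔ ∃ h, g = h + i • c := by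
  constructor
  · intro hi
    obtain ⟨M, hM⟩ := Multiset.le_iff_exists_add.1 (Multiset.le_count_iff_replicate_le.1 hi)
    refine ⟨M.sum, ?_⟩
    rw [← sum_components g, hM, Multiset.sum_add, Multiset.sum_replicate, add_comm]
  · rintro ⟨h, rfl⟩
    have : components (i • c) = Multiset.replicate i c := by
      rw [← Multiset.sum_replicate]
      exact components_multiset_sum fun d hd => Multiset.eq_of_mem_replicate hd ▸ hc
    rw [components_add, this, Multiset.count_add, Multiset.count_replicate_self]
    exact Nat.le_add_left _ _

open scoped Classical in
theorem count_components_mul_size_le (hc : Connected c) :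
    (components g).count c * c.size ≤ g.size := by
  obtain ⟨h, hg⟩ := (le_count_components_iff (g := g) hc).1 le_rfl
  conv_rhs => rw [hg]
  simp

open scoped Classical in
theorem size_eq_sum_components (g : GraphClass) :
    g.size = ∑ s ∈ Icc 1 g.size, ∑ c ∈ connectedOfSize (fun _ => True) s,
      s * (components g).count c := by
  calc g.size = ∑ c ∈ (components g).toFinset, c.size * (components g).count c := by
        conv_lhs => rw [← sum_components g, sum_multiset_count]
        exact (map_sum sizeHom _ _).trans
          (sum_congr rfl fun c _ => (size_nsmul _ c).trans (mul_comm _ _))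
    _ = ∑ s ∈ Icc 1 g.size, ∑ c ∈ (components g).toFinset with c.size = s,
          c.size * (components g).count c := by
        refine (sum_fiberwise_of_maps_to (fun c hc => ?_) _).symm
        rw [Multiset.mem_toFinset] at hc
        have hconn := connected_of_mem_components hc
        exact mem_Icc.2 ⟨hconn.one_le_size,
          (Nat.le_mul_of_pos_left _ (Multiset.count_pos.2 hc)).trans
            (count_components_mul_size_le hconn)⟩
    _ = _ := sum_congr rfl fun s _ => by
        refine sum_subset_zero_on_sdiff (fun c hc => ?_) (fun c hc => ?_) fun c hc => ?_
        · obtain ⟨hmem, hcs⟩ := mem_filter.1 hc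
          exact mem_connectedOfSize.2
            ⟨hcs, trivial, connected_of_mem_components (Multiset.mem_toFinset.1 hmem)⟩
        · simp only [mem_sdiff, mem_filter, Multiset.mem_toFinset, mem_connectedOfSize] at hc
          rw [Multiset.count_eq_zero.2 fun hmem => hc.2 ⟨hmem, hc.1.1⟩, mul_zero]
        · rw [(mem_filter.1 hc).2]

open scoped Classical in
theorem size_eq_sum_eulerPairs (g : GraphClass) :
    g.size = ∑ p ∈ eulerPairs g.size, p.1 *
      #{c ∈ connectedOfSize (fun _ => True) p.1 |
        (g.size - p.2) / p.1 ≤ (components g).count c} := by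
  rw [eulerPairs, sum_filter, sum_product]
  conv_lhs => rw [size_eq_sum_components]
  refine sum_congr rfl fun s _ => ?_
  simp only [card_filter, mul_sum]
  rw [← sum_filter, sum_comm]
  refine sum_congr rfl fun c hc => ?_
  obtain ⟨rfl, -, hconn⟩ := mem_connectedOfSize.1 hc
  rw [← mul_sum, ← card_filter, filter_filter,
    card_filter_dvd_sub_div_le hconn.one_le_size (count_components_mul_size_le hconn)]

open scoped Classical in
/-- The pairs `(g, c)` of a class of size `n` with property `P` and a connected class of size `s`
which occurs at least `(n - k) / s` times among the components of `g`. -/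
noncomputable def repeatedComponents (P : GraphClass → Prop) (n s k : ℕ) :
    Finset (GraphClass × GraphClass) :=
  {x ∈ ofSize P n ×ˢ connectedOfSize (fun _ => True) s |
    (n - k) / s ≤ (components x.1).count x.2}

theorem mem_repeatedComponents {s k : ℕ} : (g, c) ∈ repeatedComponents P n s k ↔
    (g.size = n ∧ P g) ∧ (c.size = s ∧ Connected c) ∧ ∃ h, g = h + ((n - k) / s) • c := by
  simp only [repeatedComponents, mem_filter, mem_product, mem_ofSize, mem_connectedOfSize, true_and,
    and_assoc]
  refine and_congr_right fun _ => and_congr_right fun _ => and_congr_right fun _ =>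
    and_congr_right fun hc => le_count_components_iff hc

theorem mul_card_ofSize (P : GraphClass → Prop) (n : ℕ) :
    n * #(ofSize P n) = ∑ p ∈ eulerPairs n, p.1 * #(repeatedComponents P n p.1 p.2) := by
  classical
  calc n * #(ofSize P n) = ∑ g ∈ ofSize P n, ∑ p ∈ eulerPairs n, p.1 *
        #{c ∈ connectedOfSize (fun _ => True) p.1 | (n - p.2) / p.1 ≤ (components g).count c} := by
        rw [mul_comm, ← smul_eq_mul, ← sum_const]
        refine sum_congr rfl fun g hg => ?_
        rw [← (mem_ofSize.1 hg).1]
        exact size_eq_sum_eulerPairs g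
    _ = _ := by
        rw [sum_comm]
        refine sum_congr rfl fun p _ => ?_
        simp only [repeatedComponents, ← mul_sum, card_filter, sum_product]

/-- Reassembles a class from a connected class `c` and what is left after removing `(n - k) / s`
copies of it. -/
noncomputable def attachCopies (n s k : ℕ) (x : GraphClass × GraphClass) :
    GraphClass × GraphClass :=
  (x.2 + ((n - k) / s) • x.1, x.1)

theorem attachCopies_injective (n s k : ℕ) : Function.Injective (attachCopies n s k) := by
  rintro ⟨c, h⟩ ⟨c', h'⟩ heq
  obtain ⟨hsum, rfl⟩ := Prod.mk.inj heq
  exact Prod.ext rfl (add_right_cancel hsum)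

theorem repeatedComponents_subset_image [DecidableEq GraphClass] {s k : ℕ}
    (hP : ∀ a b, P (a + b) → P a ∧ P b) (hp : (s, k) ∈ eulerPairs n) :
    repeatedComponents P n s k ⊆
      (connectedOfSize P s ×ˢ ofSize P k).image (attachCopies n s k) := by
  rintro ⟨g, c⟩ hx
  obtain ⟨⟨hsize, hg⟩, ⟨rfl, hc⟩, h, rfl⟩ := mem_repeatedComponents.1 hx
  have hsum := div_mul_add_of_mem_eulerPairs hp
  have hpos : (n - k) / c.size ≠ 0 := fun h0 => by
    rw [h0, zero_mul, zero_add] at hsum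
    exact (mem_eulerPairs.1 hp).2.1.ne hsum
  refine mem_image.2 ⟨(c, h), mem_product.2 ⟨mem_connectedOfSize.2 ⟨rfl, ?_, hc⟩,
    mem_ofSize.2 ⟨?_, (hP _ _ hg).1⟩⟩, rfl⟩
  · obtain ⟨j, hj⟩ := Nat.exists_eq_succ_of_ne_zero hpos
    rw [hj, succ_nsmul] at hg
    exact (hP _ _ (hP _ _ hg).2).2
  · rw [size_add, size_nsmul] at hsize
    dsimp only
    omega

theorem image_subset_repeatedComponents [DecidableEq GraphClass] {s k : ℕ}
    (hP : ∀ a b, P a → P b → P (a + b)) (hp : (s, k) ∈ eulerPairs n) :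
    (connectedOfSize P s ×ˢ ofSize P k).image (attachCopies n s k) ⊆
      repeatedComponents P n s k := by
  refine image_subset_iff.2 fun ⟨c, h⟩ hx => ?_
  obtain ⟨hc, hh⟩ := mem_product.1 hx
  obtain ⟨hcs, hPc, hconn⟩ := mem_connectedOfSize.1 hc
  obtain ⟨hhs, hPh⟩ := mem_ofSize.1 hh
  have hadd (i : ℕ) : P (h + i • c) := by
    induction i with
    | zero => rwa [zero_nsmul, add_zero]
    | succ i ih => rw [succ_nsmul, ← add_assoc]; exact hP _ _ ih hPc
  refine mem_repeatedComponents.2 ⟨⟨?_, hadd _⟩, ⟨hcs, hconn⟩, h, rfl⟩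
  have := div_mul_add_of_mem_eulerPairs hp
  rw [size_add, size_nsmul]
  simp only at hcs hhs
  rw [hcs, hhs, add_comm, this]

theorem euler_le (hP : ∀ a b, P (a + b) → P a ∧ P b) (n : ℕ) :
    n * #(ofSize P n) ≤
      ∑ p ∈ eulerPairs n, p.1 * (#(connectedOfSize P p.1) * #(ofSize P p.2)) := by
  classical
  rw [mul_card_ofSize]
  refine sum_le_sum fun p hp => Nat.mul_le_mul_left _ ?_
  rw [← card_product]
  exact (card_le_card (repeatedComponents_subset_image hP hp)).trans card_image_le

theorem euler_eq (hP : ∀ a b, P (a + b) ↔ P a ∧ P b) (n : ℕ) :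
    n * #(ofSize P n) =
      ∑ p ∈ eulerPairs n, p.1 * (#(connectedOfSize P p.1) * #(ofSize P p.2)) := by
  classical
  rw [mul_card_ofSize]
  refine sum_congr rfl fun p hp => ?_
  have : repeatedComponents P n p.1 p.2 = _ :=
    (repeatedComponents_subset_image (fun a b => (hP a b).1) hp).antisymm
      (image_subset_repeatedComponents (fun a b ha hb => (hP a b).2 ⟨ha, hb⟩) hp)
  rw [this, card_image_of_injective _ (attachCopies_injective _ _ _), card_product]

end GraphClass

/-! ### Averaging along the Euler recursion -/

open Filter

/-- The pairs of `eulerPairs n` other than `(n, 0)`. -/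
def properEulerPairs (n : ℕ) : Finset (ℕ × ℕ) := (eulerPairs n).erase (n, 0)

theorem mem_properEulerPairs {n : ℕ} {p : ℕ × ℕ} :
    p ∈ properEulerPairs n ↔ (1 ≤ p.1 ∧ p.1 < n) ∧ p.2 < n ∧ p.1 ∣ n - p.2 := by
  rw [properEulerPairs, mem_erase, mem_eulerPairs, ne_eq, Prod.ext_iff]
  constructor
  · rintro ⟨hne, ⟨hs, hsn⟩, hk, hdvd⟩
    have := Nat.le_of_dvd (Nat.sub_pos_of_lt hk) hdvd
    dsimp only at hne
    exact ⟨⟨hs, by omega⟩, hk, hdvd⟩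
  · rintro ⟨⟨hs, hsn⟩, hk, hdvd⟩
    exact ⟨fun h => hsn.ne h.1, ⟨hs, hsn.le⟩, hk, hdvd⟩

theorem le_or_le_of_not_small {r : ℕ → ℝ} {R : ℝ} {n K : ℕ} {p : ℕ × ℕ}
    (hp : p ∈ properEulerPairs n)
    (hK : ∀ s, K ≤ s → s < n → r s ≤ R) (hsmall : ¬ (p.1 < K ∧ p.2 < K)) :
    r p.1 ≤ R ∨ r p.2 ≤ R := by
  obtain ⟨⟨-, hs⟩, hk, -⟩ := mem_properEulerPairs.1 hp
  rw [not_and_or, not_lt, not_lt] at hsmall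
  exact hsmall.imp (hK _ · hs) (hK _ · hk)

/-- The summand `s * t s * c k` of the Euler recursion. -/
def eulerWeight (t c : ℕ → ℕ) (p : ℕ × ℕ) : ℕ := p.1 * (t p.1 * c p.2)

theorem sum_eulerPairs {n : ℕ} (hn : 1 ≤ n) (t c : ℕ → ℕ) :
    ∑ p ∈ eulerPairs n, eulerWeight t c p =
      n * (t n * c 0) + ∑ p ∈ properEulerPairs n, eulerWeight t c p := by
  have hmem : (n, 0) ∈ eulerPairs n := mem_eulerPairs.2 ⟨⟨hn, le_rfl⟩, hn, by simp⟩
  exact (add_sum_erase _ (eulerWeight t c) hmem).symm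

/-- The relations between the numbers `c n` of all cographs and `t n` of connected cographs on `n`
vertices that are used in the averaging argument. -/
structure EulerRecursion (t c : ℕ → ℕ) : Prop where
  c_zero : c 0 = 1
  c_one : c 1 = 1
  t_one : t 1 = 1
  c_eq_two_mul {n : ℕ} (hn : 2 ≤ n) : c n = 2 * t n
  c_le_t_succ {n : ℕ} (hn : 1 ≤ n) : c n ≤ t (n + 1)
  mul_c (n : ℕ) : n * c n = ∑ p ∈ eulerPairs n, eulerWeight t c p

namespace EulerRecursion

variable {t c : ℕ → ℕ}

/-- The total weight of the pairs with both entries below `K`. -/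
def smallWeight (t c : ℕ → ℕ) (K : ℕ) : ℕ := ∑ p ∈ range K ×ˢ range K, eulerWeight t c p

theorem sum_eulerWeight_le_smallWeight (K n : ℕ) :
    ∑ p ∈ properEulerPairs n with p.1 < K ∧ p.2 < K, eulerWeight t c p ≤ smallWeight t c K :=
  sum_le_sum_of_subset fun p hp => by simpa using (mem_filter.1 hp).2

variable (h : EulerRecursion t c)
include h

theorem sum_properEulerPairs {n : ℕ} (hn : 2 ≤ n) :
    ∑ p ∈ properEulerPairs n, eulerWeight t c p = n * t n := by
  have := h.mul_c n
  rw [sum_eulerPairs (by omega), h.c_zero, h.c_eq_two_mul hn] at this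
  linarith

theorem two_mul_t_le {n : ℕ} (hn : 2 ≤ n) : 2 * t n ≤ t (n + 1) :=
  h.c_eq_two_mul hn ▸ h.c_le_t_succ (by omega)

theorem two_pow_le_t (n : ℕ) : 2 ^ n ≤ t (n + 2) := by
  induction n with
  | zero => simpa [h.c_one] using h.c_le_t_succ le_rfl
  | succ n ih =>
    rw [pow_succ']
    exact (Nat.mul_le_mul_left 2 ih).trans (h.two_mul_t_le (Nat.le_add_left 2 n))

theorem t_pos {n : ℕ} (hn : 1 ≤ n) : 1 ≤ t n := by
  obtain rfl | ⟨k, rfl⟩ : n = 1 ∨ ∃ k, n = k + 2 := by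
    rcases n with _ | _ | k <;> simp_all
  · exact h.t_one.ge
  · exact Nat.one_le_two_pow.trans (h.two_pow_le_t k)

theorem t_mono {k n : ℕ} (hk : 1 ≤ k) (hkn : k ≤ n) : t k ≤ t n := by
  induction n, hkn using Nat.le_induction with
  | base => exact le_rfl
  | succ n hkn ih =>
    refine ih.trans ?_
    rcases (hk.trans hkn).eq_or_lt with rfl | hn
    · exact h.t_one.trans_le (h.t_pos one_le_two)
    · have := h.two_mul_t_le hn
      omega

theorem sum_t_le {n : ℕ} (hn : 1 ≤ n) : ∑ s ∈ Icc 1 n, t s ≤ 2 * t n := by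
  induction n, hn using Nat.le_induction with
  | base => simp [h.t_one]
  | succ n hn ih =>
    rw [sum_Icc_succ_top (by omega)]
    rcases hn.eq_or_lt with rfl | hn
    · have := h.t_pos (Nat.le_add_left 1 1)
      rw [Icc_self, sum_singleton, h.t_one]
      omega
    · have := h.two_mul_t_le hn
      omega

theorem c_pos (n : ℕ) : 1 ≤ c n := by
  rcases n with _ | _ | k
  · exact h.c_zero.ge
  · exact h.c_one.ge
  · rw [h.c_eq_two_mul (Nat.le_add_left 2 k)]
    exact Nat.mul_pos two_pos (h.t_pos (Nat.le_add_left 1 (k + 1)))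

theorem c_le_two_mul_t {k n : ℕ} (hk : k ≤ n) (hn : 1 ≤ n) : c k ≤ 2 * t n := by
  have ht := h.t_pos hn
  rcases k with _ | _ | k
  · rw [h.c_zero]; omega
  · rw [h.c_one]; omega
  · rw [h.c_eq_two_mul (Nat.le_add_left 2 k)]
    exact Nat.mul_le_mul_left 2 (h.t_mono (Nat.le_add_left 1 (k + 1)) hk)

theorem eventually_mul_le_t (C : ℕ) : ∀ᶠ n : ℕ in atTop, (C * n : ℝ) ≤ t n := by
  have littleO := isLittleO_coe_const_pow_of_one_lt (R := ℝ) (one_lt_two (α := ℝ))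
  have hC : (0 : ℝ) < 1 / (4 * (C + 1)) := by positivity
  filter_upwards [littleO.def hC, eventually_ge_atTop 2] with n hn hn2
  obtain ⟨k, rfl⟩ := Nat.exists_eq_add_of_le' hn2
  have hpow : (2 : ℝ) ^ k ≤ t (k + 2) := mod_cast h.two_pow_le_t k
  rw [Real.norm_natCast, norm_pow, Real.norm_ofNat, pow_add, div_mul_eq_mul_div,
    le_div_iff₀ (by positivity)] at hn
  have : (0 : ℝ) ≤ (k + 2 : ℕ) := Nat.cast_nonneg _
  linarith

theorem eventually_smallWeight_div_le (K : ℕ) :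
    ∀ᶠ n : ℕ in atTop, (smallWeight t c K / (n * t n) : ℝ) ≤ 1 / n ^ 2 := by
  filter_upwards [h.eventually_mul_le_t (smallWeight t c K), eventually_ge_atTop 1] with n hn hn1
  have ht : (0 : ℝ) < t n := mod_cast h.t_pos hn1
  have : (0 : ℝ) < n := mod_cast hn1
  rw [div_le_div_iff₀ (by positivity) (by positivity)]
  nlinarith

end EulerRecursion

/-- Ratios `r n ∈ [0, 1]` bounded by the average of `r s * r k` over the proper Euler pairs `(s, k)`
of `n`, weighted by `eulerWeight t c`. -/
structure EulerSubaveraging (t c : ℕ → ℕ) (r : ℕ → ℝ) : Prop extends EulerRecursion t c where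
  nonneg (n : ℕ) : 0 ≤ r n
  le_one (n : ℕ) : r n ≤ 1
  le_sum {n : ℕ} (hn : 2 ≤ n) :
    n * t n * r n ≤ ∑ p ∈ properEulerPairs n, eulerWeight t c p * (r p.1 * r p.2)

namespace EulerSubaveraging

open EulerRecursion

variable {t c : ℕ → ℕ} {r : ℕ → ℝ} (h : EulerSubaveraging t c r) {n m K : ℕ} {R γ θ : ℝ}
include h

theorem mul_le_of_le_right {a b : ℕ} (hb : r b ≤ R) : r a * r b ≤ R :=
  (mul_le_of_le_one_left (h.nonneg b) (h.le_one a)).trans hb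

theorem mul_le_of_le_left {a b : ℕ} (ha : r a ≤ R) : r a * r b ≤ R :=
  mul_comm (r b) (r a) ▸ h.mul_le_of_le_right ha

theorem mul_le_ite_add_ite (hR0 : 0 ≤ R) (hγ0 : 0 ≤ γ)
    (hK : ∀ s, K ≤ s → s < n → r s ≤ R) {G : Finset (ℕ × ℕ)}
    (hG : ∀ p ∈ G, r p.1 ≤ R ∨ r p.2 ≤ R → r p.1 * r p.2 ≤ R * (1 - γ))
    {p : ℕ × ℕ} (hp : p ∈ properEulerPairs n) :
    r p.1 * r p.2 ≤ R - (if p ∈ G then R * γ else 0) +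
      (if p.1 < K ∧ p.2 < K then 1 - R * (1 - γ) else 0) := by
  have hone : r p.1 * r p.2 ≤ 1 := h.mul_le_of_le_right (h.le_one _)
  have hRγ : 0 ≤ R * γ := mul_nonneg hR0 hγ0
  split_ifs with hpG hsmall hsmall
  · linarith
  · linarith [hG p hpG (le_or_le_of_not_small hp hK hsmall)]
  · linarith
  · linarith [(le_or_le_of_not_small hp hK hsmall).elim h.mul_le_of_le_left h.mul_le_of_le_right]

/-- Here `θ` is the relative weight of the pairs in `G`, which gain a factor `1 - γ` over the bound
`R`; pairs with both entries below `K` have no bound and cause the last term. -/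
theorem le_of_gain (hn : 2 ≤ n) (hR0 : 0 ≤ R) (hR1 : R ≤ 1) (hγ0 : 0 ≤ γ)
    (hK : ∀ s, K ≤ s → s < n → r s ≤ R) {G : Finset (ℕ × ℕ)} (hGn : G ⊆ properEulerPairs n)
    (hG : ∀ p ∈ G, r p.1 ≤ R ∨ r p.2 ≤ R → r p.1 * r p.2 ≤ R * (1 - γ))
    (hθ : θ * (n * t n) ≤ ∑ p ∈ G, (eulerWeight t c p : ℝ)) :
    r n ≤ R * (1 - γ * θ) + (1 - R * (1 - γ)) * (smallWeight t c K / (n * t n)) := by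
  have hpos : (0 : ℝ) < n * t n := by
    have := h.t_pos (one_le_two.trans hn)
    positivity
  have htotal : ∑ p ∈ properEulerPairs n, (eulerWeight t c p : ℝ) = n * t n :=
    mod_cast h.sum_properEulerPairs hn
  have hRγ : 0 ≤ 1 - R * (1 - γ) := by nlinarith
  have small : ∑ p ∈ properEulerPairs n with p.1 < K ∧ p.2 < K, (eulerWeight t c p : ℝ) ≤
      smallWeight t c K := mod_cast sum_eulerWeight_le_smallWeight K n
  rw [mul_div_assoc', ← sub_le_iff_le_add', le_div_iff₀ hpos]
  have := calc n * t n * r n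
    _ ≤ ∑ p ∈ properEulerPairs n, eulerWeight t c p * (r p.1 * r p.2) := h.le_sum hn
    _ ≤ ∑ p ∈ properEulerPairs n, eulerWeight t c p * (R - (if p ∈ G then R * γ else 0) +
          (if p.1 < K ∧ p.2 < K then 1 - R * (1 - γ) else 0)) :=
        sum_le_sum fun p hp => mul_le_mul_of_nonneg_left
          (h.mul_le_ite_add_ite hR0 hγ0 hK hG hp) (Nat.cast_nonneg _)
    _ = n * t n * R - (∑ p ∈ G, (eulerWeight t c p : ℝ)) * (R * γ) +
          (∑ p ∈ properEulerPairs n with p.1 < K ∧ p.2 < K, (eulerWeight t c p : ℝ)) *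
            (1 - R * (1 - γ)) := by
        simp only [mul_add, mul_sub, sum_add_distrib, sum_sub_distrib, mul_ite, mul_zero,
          ← sum_filter, ← sum_mul, htotal, filter_mem_eq_inter, inter_eq_right.2 hGn]
    _ ≤ n * t n * R - θ * (n * t n) * (R * γ) + smallWeight t c K * (1 - R * (1 - γ)) := by
        gcongr
  linarith

theorem eventually_le_of_gain (hR0 : 0 < R) (hR1 : R ≤ 1) (hγ0 : 0 < γ) (hγ1 : γ ≤ 1)
    (hθ0 : 0 < θ) (hR : ∀ᶠ n in atTop, r n ≤ R) :
    ∀ᶠ n in atTop, ∀ G ⊆ properEulerPairs n,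
      (∀ p ∈ G, r p.1 ≤ R ∨ r p.2 ≤ R → r p.1 * r p.2 ≤ R * (1 - γ)) →
      θ * (n * t n) ≤ ∑ p ∈ G, (eulerWeight t c p : ℝ) → r n ≤ R * (1 - γ * θ / 2) := by
  obtain ⟨K, hK⟩ := eventually_atTop.1 hR
  have hε : 0 < R * (γ * θ / 2) := by positivity
  have vanishing : Tendsto (fun n : ℕ => 1 / (n : ℝ) ^ 2) atTop (nhds 0) :=
    tendsto_const_div_pow 1 2 two_ne_zero
  filter_upwards [eventually_ge_atTop 2, h.eventually_smallWeight_div_le K,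
    vanishing.eventually_le_const hε] with n hn hsmall hn2 G hGn hG hθ
  have gain := h.le_of_gain hn hR0.le hR1 hγ0.le (fun s hs _ => hK s hs) hGn hG hθ
  have hRγ : 0 ≤ R * (1 - γ) := mul_nonneg hR0.le (sub_nonneg.2 hγ1)
  have : (1 - R * (1 - γ)) * (smallWeight t c K / (n * t n) : ℝ) ≤ R * (γ * θ / 2) :=
    (mul_le_of_le_one_left (by positivity) (by linarith)).trans (hsmall.trans hn2)
  linarith

end EulerSubaveraging

namespace EulerSubaveraging

open EulerRecursion

variable {t c : ℕ → ℕ} {r : ℕ → ℝ} (h : EulerSubaveraging t c r) {n m : ℕ} {β : ℝ}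
include h

theorem exists_gap_of_le (hr : ∀ n, m ≤ n → r n < 1) (N : ℕ) :
    ∃ β, 0 < β ∧ β ≤ 1 ∧ ∀ n, m ≤ n → n ≤ N → r n ≤ 1 - β := by
  rcases lt_or_ge N m with hN | hN
  · exact ⟨1, one_pos, le_rfl, fun n hn hnN => absurd (hn.trans hnN) hN.not_ge⟩
  obtain ⟨b, hb, hmax⟩ := (Icc m N).exists_max_image r (nonempty_Icc.2 hN)
  refine ⟨1 - r b, sub_pos.2 (hr b (mem_Icc.1 hb).1), sub_le_self _ (h.nonneg b), ?_⟩
  intro n hn hnN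
  rw [sub_sub_cancel]
  exact hmax n (mem_Icc.2 ⟨hn, hnN⟩)

/-- The bound `1 - β (1 + 1 / n)` propagates because averaging loses only a factor `1 - 1 / n ^ 2`
and `(1 + 1 / (n - 1)) * (1 - 1 / n ^ 2) = 1 + 1 / n`. -/
theorem le_one_sub_mul_of_forall_lt (hm : 2 ≤ m) (hn : m < n) (hβ0 : 0 ≤ β) (hβ1 : β ≤ 1 / 2)
    (hsmall : (smallWeight t c m / (n * t n) : ℝ) ≤ 1 / n ^ 2)
    (hlt : ∀ s, m ≤ s → s < n → r s ≤ 1 - β * (1 + 1 / s)) : r n ≤ 1 - β * (1 + 1 / n) := by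
  have hn1 : (0 : ℝ) < n - 1 := by
    rw [sub_pos]
    norm_cast
    omega
  have hinv : 1 / (n - 1 : ℝ) ≤ 1 := by
    rw [div_le_one hn1, le_sub_iff_add_le]
    norm_cast
    omega
  have hinv0 : 0 ≤ 1 / (n - 1 : ℝ) := (one_div_pos.2 hn1).le
  have bound : ∀ s, m ≤ s → s < n → r s ≤ 1 - β * (1 + 1 / (n - 1)) := fun s hs hsn => by
    refine (hlt s hs hsn).trans ?_
    have : (s : ℝ) ≤ n - 1 := by
      rw [le_sub_iff_add_le]
      exact_mod_cast hsn
    have : (0 : ℝ) < s := by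
      norm_cast
      omega
    gcongr
  have average := h.le_of_gain (γ := 0) (θ := 0) (G := ∅) (hm.trans hn.le) (by nlinarith)
    (by nlinarith) le_rfl bound (empty_subset _) (by simp) (by simp)
  have : 0 ≤ β * (1 + 1 / (n - 1 : ℝ)) := by positivity
  calc r n
    _ ≤ 1 - β * (1 + 1 / (n - 1)) + β * (1 + 1 / (n - 1)) * (smallWeight t c m / (n * t n)) := by
        linarith
    _ ≤ 1 - β * (1 + 1 / (n - 1)) + β * (1 + 1 / (n - 1)) * (1 / n ^ 2) := by gcongr
    _ = 1 - β * (1 + 1 / n) := by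
        have : (n : ℝ) ≠ 0 := by linarith
        field_simp
        ring

theorem exists_gap (hm : 2 ≤ m) (hr : ∀ n, m ≤ n → r n < 1) :
    ∃ β, 0 < β ∧ β ≤ 1 ∧ ∀ n, m ≤ n → r n ≤ 1 - β := by
  obtain ⟨N, hN⟩ := eventually_atTop.1 (h.eventually_smallWeight_div_le m)
  obtain ⟨β, hβ0, hβ1, hβ⟩ := h.exists_gap_of_le hr (max m N)
  have decreasing (n : ℕ) : m ≤ n → r n ≤ 1 - β / 2 * (1 + 1 / n) := by
    induction n using Nat.strong_induction_on with
    | _ n ih =>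
      intro hn
      rcases le_or_gt n (max m N) with hnN | hnN
      · have : (1 / n : ℝ) ≤ 1 := by
          rw [div_le_one (by norm_cast; omega)]
          norm_cast
          omega
        nlinarith [hβ n hn hnN]
      · obtain ⟨hmn, hNn⟩ := max_lt_iff.1 hnN
        exact h.le_one_sub_mul_of_forall_lt hm hmn (by linarith) (by linarith) (hN n hNn.le)
          fun s hs hsn => ih s hsn hs
  refine ⟨β / 2, half_pos hβ0, by linarith, fun n hn => (decreasing n hn).trans ?_⟩
  have : (0 : ℝ) ≤ 1 / n := by positivity
  nlinarith

end EulerSubaveraging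

namespace EulerRecursion

/-- A bound, relative to `n * t (n - 1)`, for the weight of the proper Euler pairs of `n` with an
entry below `m`. -/
def boundaryWeight (t c : ℕ → ℕ) (m : ℕ) : ℕ :=
  2 * (∑ s ∈ range m, s * t s + ∑ k ∈ range m, c k)

variable {t c : ℕ → ℕ} (h : EulerRecursion t c) {n : ℕ}
include h

theorem sum_left_lt_le (hn : 2 ≤ n) (m : ℕ) :
    ∑ p ∈ range m ×ˢ range n, eulerWeight t c p ≤
      2 * (∑ s ∈ range m, s * t s) * (n * t (n - 1)) := by
  calc _ = ∑ s ∈ range m, ∑ k ∈ range n, s * t s * c k := by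
        simp only [sum_product, eulerWeight, mul_assoc]
    _ ≤ ∑ s ∈ range m, ∑ _k ∈ range n, s * t s * (2 * t (n - 1)) := by
        gcongr with s _ k hk
        exact h.c_le_two_mul_t (by have := mem_range.1 hk; omega) (by omega)
    _ = _ := by
        simp only [sum_const, card_range, smul_eq_mul, mul_sum, sum_mul]
        exact sum_congr rfl fun s _ => by ring

theorem sum_right_lt_le (hn : 2 ≤ n) (m : ℕ) :
    ∑ p ∈ Icc 1 (n - 1) ×ˢ range m, eulerWeight t c p ≤
      2 * (∑ k ∈ range m, c k) * (n * t (n - 1)) := by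
  calc _ = ∑ s ∈ Icc 1 (n - 1), ∑ k ∈ range m, s * (t s * c k) := sum_product ..
    _ ≤ ∑ s ∈ Icc 1 (n - 1), ∑ k ∈ range m, n * (t s * c k) := by
        gcongr with s hs
        have := mem_Icc.1 hs
        omega
    _ = n * ((∑ s ∈ Icc 1 (n - 1), t s) * ∑ k ∈ range m, c k) := by
        rw [sum_mul_sum, mul_sum]
        simp only [mul_sum]
    _ ≤ n * (2 * t (n - 1) * ∑ k ∈ range m, c k) := by
        gcongr
        exact h.sum_t_le (by omega)
    _ = _ := by ring

theorem sum_boundary_le (hn : 2 ≤ n) (m : ℕ) :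
    ∑ p ∈ properEulerPairs n with ¬ (m ≤ p.1 ∧ m ≤ p.2), eulerWeight t c p ≤
      boundaryWeight t c m * (n * t (n - 1)) := by
  calc _ ≤ ∑ p ∈ (range m ×ˢ range n) ∪ (Icc 1 (n - 1) ×ˢ range m), eulerWeight t c p := by
        refine sum_le_sum_of_subset fun p hp => ?_
        obtain ⟨hp, hpm⟩ := mem_filter.1 hp
        obtain ⟨hs, hk, -⟩ := mem_properEulerPairs.1 hp
        simp only [mem_union, mem_product, mem_range, mem_Icc]
        omega
    _ ≤ _ := le_self_add.trans (sum_union_inter).le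
    _ ≤ _ := add_le_add (h.sum_left_lt_le hn m) (h.sum_right_lt_le hn m)
    _ = _ := by rw [boundaryWeight]; ring

theorem le_sum_interior_add (hn : 2 ≤ n) (m : ℕ) :
    n * t n ≤ ∑ p ∈ properEulerPairs n with m ≤ p.1 ∧ m ≤ p.2, eulerWeight t c p +
      boundaryWeight t c m * (n * t (n - 1)) := by
  rw [← h.sum_properEulerPairs hn, ← sum_filter_add_sum_filter_not _ fun p => m ≤ p.1 ∧ m ≤ p.2]
  exact Nat.add_le_add_left (h.sum_boundary_le hn m) _

end EulerRecursion

theorem pow_mul_le_or_exists_lt (a : ℕ → ℝ) {η : ℝ} (hη : 0 ≤ η) (m : ℕ) :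
    η ^ m * a 0 ≤ a m ∨ ∃ j < m, η ^ j * a 0 ≤ a j ∧ a (j + 1) < η * a j := by
  induction m with
  | zero => exact .inl (by simp)
  | succ m ih =>
    rcases ih with hm | ⟨j, hj, hlt⟩
    · rcases lt_or_ge (a (m + 1)) (η * a m) with hlt | hge
      · exact .inr ⟨m, m.lt_succ_self, hm, hlt⟩
      · refine .inl (le_trans ?_ hge)
        rw [pow_succ', mul_assoc]
        exact mul_le_mul_of_nonneg_left hm hη
    · exact .inr ⟨j, hj.trans m.lt_succ_self, hlt⟩

namespace EulerSubaveraging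

open EulerRecursion

variable {t c : ℕ → ℕ} {r : ℕ → ℝ} (h : EulerSubaveraging t c r) {n m j : ℕ} {R β ε η : ℝ}
include h

/-- Where `t` grows fast, most of the weight is on pairs with both entries at least `m`. -/
theorem exists_gain_of_steep (hβ0 : 0 < β) (hβ1 : β ≤ 1) (hβ : ∀ n, m ≤ n → r n ≤ 1 - β) :
    ∃ η : ℝ, 0 < η ∧ η ≤ 1 ∧ ∀ R, 0 < R → R ≤ 1 → (∀ᶠ n in atTop, r n ≤ R) →
      ∀ᶠ n in atTop, t (n - 1) < η * t n → r n ≤ R * (1 - β / 4) := by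
  obtain ⟨B, hB, interior⟩ : ∃ B : ℝ, 0 ≤ B ∧ ∀ n, 2 ≤ n →
      n * t n ≤ ∑ p ∈ properEulerPairs n with m ≤ p.1 ∧ m ≤ p.2, (eulerWeight t c p : ℝ) +
        B * (n * t (n - 1)) :=
    ⟨boundaryWeight t c m, Nat.cast_nonneg _, fun n hn => mod_cast h.le_sum_interior_add hn m⟩
  have hBη : B * (1 / (2 * B + 1)) ≤ 1 / 2 := by
    rw [mul_one_div, div_le_div_iff₀ (by positivity) two_pos]
    linarith
  refine ⟨1 / (2 * B + 1), by positivity, (div_le_one (by positivity)).2 (by linarith), ?_⟩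
  intro R hR0 hR1 hR
  filter_upwards [h.eventually_le_of_gain hR0 hR1 hβ0 hβ1 one_half_pos hR,
    eventually_ge_atTop 2] with n gain hn hsteep
  refine (gain {p ∈ properEulerPairs n | m ≤ p.1 ∧ m ≤ p.2} (filter_subset _ _) ?_ ?_).trans_eq
    (by ring)
  · rintro p hp (hR | hR) <;> obtain ⟨-, hm1, hm2⟩ := mem_filter.1 hp
    · exact mul_le_mul hR (hβ _ hm2) (h.nonneg _) hR0.le
    · rw [mul_comm]
      exact mul_le_mul hR (hβ _ hm1) (h.nonneg _) hR0.le
  · have : B * (n * t (n - 1)) ≤ 1 / 2 * (n * t n) :=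
      calc B * (n * t (n - 1)) ≤ B * (n * (1 / (2 * B + 1) * t n)) := by gcongr
        _ = B * (1 / (2 * B + 1)) * (n * t n) := by ring
        _ ≤ 1 / 2 * (n * t n) := by gcongr
    linarith [interior n hn]

theorem eventually_le_of_pair (hj : 1 ≤ j) (hη : 0 < η) (hε0 : 0 < ε) (hε1 : ε ≤ 1)
    (hR0 : 0 < R) (hR1 : R ≤ 1) (hR : ∀ᶠ n in atTop, r n ≤ R) :
    ∀ᶠ n in atTop, η * t n ≤ t (n - j) → r (n - j) * r j ≤ R * (1 - ε) →
      r n ≤ R * (1 - ε * η / 4) := by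
  filter_upwards [h.eventually_le_of_gain hR0 hR1 hε0 hε1 (half_pos hη) hR,
    eventually_gt_atTop (2 * j)] with n gain hn hflat hpair
  have hmem : (n - j, j) ∈ properEulerPairs n :=
    mem_properEulerPairs.2 ⟨⟨by omega, by omega⟩, by omega, dvd_rfl⟩
  refine (gain {(n - j, j)} (singleton_subset_iff.2 hmem) ?_ ?_).trans_eq (by ring)
  · rintro p hp -
    rwa [mem_singleton.1 hp]
  · have hhalf : (n / 2 : ℝ) ≤ (n - j : ℕ) := by
      rw [div_le_iff₀ two_pos]
      norm_cast
      omega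
    have hc : (1 : ℝ) ≤ c j := mod_cast h.c_pos j
    rw [sum_singleton, eulerWeight]
    push_cast
    calc η / 2 * (n * t n) = n / 2 * (η * t n) := by ring
      _ ≤ (n - j : ℕ) * t (n - j) := by gcongr
      _ ≤ (n - j : ℕ) * (t (n - j) * c j) := by
          gcongr
          exact le_mul_of_one_le_right (Nat.cast_nonneg _) hc

/-- Either `t` is flat on `[n - m, n]` and the pair `(n - m, m)` gains, or it is steep at some
`n - j` with `j < m` and the gain there is inherited through the pair `(n - j, j)`. -/
theorem exists_contraction (hm : 2 ≤ m) (hr : ∀ n, m ≤ n → r n < 1) :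
    ∃ δ, 0 < δ ∧ δ < 1 ∧ ∀ R, 0 < R → R ≤ 1 → (∀ᶠ n in atTop, r n ≤ R) →
      ∀ᶠ n in atTop, r n ≤ R * (1 - δ) := by
  obtain ⟨β, hβ0, hβ1, hβ⟩ := h.exists_gap hm hr
  obtain ⟨η, hη0, hη1, hsteep⟩ := h.exists_gain_of_steep hβ0 hβ1 hβ
  have hηm : η ^ m ≤ 1 := pow_le_one₀ hη0.le hη1
  refine ⟨β / 4 * η ^ m / 4, by positivity, by nlinarith, fun R hR0 hR1 hR => ?_⟩
  have steep : ∀ᶠ n in atTop, ∀ j ∈ Icc 0 m, t (n - j - 1) < η * t (n - j) →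
      r (n - j) ≤ R * (1 - β / 4) :=
    (eventually_all_finset _).2 fun j _ =>
      (tendsto_sub_atTop_nat j).eventually (hsteep R hR0 hR1 hR)
  have pair : ∀ᶠ n in atTop, ∀ j ∈ Icc 1 m, η ^ m * t n ≤ t (n - j) →
      r (n - j) * r j ≤ R * (1 - β / 4) → r n ≤ R * (1 - β / 4 * η ^ m / 4) :=
    (eventually_all_finset _).2 fun j hj => h.eventually_le_of_pair (mem_Icc.1 hj).1
      (pow_pos hη0 m) (by linarith) (by linarith) hR0 hR1 hR
  filter_upwards [steep, pair, (tendsto_sub_atTop_nat m).eventually hR] with n steep pair hRn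
  rcases pow_mul_le_or_exists_lt (fun j => (t (n - j) : ℝ)) hη0.le m with
    hflat | ⟨j, hj, hflat, hlt⟩
  · refine pair m (by simp; omega) hflat ?_
    calc r (n - m) * r m ≤ R * (1 - β) := mul_le_mul hRn (hβ m le_rfl) (h.nonneg m) hR0.le
      _ ≤ R * (1 - β / 4) := by gcongr; linarith
  · have gain := steep j (by simp; omega) hlt
    rcases Nat.eq_zero_or_pos j with rfl | hj0
    · refine gain.trans ?_
      gcongr
      nlinarith
    · refine pair j (by simp; omega) (le_trans ?_ hflat) (h.mul_le_of_le_left gain)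
      exact mul_le_mul_of_nonneg_right (pow_le_pow_of_le_one hη0.le hη1 hj.le) (Nat.cast_nonneg _)

theorem tendsto_zero (hm : 2 ≤ m) (hr : ∀ n, m ≤ n → r n < 1) : Tendsto r atTop (nhds 0) := by
  obtain ⟨δ, hδ0, hδ1, hδ⟩ := h.exists_contraction hm hr
  have geometric (k : ℕ) : ∀ᶠ n in atTop, r n ≤ (1 - δ) ^ k := by
    induction k with
    | zero => exact .of_forall fun n => by simpa using h.le_one n
    | succ k ih =>
      have hpos : 0 < (1 - δ) ^ k := pow_pos (by linarith) k
      filter_upwards [hδ _ hpos (pow_le_one₀ (by linarith) (by linarith)) ih] with n hn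
      rwa [pow_succ]
  refine tendsto_order.2 ⟨fun a ha => .of_forall fun n => ha.trans_le (h.nonneg n), fun a ha => ?_⟩
  obtain ⟨k, hk⟩ := exists_pow_lt_of_lt_one ha (by linarith : 1 - δ < 1)
  exact (geometric k).mono fun n hn => hn.trans_lt hk

end EulerSubaveraging

/-! ### Cographs without a mate -/

namespace GraphClass

variable {P : GraphClass → Prop} {g a b : GraphClass} {n : ℕ}

/-- Having a generalized cospectral mate among the cographs. -/
def HasMate (g : GraphClass) : Prop := ∃ h, Cograph h ∧ GenCospectral g h ∧ h ≠ g

/-- The cographs without a generalized cospectral cograph mate. -/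
def Mateless (g : GraphClass) : Prop := Cograph g ∧ ¬ HasMate g

theorem HasMate.add_right (h : HasMate a) (hb : Cograph b) : HasMate (a + b) := by
  obtain ⟨x, hx, hax, hne⟩ := h
  exact ⟨x + b, cograph_add.2 ⟨hx, hb⟩, hax.add_right b, fun h => hne (add_right_cancel h)⟩

theorem HasMate.compl (h : HasMate g) : HasMate gᶜ := by
  obtain ⟨x, hx, hgx, hne⟩ := h
  exact ⟨xᶜ, hx.compl, hgx.compl, fun h => hne (compl_injective h)⟩

theorem Mateless.of_add (h : Mateless (a + b)) : Mateless a ∧ Mateless b := by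
  obtain ⟨hab, hmate⟩ := h
  obtain ⟨ha, hb⟩ := cograph_add.1 hab
  refine ⟨⟨ha, fun h => hmate (h.add_right hb)⟩, hb, fun h => hmate ?_⟩
  exact add_comm b a ▸ h.add_right ha

theorem Mateless.compl (h : Mateless g) : Mateless gᶜ :=
  ⟨h.1.compl, fun hmate => h.2 (compl_compl g ▸ hmate.compl)⟩

theorem mateless_zero : Mateless 0 :=
  ⟨cograph_zero, fun ⟨_, _, hx, hne⟩ => hne (size_eq_zero_iff.1 (hx.size_eq.symm.trans size_zero))⟩

theorem mateless_point : Mateless point :=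
  ⟨cograph_point, fun ⟨_, _, hx, hne⟩ =>
    hne (eq_point_of_size_eq_one (hx.size_eq.symm.trans size_point))⟩

theorem hasMate_seed : HasMate seed :=
  ⟨seedMate, cograph_seedMate, genCospectral_seed_seedMate, seed_ne_seedMate.symm⟩

theorem hasMate_cls (G : SimpleGraph (Fin n)) : HasMate (cls G) ↔
    ∃ H : SimpleGraph (Fin n), IsCograph H ∧ _root_.GenCospectral G H ∧ ¬ Nonempty (G ≃g H) := by
  constructor
  · rintro ⟨x, hx, hGx, hne⟩
    obtain ⟨k, H, rfl⟩ := exists_cls x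
    obtain rfl : n = k := by simpa [size_cls] using hGx.size_eq
    exact ⟨H, cograph_cls.1 hx, genCospectral_cls.1 hGx, fun e => hne (cls_eq_iff.2 e).symm⟩
  · rintro ⟨H, hH, hGH, hne⟩
    exact ⟨cls H, cograph_cls.2 hH, genCospectral_cls.2 hGH, fun h => hne (cls_eq_iff.1 h.symm)⟩

/-! ### Counting cographs -/

theorem classCount_eq_card_ofSize {Q : SimpleGraph (Fin n) → Prop} (h : ∀ G, Q G ↔ P (cls G)) :
    classCount n Q = #(ofSize P n) := by
  let toClass : (Quot fun G H : {G : SimpleGraph (Fin n) // Q G} => Nonempty (G.1 ≃g H.1)) →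
      ofSize P n :=
    Quot.lift (fun G => ⟨cls G.1, mem_ofSize.2 ⟨by simp [size_cls], (h _).1 G.2⟩⟩)
      fun _ _ e => Subtype.ext (cls_eq_iff.2 e)
  rw [← Nat.card_eq_finsetCard]
  refine Nat.card_eq_of_bijective toClass ?_
  constructor
  · rintro ⟨G⟩ ⟨H⟩ hGH
    exact Quot.sound (cls_eq_iff.1 (congrArg Subtype.val hGH))
  · rintro ⟨g, hg⟩
    obtain ⟨hsize, hP⟩ := mem_ofSize.1 hg
    obtain ⟨k, G, rfl⟩ := exists_cls g
    obtain rfl : k = n := by simpa [size_cls] using hsize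
    exact ⟨Quot.mk _ ⟨G, (h G).2 hP⟩, rfl⟩

theorem ofSize_zero (h : P 0) : ofSize P 0 = {0} := by
  ext g
  rw [mem_ofSize, mem_singleton, size_eq_zero_iff]
  exact ⟨And.left, fun hg => ⟨hg, hg ▸ h⟩⟩

theorem card_ofSize_zero (h : P 0) : #(ofSize P 0) = 1 := by
  rw [ofSize_zero h, card_singleton]

theorem ofSize_one (h : P point) : ofSize P 1 = {point} := by
  ext g
  rw [mem_ofSize, mem_singleton]
  exact ⟨fun hg => eq_point_of_size_eq_one hg.1, fun hg => hg ▸ ⟨size_point, h⟩⟩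

theorem card_ofSize_one (h : P point) : #(ofSize P 1) = 1 := by
  rw [ofSize_one h, card_singleton]

theorem card_connectedOfSize_one (h : P point) : #(connectedOfSize P 1) = 1 :=
  card_ofSize_one ⟨h, connected_point⟩

theorem card_ofSize_eq_two_mul (hP : ∀ g, P g → Cograph g) (hcompl : ∀ g, P g → P gᶜ)
    (hn : 2 ≤ n) : #(ofSize P n) = 2 * #(connectedOfSize P n) := by
  classical
  have connected : {g ∈ ofSize P n | Connected g} = connectedOfSize P n := by
    ext g
    rw [mem_filter, mem_ofSize, mem_connectedOfSize, and_assoc]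
  have disconnected : #{g ∈ ofSize P n | ¬ Connected g} = #(connectedOfSize P n) := by
    refine card_nbij' (·ᶜ) (·ᶜ) ?_ ?_ (fun g _ => compl_compl g) fun g _ => compl_compl g
    · intro g hg
      obtain ⟨hg, hconn⟩ := mem_filter.1 hg
      obtain ⟨rfl, hPg⟩ := mem_ofSize.1 hg
      have h0 : g ≠ 0 := fun h0 => by simp [h0] at hn
      exact mem_connectedOfSize.2
        ⟨size_compl g, hcompl g hPg, (connected_or_connected_compl h0).resolve_left hconn⟩
    · intro g hg
      obtain ⟨rfl, hPg, hconn⟩ := mem_connectedOfSize.1 hg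
      exact mem_filter.2 ⟨mem_ofSize.2 ⟨size_compl g, hcompl g hPg⟩,
        (hP g hPg).not_connected_compl hconn hn⟩
  rw [← card_filter_add_card_filter_not (s := ofSize P n) Connected, connected, disconnected,
    two_mul]

theorem card_cograph_eq_two_mul (hn : 2 ≤ n) :
    #(ofSize Cograph n) = 2 * #(connectedOfSize Cograph n) :=
  card_ofSize_eq_two_mul (fun _ => id) (fun _ => Cograph.compl) hn

theorem card_mateless_eq_two_mul (hn : 2 ≤ n) :
    #(ofSize Mateless n) = 2 * #(connectedOfSize Mateless n) :=
  card_ofSize_eq_two_mul (fun _ h => h.1) (fun _ => Mateless.compl) hn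

theorem card_ofSize_le_card_connectedOfSize_succ (hn : 1 ≤ n) :
    #(ofSize Cograph n) ≤ #(connectedOfSize Cograph (n + 1)) := by
  refine card_le_card_of_injOn (fun g => join g point) ?_ join_point_injective.injOn
  intro g hg
  obtain ⟨rfl, hcog⟩ := mem_ofSize.1 hg
  have h0 : g ≠ 0 := fun h0 => by simp [h0] at hn
  exact mem_connectedOfSize.2 ⟨by rw [size_join, size_point], cograph_join.2 ⟨hcog, cograph_point⟩,
    connected_join h0 connected_point.ne_zero⟩

theorem eulerRecursion_cograph :
    EulerRecursion (fun n => #(connectedOfSize Cograph n)) fun n => #(ofSize Cograph n) where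
  c_zero := card_ofSize_zero cograph_zero
  c_one := card_ofSize_one cograph_point
  t_one := card_connectedOfSize_one cograph_point
  c_eq_two_mul := card_cograph_eq_two_mul
  c_le_t_succ := card_ofSize_le_card_connectedOfSize_succ
  mul_c := euler_eq fun _ _ => cograph_add

theorem card_cograph_pos (n : ℕ) : 0 < #(ofSize Cograph n) := eulerRecursion_cograph.c_pos n

theorem ofSize_mateless_subset (n : ℕ) : ofSize Mateless n ⊆ ofSize Cograph n := fun _ hg =>
  have h := mem_ofSize.1 hg
  mem_ofSize.2 ⟨h.1, h.2.1⟩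

theorem card_mateless_lt_card_cograph (hn : 15 ≤ n) :
    #(ofSize Mateless n) < #(ofSize Cograph n) := by
  have hpoints : Cograph ((n - 15) • point) := cograph_nsmul _ cograph_point
  refine card_lt_card ((ssubset_iff_of_subset (ofSize_mateless_subset n)).2
    ⟨seed + (n - 15) • point, mem_ofSize.2 ⟨?_, cograph_add.2 ⟨cograph_seed, hpoints⟩⟩, ?_⟩)
  · rw [size_add, size_seed, size_nsmul, size_point]
    omega
  · exact fun h => (mem_ofSize.1 h).2.2 (hasMate_seed.add_right hpoints)

theorem card_hasMate_add_card_mateless (n : ℕ) :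
    #(ofSize (fun g => Cograph g ∧ HasMate g) n) + #(ofSize Mateless n) = #(ofSize Cograph n) := by
  classical
  rw [← card_filter_add_card_filter_not (s := ofSize Cograph n) HasMate]
  congr 2 <;> ext g <;> simp only [mem_filter, mem_ofSize, Mateless, and_assoc]

/-- The proportion of the cographs on `n` vertices that have no mate. -/
noncomputable def matelessRatio (n : ℕ) : ℝ := #(ofSize Mateless n) / #(ofSize Cograph n)

theorem matelessRatio_mul (n : ℕ) :
    matelessRatio n * #(ofSize Cograph n) = #(ofSize Mateless n) :=
  div_mul_cancel₀ _ (Nat.cast_pos.2 (card_cograph_pos n)).ne'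

/-- Complementation halves both counts, so connected mateless cographs have the same ratio. -/
theorem matelessRatio_mul_connected (hn : 1 ≤ n) :
    matelessRatio n * #(connectedOfSize Cograph n) = #(connectedOfSize Mateless n) := by
  have hratio := matelessRatio_mul n
  rcases hn.eq_or_lt with rfl | hn
  · rw [card_ofSize_one cograph_point, card_ofSize_one mateless_point] at hratio
    rwa [card_connectedOfSize_one cograph_point, card_connectedOfSize_one mateless_point]
  · rw [card_cograph_eq_two_mul hn, card_mateless_eq_two_mul hn] at hratio
    push_cast at hratio
    linarith

theorem mul_card_connected_mateless_le (hn : 2 ≤ n) :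
    n * #(connectedOfSize Mateless n) ≤ ∑ p ∈ properEulerPairs n,
      eulerWeight (fun s => #(connectedOfSize Mateless s)) (fun k => #(ofSize Mateless k)) p := by
  have euler := (euler_le (P := Mateless) (fun _ _ => Mateless.of_add) n).trans_eq
    (sum_eulerPairs (by omega) (fun s => #(connectedOfSize Mateless s))
      fun k => #(ofSize Mateless k))
  rw [card_ofSize_zero mateless_zero, card_mateless_eq_two_mul hn] at euler
  linarith

theorem eulerSubaveraging_matelessRatio :
    EulerSubaveraging (fun n => #(connectedOfSize Cograph n)) (fun n => #(ofSize Cograph n))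
      matelessRatio where
  __ := eulerRecursion_cograph
  nonneg n := by unfold matelessRatio; positivity
  le_one n := div_le_one_of_le₀ (mod_cast card_le_card (ofSize_mateless_subset n))
    (Nat.cast_nonneg _)
  le_sum {n} hn := by
    calc (n * #(connectedOfSize Cograph n) * matelessRatio n : ℝ)
        = n * #(connectedOfSize Mateless n) := by
          rw [← matelessRatio_mul_connected (one_le_two.trans hn)]
          ring
      _ ≤ ∑ p ∈ properEulerPairs n, (eulerWeight (fun s => #(connectedOfSize Mateless s))
            (fun k => #(ofSize Mateless k)) p : ℝ) :=
          mod_cast mul_card_connected_mateless_le hn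
      _ = _ := by
          refine sum_congr rfl fun p hp => ?_
          obtain ⟨⟨hs, -⟩, -⟩ := mem_properEulerPairs.1 hp
          simp only [eulerWeight, Nat.cast_mul, ← matelessRatio_mul,
            ← matelessRatio_mul_connected hs]
          ring

theorem tendsto_matelessRatio : Tendsto matelessRatio atTop (nhds 0) :=
  eulerSubaveraging_matelessRatio.tendsto_zero (m := 15) (by norm_num) fun n hn =>
    (div_lt_one (Nat.cast_pos.2 (card_cograph_pos n))).2
      (mod_cast card_mateless_lt_card_cograph hn)

theorem card_hasMate_div_card_cograph (n : ℕ) :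
    (#(ofSize (fun g => Cograph g ∧ HasMate g) n) / #(ofSize Cograph n) : ℝ) =
      1 - matelessRatio n := by
  have hpos : (#(ofSize Cograph n) : ℝ) ≠ 0 := (Nat.cast_pos.2 (card_cograph_pos n)).ne'
  rw [matelessRatio, eq_sub_iff_add_eq, ← add_div, div_eq_one_iff_eq hpos]
  exact_mod_cast card_hasMate_add_card_mateless n

end GraphClass

end Counting

/-- **Almost all cographs have a generalized cospectral mate which is itself a cograph.** -/
theorem almost_all_cographs_have_cograph_generalized_cospectral_mate :
    Filter.Tendsto
      (fun n : ℕ =>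
        (classCount n (fun G => IsCograph G ∧
            ∃ H : SimpleGraph (Fin n), IsCograph H ∧ GenCospectral G H ∧
              ¬ Nonempty (G ≃g H)) : ℝ) /
        (classCount n (fun G => IsCograph G) : ℝ))
      Filter.atTop (nhds 1) := by
  have hlim : Filter.Tendsto (fun n => 1 - GraphClass.matelessRatio n) Filter.atTop (nhds 1) := by
    simpa using GraphClass.tendsto_matelessRatio.const_sub 1
  refine hlim.congr fun n => ?_
  rw [GraphClass.classCount_eq_card_ofSize (P := GraphClass.Cograph)
      fun G => GraphClass.cograph_cls.symm,
    GraphClass.classCount_eq_card_ofSize (P := fun g => GraphClass.Cograph g ∧ GraphClass.HasMate g)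
      fun G => and_congr GraphClass.cograph_cls.symm (GraphClass.hasMate_cls G).symm,
    GraphClass.card_hasMate_div_card_cograph]
end

section
/- There exist two non-isomorphic cographs on 15 vertices that are generalized cospectral; moreover, 15 is minimal: for every n < 15, any two cographs on n vertices that are generalized cospectral are isomorphic. -/
open SimpleGraph

/-!
By Seinsche's theorem, a cograph with at least two vertices or its complement is disconnected.
Hence the cographs with 14 vertices are, up to complementation, the disjoint unions of connected
cographs on fewer vertices, which in turn are complements of disconnected ones. Characteristic
polynomials follow these constructions by simple recursions: since `det (M + ε J) = det M + ε s`,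
where `J` is the all-ones matrix and `s` the sum of the cofactors of `M`, the values at `t` and at
`-1 - t` of `det (t I - A)` and of the cofactor sum for unions and complements are determined by
those for the parts.

Already at the single point `t = 15`, the exclusive or of the values of the characteristic
polynomials of a graph and of its complement separates the 218751 disconnected cographs with 14
vertices, and it never vanishes. It thus determines a cograph up to complementation, and no
cograph with 14 vertices is cospectral to its complement. To verify the separation, all the values
are packed into one natural number, as an array of words, and sorted with Batcher's network, each
layer of which takes a few operations on that number. All that matters about the network is that
its layers permute the words, since the result is then seen to be strictly decreasing.

Graphs with fewer vertices are padded with isolated vertices, which preserves generalized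
cospectrality and can be undone.
-/

/-! ### Seinsche's theorem -/

section Cographs

variable {V W : Type} {G : SimpleGraph V} {H : SimpleGraph W}

theorem IsCograph.adj_of_path (hG : IsCograph G) {a b c d : V} (hab : G.Adj a b)
    (hbc : G.Adj b c) (hcd : G.Adj c d) (hac : ¬ G.Adj a c) (had : ¬ G.Adj a d) :
    G.Adj b d := by
  by_contra hbd
  have hinj : Function.Injective ![a, b, c, d] := by
    have := hab.ne
    have := hbc.ne
    have := hcd.ne
    have : a ≠ c := by rintro rfl; exact had hcd
    have : a ≠ d := by rintro rfl; exact hbd hab.symm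
    have : b ≠ d := by rintro rfl; exact had hab
    intro i j hij
    fin_cases i <;> fin_cases j <;> simp_all
  refine hG ⟨⟨![a, b, c, d], hinj⟩, fun i j => ?_⟩
  fin_cases i <;> fin_cases j <;>
    simp [pathGraph_adj, hab, hbc, hcd, hac, had, hbd, hab.symm, hbc.symm, hcd.symm,
      G.adj_comm c a, G.adj_comm d a, G.adj_comm d b]

theorem IsCograph.compl_s16 (hG : IsCograph G) : IsCograph Gᶜ := by
  rintro ⟨f, hf⟩
  have hadj {i j : Fin 4} (hij : i ≠ j) (hp : ¬ (pathGraph 4).Adj i j) : G.Adj (f i) (f j) := by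
    rw [← hf, compl_adj] at hp
    by_contra h
    exact hp ⟨fun h' => hij (f.injective h'), h⟩
  have hnadj {i j : Fin 4} (hp : (pathGraph 4).Adj i j) : ¬ G.Adj (f i) (f j) := by
    rw [← hf, compl_adj] at hp
    exact hp.2
  -- The complement of the path `0 1 2 3` is the path `1 3 0 2`.
  refine hnadj ?_ (hG.adj_of_path (a := f 1) (b := f 3) (c := f 0) (d := f 2)
    (hadj ?_ ?_) (hadj ?_ ?_) (hadj ?_ ?_) (hnadj ?_) (hnadj ?_)) <;>
    simp [pathGraph_adj]

theorem IsCograph.of_embedding_s16 (hH : IsCograph H) (e : G ↪g H) : IsCograph G := by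
  rintro ⟨f, hf⟩
  exact hH ⟨f.trans e.toEmbedding, fun i j => e.map_adj_iff.trans (hf i j)⟩

theorem IsCograph.sum_s16 (hG : IsCograph G) (hH : IsCograph H) : IsCograph (G ⊕g H) := by
  rintro ⟨f, hf⟩
  have hside (i j : Fin 4) (hij : (pathGraph 4).Adj i j) : (f i).isLeft = (f j).isLeft := by
    rw [← hf] at hij
    cases hi : f i <;> cases hj : f j <;> simp_all
  have hconst (i : Fin 4) : (f i).isLeft = (f 0).isLeft := by
    have h01 := hside 0 1 (by simp [pathGraph_adj])
    have h12 := hside 1 2 (by simp [pathGraph_adj])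
    have h23 := hside 2 3 (by simp [pathGraph_adj])
    fin_cases i <;> simp_all
  cases h0 : f 0 with
  | inl _ =>
    simp only [h0, Sum.isLeft_inl, Sum.isLeft_iff] at hconst
    choose g hg using hconst
    refine hG ⟨⟨g, fun i j hij => f.injective (by rw [hg, hg, hij])⟩, fun i j => ?_⟩
    rw [← hf, hg, hg]
    exact sum_adj_inl.symm
  | inr _ =>
    simp only [h0, Sum.isLeft_inr, Sum.isLeft_eq_false, Sum.isRight_iff] at hconst
    choose g hg using hconst
    refine hH ⟨⟨g, fun i j hij => f.injective (by rw [hg, hg, hij])⟩, fun i j => ?_⟩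
    rw [← hf, hg, hg]
    exact sum_adj_inr.symm

theorem isCograph_of_subsingleton [Subsingleton V] (G : SimpleGraph V) : IsCograph G :=
  fun ⟨f, _⟩ => absurd (f.injective (Subsingleton.elim (f 0) (f 1))) (by decide)

end Cographs

/-- The graph `G` has no edge between the disjoint nonempty sets `A` and `B`. -/
structure IsSeparation {V : Type} (G : SimpleGraph V) (A B : Set V) : Prop where
  nonempty_left : A.Nonempty
  nonempty_right : B.Nonempty
  disjoint : Disjoint A B
  not_adj : ∀ a ∈ A, ∀ b ∈ B, ¬ G.Adj a b

/-- The subgraph of `G` induced on `s` is disconnected. -/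
def Splits {V : Type} (G : SimpleGraph V) (s : Set V) : Prop :=
  ∃ A B, IsSeparation G A B ∧ A ∪ B = s

section Separation

variable {V : Type} {G : SimpleGraph V} {A B s : Set V} {v : V}

theorem IsSeparation.symm (h : IsSeparation G A B) : IsSeparation G B A :=
  ⟨h.nonempty_right, h.nonempty_left, h.disjoint.symm, fun b hb a ha hba =>
    h.not_adj a ha b hb hba.symm⟩

theorem splits_insert_of_forall_not_adj (hv : v ∉ s) (hs : s.Nonempty)
    (h : ∀ x ∈ s, ¬ G.Adj v x) : Splits G (insert v s) :=
  ⟨{v}, s, ⟨Set.singleton_nonempty v, hs, Set.disjoint_singleton_left.mpr hv, by simpa using h⟩,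
    Set.singleton_union⟩

theorem splits_compl_insert_of_forall_adj (hv : v ∉ s) (hs : s.Nonempty)
    (h : ∀ x ∈ s, G.Adj v x) : Splits Gᶜ (insert v s) :=
  splits_insert_of_forall_not_adj hv hs fun x hx hvx => ((compl_adj _ _ _).mp hvx).2 (h x hx)

theorem IsSeparation.splits_insert_of_forall_not_adj_left (h : IsSeparation G A B)
    (hv : v ∉ A ∪ B) (hA : ∀ a ∈ A, ¬ G.Adj v a) : Splits G (insert v (A ∪ B)) := by
  refine ⟨A, insert v B, ⟨h.nonempty_left, B.insert_nonempty v, ?_, ?_⟩, Set.union_insert⟩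
  · exact Set.disjoint_insert_right.mpr ⟨fun hvA => hv (.inl hvA), h.disjoint⟩
  · rintro a ha b (rfl | hb)
    exacts [fun hab => hA a ha hab.symm, h.not_adj a ha b hb]

/-- The vertices of `A` not adjacent to `v` are separated from the rest: an edge to a neighbour of
`v` in `A` would extend through `v` to an induced path ending in `B`. -/
theorem IsSeparation.splits_insert (hG : IsCograph G) (h : IsSeparation G A B) (hv : v ∉ A ∪ B)
    (hA : ∃ a ∈ A, ¬ G.Adj v a) (hB : ∃ b ∈ B, G.Adj v b) : Splits G (insert v (A ∪ B)) := by
  obtain ⟨u, huA, hvu⟩ := hA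
  obtain ⟨q, hqB, hvq⟩ := hB
  refine ⟨{a ∈ A | ¬ G.Adj v a}, insert v ({a ∈ A | G.Adj v a} ∪ B),
    ⟨⟨u, huA, hvu⟩, Set.insert_nonempty _ _, ?_, ?_⟩, ?_⟩
  · have := h.disjoint
    grind
  · rintro y ⟨hyA, hvy⟩ x (rfl | ⟨hxA, hvx⟩ | hxB) hyx
    · exact hvy hyx.symm
    · exact h.not_adj x hxA q hqB
        (hG.adj_of_path hyx hvx.symm hvq (fun hyv => hvy hyv.symm) (h.not_adj y hyA q hqB))
    · exact h.not_adj y hyA x hxB hyx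
  · ext x
    grind

theorem IsCograph.splits_insert (hG : IsCograph G) (hv : v ∉ s) (hs : Splits G s) :
    Splits G (insert v s) ∨ Splits Gᶜ (insert v s) := by
  obtain ⟨A, B, h, rfl⟩ := hs
  by_cases hA : ∀ a ∈ A, ¬ G.Adj v a
  · exact .inl (h.splits_insert_of_forall_not_adj_left hv hA)
  rw [Set.union_comm] at hv ⊢
  by_cases hB : ∀ b ∈ B, ¬ G.Adj v b
  · exact .inl (h.symm.splits_insert_of_forall_not_adj_left hv hB)
  by_cases hAB : ∀ x ∈ B ∪ A, G.Adj v x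
  · exact .inr (splits_compl_insert_of_forall_adj hv (h.nonempty_left.inr) hAB)
  push Not at hA hB hAB
  obtain ⟨x, hxB | hxA, hvx⟩ := hAB
  · exact .inl (h.symm.splits_insert hG hv ⟨x, hxB, hvx⟩ hA)
  · rw [Set.union_comm] at hv ⊢
    exact .inl (h.splits_insert hG hv ⟨x, hxA, hvx⟩ hB)

theorem IsCograph.splits_or_splits_compl (hG : IsCograph G) {s : Finset V} (hs : s.Nontrivial) :
    Splits G s ∨ Splits Gᶜ s := by
  classical
  induction s using Finset.induction_on with
  | empty => simp at hs
  | insert v s hv ih =>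
    rw [Finset.coe_insert]
    have hvs : v ∉ (s : Set V) := by simpa using hv
    rcases s.eq_empty_or_nonempty with rfl | hne
    · simp at hs
    obtain ⟨w, rfl⟩ | hnt := hne.exists_eq_singleton_or_nontrivial
    · by_cases hvw : G.Adj v w
      · exact .inr (splits_compl_insert_of_forall_adj hvs (by simp) (by simpa using hvw))
      · exact .inl (splits_insert_of_forall_not_adj hvs (by simp) (by simpa using hvw))
    · rcases ih hnt with h | h
      · exact hG.splits_insert hvs h
      · simpa only [compl_compl] using (hG.compl_s16.splits_insert hvs h).symm

/-- A graph is the disjoint union of its restrictions to the two sides of a separation. -/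
noncomputable def IsSeparation.sumInduceIso (h : IsSeparation G A Aᶜ) :
    G.induce A ⊕g G.induce Aᶜ ≃g G := by
  classical
  refine ⟨Equiv.Set.sumCompl A, ?_⟩
  rintro (⟨x, hx⟩ | ⟨x, hx⟩) (⟨y, hy⟩ | ⟨y, hy⟩)
  · simp
  · simpa using h.not_adj x hx y hy
  · simpa using h.symm.not_adj x hx y hy
  · simp

/-- Seinsche's theorem: a cograph with at least two vertices is disconnected, or its complement
is. -/
theorem IsCograph.exists_isSeparation [Finite V] [Nontrivial V] (hG : IsCograph G) :
    ∃ A : Set V, IsSeparation G A Aᶜ ∨ IsSeparation Gᶜ A Aᶜ := by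
  have := Fintype.ofFinite V
  have hcompl {K : SimpleGraph V} (hK : Splits K (Finset.univ : Finset V)) :
      ∃ A, IsSeparation K A Aᶜ := by
    obtain ⟨A, B, h, hAB⟩ := hK
    rw [Finset.coe_univ] at hAB
    exact ⟨A, (IsCompl.of_eq h.disjoint.eq_bot hAB).compl_eq ▸ h⟩
  rcases hG.splits_or_splits_compl (s := Finset.univ) Finset.univ_nontrivial with h | h
  · exact (hcompl h).imp fun _ => .inl
  · exact (hcompl h).imp fun _ => .inr

end Separation

/-! ### Cotrees -/

/-- An isomorphism of graphs is an isomorphism of their complements. -/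
def complIso {V W : Type} {G : SimpleGraph V} {H : SimpleGraph W} (e : G ≃g H) : Gᶜ ≃g Hᶜ where
  toEquiv := e.toEquiv
  map_rel_iff' := by simp [e.map_adj_iff]

/-- Expressions describing cographs: graphs built from single vertices by disjoint unions and
complements. -/
inductive Cotree : Type
  | empty
  | vertex
  | union (S T : Cotree)
  | compl_s16 (T : Cotree)

namespace Cotree

/-- The vertices of the cograph described by a cotree. -/
def Vert : Cotree → Type
  | empty => Empty
  | vertex => Unit
  | union S T => S.Vert ⊕ T.Vert
  | compl_s16 T => T.Vert

/-- The cograph described by a cotree. -/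
def graph : (T : Cotree) → SimpleGraph T.Vert
  | empty => ⊥
  | vertex => ⊥
  | union S T => S.graph ⊕g T.graph
  | compl_s16 T => T.graphᶜ

/-- The number of vertices of the cograph described by a cotree. -/
def size : Cotree → ℕ
  | empty => 0
  | vertex => 1
  | union S T => S.size + T.size
  | compl_s16 T => T.size

instance instFintypeVert : (T : Cotree) → Fintype T.Vert
  | empty => inferInstanceAs (Fintype Empty)
  | vertex => inferInstanceAs (Fintype Unit)
  | union S T =>
    letI := S.instFintypeVert
    letI := T.instFintypeVert
    inferInstanceAs (Fintype (S.Vert ⊕ T.Vert))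
  | compl_s16 T => T.instFintypeVert

instance instDecidableEqVert : (T : Cotree) → DecidableEq T.Vert
  | empty => inferInstanceAs (DecidableEq Empty)
  | vertex => inferInstanceAs (DecidableEq Unit)
  | union S T =>
    letI := S.instDecidableEqVert
    letI := T.instDecidableEqVert
    inferInstanceAs (DecidableEq (S.Vert ⊕ T.Vert))
  | compl_s16 T => T.instDecidableEqVert

theorem card_vert (T : Cotree) : Fintype.card T.Vert = T.size := by
  induction T with
  | empty => rfl
  | vertex => rfl
  | union S T hS hT =>
    exact (Fintype.card_sum (α := S.Vert) (β := T.Vert)).trans (congrArg₂ (· + ·) hS hT)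
  | compl_s16 _ hT => exact hT

theorem isCograph_graph (T : Cotree) : IsCograph T.graph := by
  induction T with
  | empty => exact isCograph_of_subsingleton (V := Empty) ⊥
  | vertex => exact isCograph_of_subsingleton (V := Unit) ⊥
  | union S T hS hT => exact hS.sum_s16 hT
  | compl_s16 T hT => exact hT.compl_s16

/-- The disjoint union of a list of cographs. -/
def sum_s16 (l : List Cotree) : Cotree :=
  l.foldr union empty

/-- Cotrees describe the same cograph up to isomorphism. -/
def Iso (S T : Cotree) : Prop :=
  Nonempty (S.graph ≃g T.graph)

theorem Iso.refl (T : Cotree) : T.Iso T :=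
  ⟨RelIso.refl _⟩

theorem Iso.symm {S T : Cotree} : S.Iso T → T.Iso S
  | ⟨e⟩ => ⟨e.symm⟩

theorem Iso.trans {S T U : Cotree} : S.Iso T → T.Iso U → S.Iso U
  | ⟨e⟩, ⟨f⟩ => ⟨e.trans f⟩

theorem Iso.compl_s16 {S T : Cotree} : S.Iso T → S.compl_s16.Iso T.compl_s16
  | ⟨e⟩ => ⟨complIso e⟩

theorem Iso.union {S T S' T' : Cotree} : S.Iso S' → T.Iso T' → (S.union T).Iso (S'.union T')
  | ⟨e⟩, ⟨f⟩ => ⟨Iso.sumCongr e f⟩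

theorem Iso.size_eq {S T : Cotree} : S.Iso T → S.size = T.size
  | ⟨e⟩ => by rw [← card_vert, ← card_vert, Fintype.card_congr e.toEquiv]

theorem compl_compl (T : Cotree) : T.compl_s16.compl_s16.Iso T :=
  ⟨(_root_.compl_compl T.graph : T.compl_s16.compl_s16.graph = T.graph) ▸ RelIso.refl _⟩

theorem union_comm (S T : Cotree) : (S.union T).Iso (T.union S) :=
  ⟨Iso.sumComm⟩

theorem union_assoc (S T U : Cotree) : ((S.union T).union U).Iso (S.union (T.union U)) :=
  ⟨Iso.sumAssoc⟩

theorem union_empty (T : Cotree) : (T.union empty).Iso T := by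
  refine ⟨⟨Equiv.sumEmpty _ Empty, ?_⟩⟩
  rintro (x | ⟨⟨⟩⟩) (y | ⟨⟨⟩⟩)
  exact sum_adj_inl.symm

theorem sum_append (l l' : List Cotree) : (sum_s16 (l ++ l')).Iso ((sum_s16 l).union (sum_s16 l')) := by
  induction l with
  | nil => exact ((union_comm ..).trans (union_empty _)).symm
  | cons T l ih => exact ((Iso.refl T).union ih).trans (union_assoc ..).symm

theorem sum_perm {l l' : List Cotree} (h : l.Perm l') : (sum_s16 l).Iso (sum_s16 l') := by
  induction h with
  | nil => exact .refl _
  | cons T _ ih => exact (Iso.refl T).union ih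
  | swap S T l =>
    exact ((union_assoc ..).symm.trans ((union_comm ..).union (.refl _))).trans (union_assoc ..)
  | trans _ _ ih ih' => exact ih.trans ih'

theorem iso_empty_of_size_eq_zero {T : Cotree} (h : T.size = 0) : T.Iso empty := by
  rw [← card_vert, Fintype.card_eq_zero_iff] at h
  exact ⟨⟨Equiv.equivOfIsEmpty _ Empty, fun {x} => (h.false x).elim⟩⟩

theorem iso_vertex_of_size_eq_one {T : Cotree} (h : T.size = 1) : T.Iso vertex := by
  rw [← card_vert, Fintype.card_eq_one_iff_nonempty_unique] at h
  obtain ⟨h⟩ := h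
  refine ⟨⟨Equiv.ofUnique _ Unit, fun {x y} => ?_⟩⟩
  rw [Subsingleton.elim x y]
  exact iff_of_false id (T.graph.loopless.irrefl y)

theorem exists_iso_union_or_compl (T : Cotree) (hT : 2 ≤ T.size) :
    ∃ S S' : Cotree, S.size ≠ 0 ∧ S'.size ≠ 0 ∧
      (T.Iso (S.union S') ∨ T.Iso (S.union S').compl_s16) := by
  induction T with
  | empty => simp [size] at hT
  | vertex => simp [size] at hT
  | union S S' ihS ihS' =>
    rw [size] at hT
    by_cases hS : S.size = 0
    · have hiso : (S.union S').Iso S' :=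
        (((iso_empty_of_size_eq_zero hS).union (.refl _)).trans (union_comm ..)).trans
          (union_empty _)
      obtain ⟨A, B, hA, hB, h⟩ := ihS' (by lia)
      exact ⟨A, B, hA, hB, h.imp hiso.trans hiso.trans⟩
    by_cases hS' : S'.size = 0
    · have hiso : (S.union S').Iso S :=
        ((Iso.refl _).union (iso_empty_of_size_eq_zero hS')).trans (union_empty _)
      obtain ⟨A, B, hA, hB, h⟩ := ihS (by lia)
      exact ⟨A, B, hA, hB, h.imp hiso.trans hiso.trans⟩
    · exact ⟨S, S', hS, hS', .inl (.refl _)⟩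
  | compl_s16 T ih =>
    obtain ⟨A, B, hA, hB, h⟩ := ih hT
    exact ⟨A, B, hA, hB, h.symm.imp (fun h => h.compl_s16.trans (compl_compl _)) Iso.compl_s16⟩

theorem exists_graph_iso {V : Type} [Finite V] (G : SimpleGraph V) (hG : IsCograph G) :
    ∃ T : Cotree, Nonempty (T.graph ≃g G) := by
  induction hn : Nat.card V using Nat.strong_induction_on generalizing V with
  | _ n ih =>
    have hunion {K : SimpleGraph V} (hK : IsCograph K) {A : Set V} (h : IsSeparation K A Aᶜ) :
        ∃ T : Cotree, Nonempty (T.graph ≃g K) := by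
      obtain ⟨S, ⟨eS⟩⟩ := ih (Nat.card A)
        (hn ▸ Finite.card_subtype_lt (p := (· ∈ A)) h.nonempty_right.some_mem) (K.induce A)
        (hK.of_embedding_s16 (Embedding.induce A)) rfl
      obtain ⟨T, ⟨eT⟩⟩ := ih (Nat.card (Aᶜ : Set V))
        (hn ▸ Finite.card_subtype_lt (p := (· ∈ Aᶜ)) (not_not.mpr h.nonempty_left.some_mem))
        (K.induce Aᶜ) (hK.of_embedding_s16 (Embedding.induce Aᶜ)) rfl
      exact ⟨S.union T, ⟨(Iso.sumCongr eS eT).trans h.sumInduceIso⟩⟩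
    cases isEmpty_or_nonempty V
    · exact ⟨empty, ⟨⟨Equiv.equivOfIsEmpty Empty V, fun {x} => x.elim⟩⟩⟩
    cases subsingleton_or_nontrivial V
    · obtain ⟨v⟩ := ‹Nonempty V›
      refine ⟨vertex, ⟨⟨⟨fun _ => v, fun _ => (), fun _ => rfl, fun _ => Subsingleton.elim _ _⟩,
        ?_⟩⟩⟩
      intro x y
      exact iff_of_false (G.loopless.irrefl v) id
    obtain ⟨A, h | h⟩ := hG.exists_isSeparation
    · exact hunion hG h
    · obtain ⟨T, ⟨e⟩⟩ := hunion hG.compl_s16 h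
      exact ⟨T.compl_s16, ⟨(complIso e).trans (by rw [_root_.compl_compl])⟩⟩

end Cotree

/-! ### Generalized characteristic polynomials -/

section CofactorSum

open Matrix

variable {n m R : Type*} [Fintype n] [DecidableEq n] [Fintype m] [DecidableEq m] [CommRing R]

/-- The sum of all cofactors of a matrix, expanded along each row: the derivative of
`ε ↦ det (M + ε J)` for the all-ones matrix `J`. -/
def cofactorSum (M : Matrix n n R) : R :=
  ∑ i, (M.updateRow i 1).det

theorem det_updateRow_one_add (M : Matrix n n R) (c : n → R) (k : n) :
    ((of fun i j => M i j + c i).updateRow k 1).det = (M.updateRow k 1).det := by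
  refine det_eq_of_forall_row_eq_smul_add_const (Function.update c k 0) k (by simp) fun i j => ?_
  by_cases hik : i = k
  · simp [hik]
  · simp [hik]

theorem cofactorSum_add_smul_one (M : Matrix n n R) (ε : R) :
    cofactorSum (M + ε • of fun _ _ => 1) = cofactorSum M := by
  refine Finset.sum_congr rfl fun k _ => ?_
  rw [← det_updateRow_one_add M (fun _ => ε) k]
  congr 2
  ext i j
  simp

theorem det_add_smul_one (M : Matrix n n R) (ε : R) :
    (M + ε • of fun _ _ => 1).det = M.det + ε * cofactorSum M := by
  have hrows (s : Finset n) : (of fun i j => M i j + if i ∈ s then ε else 0).det =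
      M.det + ε * ∑ i ∈ s, (M.updateRow i 1).det := by
    induction s using Finset.induction_on with
    | empty => simp [show (of fun i j => M i j) = M from rfl]
    | insert k s hk ih =>
      have hrow : (of fun i j => M i j + if i ∈ insert k s then ε else 0) =
          (of fun i j => M i j + if i ∈ s then ε else 0).updateRow k (M k + ε • 1) := by
        ext i j
        by_cases hik : i = k
        · simp [hik]
        · simp [hik]
      have hself : (of fun i j => M i j + if i ∈ s then ε else 0).updateRow k (M k) =
          of fun i j => M i j + if i ∈ s then ε else 0 := by
        ext i j
        by_cases hik : i = k
        · simp [hik, hk]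
        · simp [updateRow_ne hik]
      rw [hrow, det_updateRow_add, det_updateRow_smul, det_updateRow_one_add, hself, ih,
        Finset.sum_insert hk]
      ring
  rw [cofactorSum, ← hrows]
  congr 1
  ext i j
  simp

theorem cofactorSum_neg (M : Matrix n n R) :
    cofactorSum (-M) = (-1) ^ (Fintype.card n + 1) * cofactorSum M := by
  rw [cofactorSum, cofactorSum, Finset.mul_sum]
  refine Finset.sum_congr rfl fun k _ => ?_
  have hrow : (-M).updateRow k 1 = -(M.updateRow k ((-1 : R) • 1)) := by
    ext i j
    by_cases hik : i = k
    · simp [hik]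
    · simp [updateRow_ne hik]
  rw [hrow, det_neg, det_updateRow_smul]
  ring

theorem cofactorSum_fromBlocks (M : Matrix n n R) (N : Matrix m m R) :
    cofactorSum (fromBlocks M 0 0 N) = cofactorSum M * N.det + M.det * cofactorSum N := by
  have hinl (i : n) : (fromBlocks M 0 0 N).updateRow (.inl i) 1 =
      fromBlocks (M.updateRow i 1) (updateRow 0 i 1) 0 N := by
    ext (a | a) (b | b) <;> simp [updateRow_apply]
  have hinr (i : m) : (fromBlocks M 0 0 N).updateRow (.inr i) 1 =
      fromBlocks M 0 (updateRow 0 i 1) (N.updateRow i 1) := by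
    ext (a | a) (b | b) <;> simp [updateRow_apply]
  simp only [cofactorSum, Fintype.sum_sum_type, hinl, hinr, det_fromBlocks_zero₂₁,
    det_fromBlocks_zero₁₂, Finset.sum_mul, Finset.mul_sum]

end CofactorSum

section Spectrum

open Matrix

variable {V W : Type} [Fintype V] [DecidableEq V] [Fintype W] [DecidableEq W]
  {G : SimpleGraph V} {H : SimpleGraph W}

open Classical in
/-- The characteristic matrix `t I - A` of the adjacency matrix `A` of a graph, at `t`. -/
noncomputable def adjCharMatrix (G : SimpleGraph V) (t : ℝ) : Matrix V V ℝ :=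
  scalar V t - G.adjMatrix ℝ

theorem eval_adjCharPoly (G : SimpleGraph V) (t : ℝ) :
    (adjCharPoly G).eval t = (adjCharMatrix G t).det := by
  rw [adjCharPoly, eval_charpoly, adjCharMatrix]

theorem natDegree_adjCharPoly (G : SimpleGraph V) :
    (adjCharPoly G).natDegree = Fintype.card V :=
  charpoly_natDegree_eq_dim _

theorem monic_adjCharPoly (G : SimpleGraph V) : (adjCharPoly G).Monic :=
  charpoly_monic _

theorem cospectral_of_iso (e : G ≃g H) : Cospectral G H := by
  classical
  rw [Cospectral, adjCharPoly, adjCharPoly, ← charpoly_reindex e.toEquiv]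
  congr 1
  ext i j
  rw [reindex_apply, submatrix_apply, adjMatrix_apply, adjMatrix_apply]
  exact if_congr e.symm.map_adj_iff rfl rfl

theorem GenCospectral.of_iso (e : G ≃g H) : GenCospectral G H :=
  ⟨cospectral_of_iso e, cospectral_of_iso (complIso e)⟩

theorem adjCharMatrix_sum (G : SimpleGraph V) (H : SimpleGraph W) (t : ℝ) :
    adjCharMatrix (G ⊕g H) t = fromBlocks (adjCharMatrix G t) 0 0 (adjCharMatrix H t) := by
  ext (i | i) (j | j)
  · by_cases h : G.Adj i j <;> simp [adjCharMatrix, diagonal_apply, h]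
  · simp [adjCharMatrix]
  · simp [adjCharMatrix]
  · by_cases h : H.Adj i j <;> simp [adjCharMatrix, diagonal_apply, h]

theorem adjCharMatrix_compl (G : SimpleGraph V) (t : ℝ) :
    adjCharMatrix Gᶜ t = -(adjCharMatrix G (-1 - t) + (1 : ℝ) • of fun _ _ => 1) := by
  ext i j
  by_cases hij : i = j
  · simp [adjCharMatrix, hij]
  · by_cases h : G.Adj i j <;> simp [adjCharMatrix, hij, h]

theorem det_adjCharMatrix_compl (G : SimpleGraph V) (t : ℝ) :
    (adjCharMatrix Gᶜ t).det = (-1) ^ Fintype.card V *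
      ((adjCharMatrix G (-1 - t)).det + cofactorSum (adjCharMatrix G (-1 - t))) := by
  rw [adjCharMatrix_compl, det_neg, det_add_smul_one, one_mul]

theorem cofactorSum_adjCharMatrix_compl (G : SimpleGraph V) (t : ℝ) :
    cofactorSum (adjCharMatrix Gᶜ t) =
      (-1) ^ (Fintype.card V + 1) * cofactorSum (adjCharMatrix G (-1 - t)) := by
  rw [adjCharMatrix_compl, cofactorSum_neg, cofactorSum_add_smul_one]

theorem det_adjCharMatrix_sum (G : SimpleGraph V) (H : SimpleGraph W) (t : ℝ) :
    (adjCharMatrix (G ⊕g H) t).det = (adjCharMatrix G t).det * (adjCharMatrix H t).det := by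
  rw [adjCharMatrix_sum, det_fromBlocks_zero₂₁]

theorem cofactorSum_adjCharMatrix_sum (G : SimpleGraph V) (H : SimpleGraph W) (t : ℝ) :
    cofactorSum (adjCharMatrix (G ⊕g H) t) =
      cofactorSum (adjCharMatrix G t) * (adjCharMatrix H t).det +
        (adjCharMatrix G t).det * cofactorSum (adjCharMatrix H t) := by
  rw [adjCharMatrix_sum, cofactorSum_fromBlocks]

theorem cospectral_iff_det_eq :
    Cospectral G H ↔ ∀ t, (adjCharMatrix G t).det = (adjCharMatrix H t).det := by
  simp only [← eval_adjCharPoly]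
  exact ⟨fun h t => by rw [h], fun h => Polynomial.funext h⟩

theorem Cospectral.card_eq (h : Cospectral G H) : Fintype.card V = Fintype.card W := by
  rw [← natDegree_adjCharPoly G, h, natDegree_adjCharPoly]

theorem GenCospectral.cofactorSum_eq (h : GenCospectral G H) (t : ℝ) :
    cofactorSum (adjCharMatrix G t) = cofactorSum (adjCharMatrix H t) := by
  have hG := det_adjCharMatrix_compl G (-1 - t)
  rw [cospectral_iff_det_eq.mp h.2, det_adjCharMatrix_compl, h.1.card_eq,
    cospectral_iff_det_eq.mp h.1, sub_sub_cancel] at hG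
  simpa using hG.symm

theorem GenCospectral.sum_s16 {U : Type} [Fintype U] [DecidableEq U] (h : GenCospectral G H)
    (K : SimpleGraph U) : GenCospectral (G ⊕g K) (H ⊕g K) := by
  have hdet := cospectral_iff_det_eq.mp h.1
  refine ⟨cospectral_iff_det_eq.mpr fun t => ?_, cospectral_iff_det_eq.mpr fun t => ?_⟩
  · rw [det_adjCharMatrix_sum, det_adjCharMatrix_sum, hdet]
  · simp only [det_adjCharMatrix_compl, det_adjCharMatrix_sum, cofactorSum_adjCharMatrix_sum,
      Fintype.card_sum, hdet, h.cofactorSum_eq, h.1.card_eq]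

theorem GenCospectral.trans {U : Type} [Fintype U] [DecidableEq U] {K : SimpleGraph U}
    (h : GenCospectral G H) (h' : GenCospectral H K) : GenCospectral G K :=
  ⟨h.1.trans h'.1, h.2.trans h'.2⟩

end Spectrum

/-- The values at `±t` from which the generalized characteristic polynomials of unions and
complements are computed: for `A` the characteristic matrix `t I - A(G)` of a graph `G` on `n`
vertices, `det` and `cof` are the determinant and the cofactor sum of `A`; for
`A' = (t + 1) I + A(G)`, `negDet` is the determinant and `negCof` the cofactor sum of `A'`. -/
structure Profile where
  det : ℕ
  cof : ℕ
  negDet : ℕ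
  negCof : ℕ

namespace Profile

/-- The profile of a disjoint union. It is bilinear in the two profiles. -/
def union (x y : Profile) : Profile :=
  ⟨x.det * y.det, x.det * y.cof + x.cof * y.det,
    x.negDet * y.negDet, x.negDet * y.negCof + x.negCof * y.negDet⟩

/-- The profile of a complement. -/
def compl_s16 (x : Profile) : Profile :=
  ⟨x.negDet - x.negCof, x.negCof, x.det + x.cof, x.cof⟩

/-- The estimates satisfied at `t` by the profiles of cographs with `n` vertices. -/
structure Bounded (t n : ℕ) (x : Profile) : Prop where
  det_pos : 0 < x.det
  negDet_pos : 0 < x.negDet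
  cof_le : (t + 1) * x.cof ≤ n * (x.det + x.cof)
  negCof_le : (t + 1) * x.negCof ≤ n * x.negDet
  det_add_cof_le : x.det + x.cof ≤ (t + 1) ^ n
  negDet_le : x.negDet ≤ (t + 1) ^ n

theorem Bounded.negCof_lt {t n : ℕ} {x : Profile} (hx : x.Bounded t n) (hn : n ≤ t) :
    x.negCof < x.negDet := by
  have := hx.negDet_pos
  have := hx.negCof_le
  nlinarith

theorem Bounded.union {t n m : ℕ} {x y : Profile} (hx : x.Bounded t n) (hy : y.Bounded t m) :
    (x.union y).Bounded t (n + m) where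
  det_pos := Nat.mul_pos hx.det_pos hy.det_pos
  negDet_pos := Nat.mul_pos hx.negDet_pos hy.negDet_pos
  cof_le := by
    have hxy := Nat.mul_le_mul_left y.det hx.cof_le
    have hyx := Nat.mul_le_mul_left x.det hy.cof_le
    simp only [Profile.union]
    nlinarith [Nat.zero_le (n * (x.det * y.cof)), Nat.zero_le (m * (x.cof * y.det))]
  negCof_le := by
    have hxy := Nat.mul_le_mul_left y.negDet hx.negCof_le
    have hyx := Nat.mul_le_mul_left x.negDet hy.negCof_le
    simp only [Profile.union]
    nlinarith
  det_add_cof_le := by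
    have hmul := Nat.mul_le_mul hx.det_add_cof_le hy.det_add_cof_le
    rw [← pow_add] at hmul
    simp only [Profile.union]
    nlinarith [Nat.zero_le (x.cof * y.cof)]
  negDet_le := by
    rw [pow_add]
    exact Nat.mul_le_mul hx.negDet_le hy.negDet_le

theorem Bounded.compl_s16 {t n : ℕ} {x : Profile} (hx : x.Bounded t n) (hn : n ≤ t) :
    x.compl_s16.Bounded t n := by
  have hlt := hx.negCof_lt hn
  have hsub : x.negDet - x.negCof + x.negCof = x.negDet := Nat.sub_add_cancel hlt.le
  exact {
    det_pos := Nat.sub_pos_of_lt hlt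
    negDet_pos := Nat.add_pos_left hx.det_pos _
    cof_le := by rw [Profile.compl_s16, hsub]; exact hx.negCof_le
    negCof_le := hx.cof_le
    det_add_cof_le := by rw [Profile.compl_s16, hsub]; exact hx.negDet_le
    negDet_le := hx.det_add_cof_le }

end Profile

/-- The profile of the graph `G` at `t` is `x`. -/
structure HasProfileAt {V : Type} [Fintype V] [DecidableEq V] (G : SimpleGraph V) (t : ℕ)
    (x : Profile) : Prop where
  det_eq : (adjCharMatrix G t).det = x.det
  cof_eq : cofactorSum (adjCharMatrix G t) = x.cof
  negDet_eq : (adjCharMatrix G (-1 - t)).det = (-1) ^ Fintype.card V * x.negDet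
  negCof_eq : cofactorSum (adjCharMatrix G (-1 - t)) = (-1) ^ (Fintype.card V + 1) * x.negCof

section HasProfileAt

variable {V W : Type} [Fintype V] [DecidableEq V] [Fintype W] [DecidableEq W]
  {G : SimpleGraph V} {H : SimpleGraph W} {t : ℕ} {x y : Profile}

theorem HasProfileAt.sum_s16 (hG : HasProfileAt G t x) (hH : HasProfileAt H t y) :
    HasProfileAt (G ⊕g H) t (x.union y) where
  det_eq := by simp [det_adjCharMatrix_sum, Profile.union, hG.det_eq, hH.det_eq]
  cof_eq := by
    simp only [cofactorSum_adjCharMatrix_sum, Profile.union, hG.det_eq, hH.det_eq, hG.cof_eq,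
      hH.cof_eq]
    push_cast
    ring
  negDet_eq := by
    simp only [det_adjCharMatrix_sum, Profile.union, hG.negDet_eq, hH.negDet_eq,
      Fintype.card_sum]
    push_cast
    ring
  negCof_eq := by
    simp only [cofactorSum_adjCharMatrix_sum, Profile.union, hG.negDet_eq, hH.negDet_eq,
      hG.negCof_eq, hH.negCof_eq, Fintype.card_sum]
    push_cast
    ring

theorem HasProfileAt.compl_s16 (hG : HasProfileAt G t x) (hx : x.negCof ≤ x.negDet) :
    HasProfileAt Gᶜ t x.compl_s16 where
  det_eq := by
    rw [det_adjCharMatrix_compl, hG.negDet_eq, hG.negCof_eq, Profile.compl_s16, Nat.cast_sub hx,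
      pow_succ, mul_neg_one, neg_mul, ← sub_eq_add_neg, ← mul_sub, ← mul_assoc, ← mul_pow]
    simp
  cof_eq := by
    rw [cofactorSum_adjCharMatrix_compl, hG.negCof_eq, Profile.compl_s16, ← mul_assoc, ← mul_pow]
    simp
  negDet_eq := by
    rw [det_adjCharMatrix_compl, sub_sub_cancel, hG.det_eq, hG.cof_eq, Profile.compl_s16,
      Nat.cast_add]
  negCof_eq := by
    rw [cofactorSum_adjCharMatrix_compl, sub_sub_cancel, hG.cof_eq, Profile.compl_s16]

theorem hasProfileAt_of_isEmpty [IsEmpty V] (G : SimpleGraph V) (t : ℕ) :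
    HasProfileAt G t ⟨1, 0, 1, 0⟩ := by
  constructor <;> simp [cofactorSum]

theorem hasProfileAt_of_unique [Unique V] (G : SimpleGraph V) (t : ℕ) :
    HasProfileAt G t ⟨t, 1, t + 1, 1⟩ := by
  constructor <;> simp [cofactorSum, adjCharMatrix, sub_eq_add_neg, ← Matrix.diagonal_natCast']

end HasProfileAt

namespace Cotree

/-- The profile of a cograph at `t`, correct if the graph has at most `t` vertices. -/
def profile (t : ℕ) : Cotree → Profile
  | empty => ⟨1, 0, 1, 0⟩
  | vertex => ⟨t, 1, t + 1, 1⟩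
  | union S T => (S.profile t).union (T.profile t)
  | compl_s16 T => (T.profile t).compl_s16

theorem bounded_profile {t : ℕ} {T : Cotree} (hT : T.size ≤ t) :
    (T.profile t).Bounded t T.size := by
  induction T with
  | empty => constructor <;> simp [profile, size]
  | vertex =>
    have ht : 0 < t := hT
    constructor <;> simp [profile, size, ht]
  | union S T hS hT' =>
    exact (hS ((Nat.le_add_right ..).trans hT)).union (hT' ((Nat.le_add_left ..).trans hT))
  | compl_s16 T ih => exact (ih hT).compl_s16 hT

theorem hasProfileAt {t : ℕ} {T : Cotree} (hT : T.size ≤ t) :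
    HasProfileAt T.graph t (T.profile t) := by
  induction T with
  | empty => exact hasProfileAt_of_isEmpty (V := Empty) ⊥ t
  | vertex => exact hasProfileAt_of_unique (V := Unit) ⊥ t
  | union S T hS hT' =>
    exact (hS ((Nat.le_add_right ..).trans hT)).sum_s16 (hT' ((Nat.le_add_left ..).trans hT))
  | compl_s16 T ih => exact (ih hT).compl_s16 ((bounded_profile (T := T) hT).negCof_lt hT).le

end Cotree

/-! ### Natural numbers as arrays of words -/

/-- The `i`-th digit of `X` in base `2 ^ w`: natural numbers serve as arrays of `w`-bit words. -/
def digit (w X i : ℕ) : ℕ :=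
  (X >>> (w * i)) % 2 ^ w

section Digits

variable {w X Y : ℕ}

theorem digit_eq_div_mod (w X i : ℕ) : digit w X i = X / (2 ^ w) ^ i % 2 ^ w := by
  rw [digit, Nat.shiftRight_eq_div_pow, pow_mul]

theorem digit_zero_right (w X : ℕ) : digit w X 0 = X % 2 ^ w := by
  simp [digit_eq_div_mod]

theorem digit_succ (w X i : ℕ) : digit w X (i + 1) = digit w (X / 2 ^ w) i := by
  rw [digit_eq_div_mod, digit_eq_div_mod, pow_succ', Nat.div_div_eq_div_mul]

@[simp] theorem digit_zero_left (w i : ℕ) : digit w 0 i = 0 := by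
  simp [digit]

theorem digit_lt (w X i : ℕ) : digit w X i < 2 ^ w :=
  Nat.mod_lt _ (by positivity)

theorem testBit_digit (w X i b : ℕ) :
    (digit w X i).testBit b = (decide (b < w) && X.testBit (w * i + b)) := by
  rw [digit, Nat.testBit_mod_two_pow, Nat.testBit_shiftRight]

theorem digit_and (w X Y i : ℕ) : digit w (X &&& Y) i = digit w X i &&& digit w Y i := by
  refine Nat.eq_of_testBit_eq fun b => ?_
  simp only [testBit_digit, Nat.testBit_and]
  cases decide (b < w) <;> simp

theorem digit_xor (w X Y i : ℕ) : digit w (X ^^^ Y) i = digit w X i ^^^ digit w Y i := by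
  refine Nat.eq_of_testBit_eq fun b => ?_
  simp only [testBit_digit, Nat.testBit_xor]
  cases decide (b < w) <;> simp

theorem digit_shiftRight (w X d i : ℕ) : digit w (X >>> (w * d)) i = digit w X (i + d) := by
  rw [digit, digit, ← Nat.shiftRight_add, Nat.mul_add, add_comm]

theorem digit_shiftLeft (w X d i : ℕ) :
    digit w (X <<< (w * d)) i = if d ≤ i then digit w X (i - d) else 0 := by
  refine Nat.eq_of_testBit_eq fun b => ?_
  rw [testBit_digit, Nat.testBit_shiftLeft]
  split_ifs with hdi
  · obtain ⟨j, rfl⟩ := Nat.exists_eq_add_of_le hdi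
    have hle : w * d ≤ w * (d + j) + b := by rw [Nat.mul_add]; lia
    have hsub : w * (d + j) + b - w * d = w * j + b := by rw [Nat.mul_add]; lia
    simp [testBit_digit, hle, hsub]
  · by_cases hb : b < w
    · have : w * (i + 1) ≤ w * d := Nat.mul_le_mul_left w (by lia)
      have : ¬ w * d ≤ w * i + b := by rw [Nat.mul_add] at this; lia
      simp [this]
    · simp [hb]

theorem digit_add (h : ∀ i, digit w X i + digit w Y i < 2 ^ w) (i : ℕ) :
    digit w (X + Y) i = digit w X i + digit w Y i := by
  induction i generalizing X Y with
  | zero =>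
    specialize h 0
    simp only [digit_zero_right] at h ⊢
    rw [Nat.add_mod, Nat.mod_eq_of_lt h]
  | succ i ih =>
    have h0 := h 0
    simp only [digit_zero_right] at h0
    rw [digit_succ, Nat.add_div_eq_of_add_mod_lt h0,
      ih fun j => by simpa only [digit_succ] using h (j + 1), digit_succ, digit_succ]

theorem digit_const_mul {c : ℕ} (h : ∀ i, c * digit w X i < 2 ^ w) (i : ℕ) :
    digit w (c * X) i = c * digit w X i := by
  induction i generalizing X with
  | zero =>
    specialize h 0
    simp only [digit_zero_right] at h ⊢
    rw [← Nat.mul_mod_mod, Nat.mod_eq_of_lt h]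
  | succ i ih =>
    have h0 := h 0
    rw [digit_zero_right] at h0
    have hdiv : c * X / 2 ^ w = c * (X / 2 ^ w) := by
      conv_lhs => rw [← Nat.div_add_mod X (2 ^ w), mul_add, mul_left_comm]
      rw [Nat.mul_add_div (by positivity), Nat.div_eq_of_lt h0, add_zero]
    rw [digit_succ, digit_succ, hdiv, ih fun j => by simpa only [digit_succ] using h (j + 1)]

theorem le_of_digit_le (hw : w ≠ 0) (h : ∀ i, digit w X i ≤ digit w Y i) : X ≤ Y := by
  induction X using Nat.strong_induction_on generalizing Y with
  | _ X ih =>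
    rcases X.eq_zero_or_pos with rfl | hX
    · exact Y.zero_le
    have hdiv : X / 2 ^ w ≤ Y / 2 ^ w :=
      ih _ (Nat.div_lt_self hX (Nat.one_lt_two_pow hw)) fun i => by
        simpa only [digit_succ] using h (i + 1)
    have hmod : X % 2 ^ w ≤ Y % 2 ^ w := by simpa only [digit_zero_right] using h 0
    rw [← Nat.div_add_mod X (2 ^ w), ← Nat.div_add_mod Y (2 ^ w)]
    gcongr

theorem sub_eq_mod_sub_mod_add (hw : w ≠ 0) (h : ∀ i, digit w Y i ≤ digit w X i) :
    X - Y = (X % 2 ^ w - Y % 2 ^ w) + 2 ^ w * (X / 2 ^ w - Y / 2 ^ w) := by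
  have hmod : Y % 2 ^ w ≤ X % 2 ^ w := by simpa only [digit_zero_right] using h 0
  have hdiv : Y / 2 ^ w ≤ X / 2 ^ w :=
    le_of_digit_le hw fun i => by simpa only [digit_succ] using h (i + 1)
  have hX := Nat.div_add_mod X (2 ^ w)
  have hY := Nat.div_add_mod Y (2 ^ w)
  have hmul := Nat.mul_le_mul_left (2 ^ w) hdiv
  rw [Nat.mul_sub]
  lia

theorem digit_sub (hw : w ≠ 0) (h : ∀ i, digit w Y i ≤ digit w X i) (i : ℕ) :
    digit w (X - Y) i = digit w X i - digit w Y i := by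
  induction i generalizing X Y with
  | zero =>
    rw [sub_eq_mod_sub_mod_add hw h]
    simp only [digit_zero_right, Nat.add_mul_mod_self_left]
    exact Nat.mod_eq_of_lt ((Nat.sub_le _ _).trans_lt (Nat.mod_lt _ (by positivity)))
  | succ i ih =>
    have hlt : X % 2 ^ w - Y % 2 ^ w < 2 ^ w :=
      (Nat.sub_le _ _).trans_lt (Nat.mod_lt _ (by positivity))
    rw [sub_eq_mod_sub_mod_add hw h, digit_succ, Nat.add_mul_div_left _ _ (by positivity),
      Nat.div_eq_of_lt hlt, zero_add, ih fun j => by simpa only [digit_succ] using h (j + 1),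
      digit_succ, digit_succ]

end Digits

/-! ### Sorting networks -/

/-- The number whose `n` lowest digits in base `2 ^ L` are `1` and whose other digits are `0`. -/
def ones (L n : ℕ) : ℕ :=
  (2 ^ (L * n) - 1) / (2 ^ L - 1)

theorem digit_ones {L : ℕ} (hL : L ≠ 0) (n i : ℕ) :
    digit L (ones L n) i = if i < n then 1 else 0 := by
  have hgeom (n : ℕ) : ones L n = ∑ k ∈ Finset.range n, (2 ^ L) ^ k := by
    rw [ones, Nat.geomSum_eq (Nat.one_lt_two_pow hL), pow_mul]
  have hone : 1 < 2 ^ L := Nat.one_lt_two_pow hL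
  have hsucc (n : ℕ) : ones L (n + 1) = 1 + 2 ^ L * ones L n := by
    rw [hgeom, hgeom, Finset.sum_range_succ', add_comm, Finset.mul_sum]
    simp only [pow_zero, pow_succ']
  induction n generalizing i with
  | zero => simp [hgeom]
  | succ n ih =>
    rw [hsucc]
    cases i with
    | zero => simp [digit_zero_right, Nat.mod_eq_of_lt hone]
    | succ i =>
      rw [digit_succ, Nat.add_mul_div_left _ _ (by positivity), Nat.div_eq_of_lt hone, zero_add,
        ih]
      simp

/-- `X` is an array of `n` words of `w` bits, stored in digits of `w + 1` bits whose top bit is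
left free to absorb borrows. -/
structure Guarded (w n X : ℕ) : Prop where
  digit_lt : ∀ i, digit (w + 1) X i < 2 ^ w
  digit_eq_zero : ∀ i, n ≤ i → digit (w + 1) X i = 0

/-- The digitwise difference `X - Y` with the guard bits of the `n` lowest digits preset, so that
no borrow crosses a digit; a guard bit survives iff the digit of `Y` is at most that of `X`. -/
def guardedSub (w n X Y : ℕ) : ℕ :=
  X + 2 ^ w * ones (w + 1) n - Y

/-- The guard bits of `D` selected by the mask `m`, moved to the lowest bit of each digit. -/
def guardBits (w D m : ℕ) : ℕ :=
  D >>> w &&& m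

section Guarded

variable {w n X Y : ℕ}

theorem Guarded.lt_of_digit_pos (hX : Guarded w n X) {i : ℕ} (hi : 0 < digit (w + 1) X i) :
    i < n := by
  by_contra! hni
  exact hi.ne' (hX.digit_eq_zero i hni)

theorem Guarded.shiftRight (hX : Guarded w n X) (d : ℕ) :
    Guarded w n (X >>> ((w + 1) * d)) where
  digit_lt i := by rw [digit_shiftRight]; exact hX.digit_lt _
  digit_eq_zero i hi := by rw [digit_shiftRight]; exact hX.digit_eq_zero _ (by lia)

theorem digit_guardedSub (hX : Guarded w n X) (hY : Guarded w n Y) (i : ℕ) :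
    digit (w + 1) (guardedSub w n X Y) i =
      digit (w + 1) X i + (if i < n then 2 ^ w else 0) - digit (w + 1) Y i := by
  have hguard (i : ℕ) :
      digit (w + 1) (2 ^ w * ones (w + 1) n) i = if i < n then 2 ^ w else 0 := by
    rw [digit_const_mul, digit_ones w.succ_ne_zero, mul_ite, mul_one, mul_zero]
    intro j
    have := Nat.two_pow_pos w
    rw [digit_ones w.succ_ne_zero, pow_succ]
    split_ifs <;> lia
  have hadd (i : ℕ) : digit (w + 1) (X + 2 ^ w * ones (w + 1) n) i =
      digit (w + 1) X i + if i < n then 2 ^ w else 0 := by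
    rw [digit_add, hguard]
    intro j
    have := hX.digit_lt j
    rw [hguard, pow_succ]
    split_ifs <;> lia
  rw [guardedSub, digit_sub w.succ_ne_zero, hadd]
  intro j
  rw [hadd]
  have := hY.digit_lt j
  have := hY.digit_eq_zero j
  split_ifs <;> lia

theorem digit_guardBits {D m i : ℕ} (hm : digit (w + 1) m i ≤ 1) :
    digit (w + 1) (guardBits w D m) i =
      if digit (w + 1) m i = 1 ∧ 2 ^ w ≤ digit (w + 1) D i then 1 else 0 := by
  have htop : digit (w + 1) (D >>> w) i % 2 = digit (w + 1) D i / 2 ^ w := by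
    have hlt : digit (w + 1) D i / 2 ^ w < 2 := by
      rw [Nat.div_lt_iff_lt_mul (by positivity), ← pow_succ']
      exact digit_lt _ _ _
    have hbit : (digit (w + 1) (D >>> w) i).testBit 0 = (digit (w + 1) D i).testBit w := by
      simp [testBit_digit, add_comm, -Nat.testBit_zero]
    rw [← Nat.mod_eq_of_lt hlt]
    rw [Nat.testBit_eq_decide_div_mod_eq, Nat.testBit_eq_decide_div_mod_eq, pow_zero, Nat.div_one,
      decide_eq_decide] at hbit
    lia
  rw [guardBits, digit_and]
  interval_cases digit (w + 1) m i
  · simp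
  · rw [Nat.and_one_is_mod, htop]
    have := digit_lt (w + 1) D i
    rw [pow_succ] at this
    split_ifs with h
    · exact Nat.div_eq_of_lt_le (by lia) (by lia)
    · exact Nat.div_eq_of_lt (by lia)

theorem digit_succ_lt_of_guardBits_eq_zero (hX : Guarded w n X)
    (h : guardBits w (guardedSub w n (X >>> (w + 1)) X) (ones (w + 1) n) = 0) {i : ℕ}
    (hi : i < n) : digit (w + 1) X (i + 1) < digit (w + 1) X i := by
  have hdigit := congrArg (digit (w + 1) · i) h
  have hmask : digit (w + 1) (ones (w + 1) n) i = 1 := by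
    rw [digit_ones w.succ_ne_zero, if_pos hi]
  have hshift := hX.shiftRight 1
  have hnext := digit_shiftRight (w + 1) X 1 i
  rw [mul_one] at hshift hnext
  simp only [digit_guardBits hmask.le, hmask, digit_guardedSub hshift hX, hnext, if_pos hi,
    digit_zero_left] at hdigit
  split_ifs at hdigit with hle
  lia

end Guarded

/-- The words of the array `Y` are those of `X` up to a permutation of the `n` lowest positions. -/
def Rearranges (L n X Y : ℕ) : Prop :=
  ∃ τ : Equiv.Perm ℕ, (∀ i, τ i < n ↔ i < n) ∧ ∀ i, digit L Y i = digit L X (τ i)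

section Rearranges

variable {L n X Y Z : ℕ}

theorem Rearranges.refl (L n X : ℕ) : Rearranges L n X X :=
  ⟨1, fun _ => Iff.rfl, fun _ => rfl⟩

theorem Rearranges.trans : Rearranges L n X Y → Rearranges L n Y Z → Rearranges L n X Z
  | ⟨σ, hσ, hXY⟩, ⟨τ, hτ, hYZ⟩ =>
    ⟨σ * τ, fun i => (hσ (τ i)).trans (hτ i), fun i => (hYZ i).trans (hXY (τ i))⟩

theorem Rearranges.guarded {w : ℕ} (h : Rearranges (w + 1) n X Y) (hX : Guarded w n X) :
    Guarded w n Y := by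
  obtain ⟨τ, hτ, hXY⟩ := h
  exact ⟨fun i => hXY i ▸ hX.digit_lt _,
    fun i hi => hXY i ▸ hX.digit_eq_zero _ (not_lt.mp fun h => ((hτ i).mp h).not_ge hi)⟩

theorem Rearranges.injOn (h : Rearranges L n X Y) (hY : Set.InjOn (digit L Y) (Set.Iio n)) :
    Set.InjOn (digit L X) (Set.Iio n) := by
  obtain ⟨τ, hτ, hXY⟩ := h
  intro i hi j hj hij
  have hτsymm (i : ℕ) (hi : i < n) : τ.symm i < n := by rwa [← hτ, Equiv.apply_symm_apply]
  refine τ.symm.injective (hY (hτsymm i hi) (hτsymm j hj) ?_)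
  simpa only [hXY, Equiv.apply_symm_apply] using hij

theorem Rearranges.digit_pos (h : Rearranges L n X Y) (hY : ∀ i < n, 0 < digit L Y i) :
    ∀ i < n, 0 < digit L X i := by
  obtain ⟨τ, hτ, hXY⟩ := h
  intro i hi
  have := hY (τ.symm i) (by rwa [← hτ, Equiv.apply_symm_apply])
  simpa only [hXY, Equiv.apply_symm_apply] using this

end Rearranges

/-- The words to be added at the lower ends of the comparators that join each position `i` selected
by the mask `m` to `i + d`, and subtracted at the upper ends, to bring the larger words down. -/
def swapAmount (w n m d X : ℕ) : ℕ :=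
  let D := guardedSub w n (X >>> ((w + 1) * d)) X
  D &&& (2 ^ w - 1) * guardBits w D m

/-- One layer of a sorting network, with comparators that join each position `i` selected by the
mask `m` to `i + d` and bring the larger word down. Nothing happens if they overlap. -/
def compareExchange (w n m d X : ℕ) : ℕ :=
  bif Nat.beq (m &&& m <<< ((w + 1) * d)) 0 then
    X + swapAmount w n m d X - swapAmount w n m d X <<< ((w + 1) * d)
  else X

section CompareExchange

variable {w n m d X : ℕ}

theorem digit_swapAmount (hX : Guarded w n X) (hm : ∀ i, digit (w + 1) m i ≤ 1) (i : ℕ) :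
    digit (w + 1) (swapAmount w n m d X) i =
      if digit (w + 1) m i = 1 then digit (w + 1) X (i + d) - digit (w + 1) X i else 0 := by
  set D := guardedSub w n (X >>> ((w + 1) * d)) X with hDX
  have hD : digit (w + 1) D i =
      digit (w + 1) X (i + d) + (if i < n then 2 ^ w else 0) - digit (w + 1) X i := by
    rw [digit_guardedSub (hX.shiftRight d) hX, digit_shiftRight]
  have hspread : digit (w + 1) ((2 ^ w - 1) * guardBits w D m) i =
      if digit (w + 1) m i = 1 ∧ 2 ^ w ≤ digit (w + 1) D i then 2 ^ w - 1 else 0 := by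
    rw [digit_const_mul, digit_guardBits (hm i), mul_ite, mul_one, mul_zero]
    intro j
    have := Nat.two_pow_pos w
    rw [digit_guardBits (hm j), pow_succ]
    split_ifs <;> lia
  have hlt := hX.digit_lt (i + d)
  have hlt' := hX.digit_lt i
  rw [swapAmount, ← hDX, digit_and, hspread]
  by_cases hmi : digit (w + 1) m i = 1
  · have hzero := hX.digit_eq_zero (i + d)
    have hzero' := hX.digit_eq_zero i
    by_cases hle : 2 ^ w ≤ digit (w + 1) D i
    · rw [if_pos ⟨hmi, hle⟩, if_pos hmi, Nat.and_two_pow_sub_one_eq_mod]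
      rw [hD] at hle ⊢
      split_ifs at hle ⊢
      · rw [Nat.sub_add_comm (by lia), Nat.add_mod_right, Nat.mod_eq_of_lt (by lia)]
      · lia
    · rw [if_neg (fun h => hle h.2), if_pos hmi, Nat.and_zero]
      rw [hD] at hle
      split_ifs at hle <;> lia
  · simp [hmi]

theorem digit_swapAmount_shiftLeft (hX : Guarded w n X) (hm : ∀ i, digit (w + 1) m i ≤ 1)
    (i : ℕ) :
    digit (w + 1) (swapAmount w n m d X <<< ((w + 1) * d)) i =
      if d ≤ i ∧ digit (w + 1) m (i - d) = 1 then
        digit (w + 1) X i - digit (w + 1) X (i - d) else 0 := by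
  rw [digit_shiftLeft, digit_swapAmount hX hm]
  by_cases hdi : d ≤ i
  · simp only [hdi, if_true, true_and, Nat.sub_add_cancel]
  · simp only [hdi, if_false, false_and]

theorem digit_add_swapAmount (hX : Guarded w n X) (hm : ∀ i, digit (w + 1) m i ≤ 1) (i : ℕ) :
    digit (w + 1) (X + swapAmount w n m d X) i =
      digit (w + 1) X i +
        if digit (w + 1) m i = 1 then digit (w + 1) X (i + d) - digit (w + 1) X i else 0 := by
  rw [digit_add, digit_swapAmount hX hm]
  intro j
  have := hX.digit_lt j
  have := hX.digit_lt (j + d)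
  rw [digit_swapAmount hX hm, pow_succ]
  split_ifs <;> lia

/-- The positions at which a layer exchanges the words at `i` and `i + d`. -/
def Swaps (w m d X i : ℕ) : Prop :=
  digit (w + 1) m i = 1 ∧ digit (w + 1) X i < digit (w + 1) X (i + d)

open Classical in
/-- The involution of the positions performed by one layer of a sorting network. -/
noncomputable def swapIndex (w m d X i : ℕ) : ℕ :=
  if Swaps w m d X i then i + d
  else if d ≤ i ∧ Swaps w m d X (i - d) then i - d
  else i

theorem swapIndex_involutive
    (hdisj : ∀ i, d ≤ i → digit (w + 1) m i = 1 → digit (w + 1) m (i - d) ≠ 1) :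
    Function.Involutive (swapIndex w m d X) := by
  have hswap (i : ℕ) (h : Swaps w m d X i) : ¬ Swaps w m d X (i + d) := fun h' =>
    hdisj (i + d) (by lia) h'.1 (by simpa using h.1)
  intro i
  unfold swapIndex
  by_cases hi : Swaps w m d X i
  · simp [hi, hswap i hi]
  · by_cases hid : d ≤ i ∧ Swaps w m d X (i - d)
    · simp [hi, hid, Nat.sub_add_cancel hid.1]
    · simp [hi, hid]

theorem swapIndex_lt_iff (hX : Guarded w n X) (i : ℕ) : swapIndex w m d X i < n ↔ i < n := by
  have hlt (i : ℕ) (h : Swaps w m d X i) : i + d < n := hX.lt_of_digit_pos (by have := h.2; lia)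
  unfold swapIndex
  split_ifs with h h'
  · have := hlt i h; lia
  · have := hlt _ h'.2; lia
  · rfl

theorem digit_swap (hX : Guarded w n X) (hm : ∀ i, digit (w + 1) m i ≤ 1)
    (hdisj : ∀ i, d ≤ i → digit (w + 1) m i = 1 → digit (w + 1) m (i - d) ≠ 1) (i : ℕ) :
    digit (w + 1) (X + swapAmount w n m d X - swapAmount w n m d X <<< ((w + 1) * d)) i =
      digit (w + 1) X (swapIndex w m d X i) := by
  have hle (j : ℕ) : digit (w + 1) (swapAmount w n m d X <<< ((w + 1) * d)) j ≤
      digit (w + 1) (X + swapAmount w n m d X) j := by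
    rw [digit_add_swapAmount hX hm, digit_swapAmount_shiftLeft hX hm]
    split_ifs <;> lia
  rw [digit_sub w.succ_ne_zero hle, digit_add_swapAmount hX hm, digit_swapAmount_shiftLeft hX hm]
  unfold swapIndex Swaps
  by_cases hi : digit (w + 1) m i = 1
  · have hprev : ¬ (d ≤ i ∧ digit (w + 1) m (i - d) = 1) := fun h => hdisj i h.1 hi h.2
    have hprev' : ¬ (d ≤ i ∧ digit (w + 1) m (i - d) = 1 ∧
        digit (w + 1) X (i - d) < digit (w + 1) X (i - d + d)) := fun h => hprev ⟨h.1, h.2.1⟩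
    simp only [hi, hprev, hprev', if_true, if_false, true_and]
    split_ifs <;> lia
  · by_cases hprev : d ≤ i ∧ digit (w + 1) m (i - d) = 1
    · simp only [hi, hprev, Nat.sub_add_cancel hprev.1, false_and, true_and, and_self, if_true,
        if_false]
      split_ifs <;> lia
    · have hprev' : ¬ (d ≤ i ∧ digit (w + 1) m (i - d) = 1 ∧
          digit (w + 1) X (i - d) < digit (w + 1) X (i - d + d)) := fun h => hprev ⟨h.1, h.2.1⟩
      simp only [hi, hprev, hprev', false_and, if_false]
      lia

theorem compareExchange_rearranges (hX : Guarded w n X) (hm : ∀ i, digit (w + 1) m i ≤ 1) :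
    Rearranges (w + 1) n X (compareExchange w n m d X) := by
  rw [compareExchange]
  cases hbeq : Nat.beq (m &&& m <<< ((w + 1) * d)) 0
  · exact .refl _ _ _
  have hdisj (i : ℕ) (hdi : d ≤ i) (hi : digit (w + 1) m i = 1) :
      digit (w + 1) m (i - d) ≠ 1 := fun hid => by
    have := congrArg (digit (w + 1) · i) (Nat.eq_of_beq_eq_true hbeq)
    simp [digit_and, digit_shiftLeft, hdi, hi, hid] at this
  refine ⟨(swapIndex_involutive (X := X) hdisj).toPerm, swapIndex_lt_iff hX, fun i => ?_⟩
  simp only [cond_true, Function.Involutive.coe_toPerm]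
  exact digit_swap hX hm hdisj i

end CompareExchange

/-- The last layers of Batcher's odd-even merge, with comparators at the distances
`2 ^ (zs.length - 1)`, …, `2`, `1`. The list `zs` holds the masks of the positions whose binary
digit of the corresponding weight is `1`, and `A` marks those whose digits treated so far are all
`1`. -/
def oddEvenMerge (w n : ℕ) : List ℕ → ℕ → ℕ → ℕ
  | [], _, X => X
  | z :: zs, A, X =>
    oddEvenMerge w n zs (A &&& z)
      (compareExchange w n ((z - (A &&& z)) &&& ones (w + 1) n) (2 ^ zs.length) X)

/-- Batcher's odd-even merge sort of the first `n` words into descending order. The list `zs` holds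
the masks of the positions whose binary digit of weight `2 ^ (zs.length - 1)`, …, `2`, `1` is `1`.
-/
def oddEvenSort (w n : ℕ) : List ℕ → ℕ → ℕ
  | [], X => X
  | z :: zs, X =>
    oddEvenMerge w n zs z
      (compareExchange w n ((ones (w + 1) n - z) &&& ones (w + 1) n) (2 ^ zs.length)
        (oddEvenSort w n zs X))

section OddEvenSort

variable {w n X : ℕ}

theorem digit_and_ones_le (w n m i : ℕ) : digit (w + 1) (m &&& ones (w + 1) n) i ≤ 1 := by
  rw [digit_and, digit_ones w.succ_ne_zero]
  split_ifs
  exacts [Nat.and_le_right, by simp]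

theorem oddEvenMerge_rearranges (zs : List ℕ) (A : ℕ) (hX : Guarded w n X) :
    Rearranges (w + 1) n X (oddEvenMerge w n zs A X) := by
  induction zs generalizing A X with
  | nil => exact .refl _ _ _
  | cons z zs ih =>
    have hlayer := compareExchange_rearranges (m := (z - (A &&& z)) &&& ones (w + 1) n)
      (d := 2 ^ zs.length) hX fun i => digit_and_ones_le ..
    exact hlayer.trans (ih _ (hlayer.guarded hX))

theorem oddEvenSort_rearranges (zs : List ℕ) (hX : Guarded w n X) :
    Rearranges (w + 1) n X (oddEvenSort w n zs X) := by
  induction zs with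
  | nil => exact .refl _ _ _
  | cons z zs ih =>
    have hlayer := compareExchange_rearranges (m := (ones (w + 1) n - z) &&& ones (w + 1) n)
      (d := 2 ^ zs.length) (ih.guarded hX) fun i => digit_and_ones_le ..
    exact (ih.trans hlayer).trans (oddEvenMerge_rearranges zs z (hlayer.guarded (ih.guarded hX)))

/-- Whether the `n` words of `X` strictly decrease to a positive one. -/
def isDescending (w n X : ℕ) : Bool :=
  Nat.beq (guardBits w (guardedSub w n (X >>> (w + 1)) X) (ones (w + 1) n)) 0

theorem digit_strictAntiOn_of_isDescending (hX : Guarded w n X) (h : isDescending w n X) :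
    StrictAntiOn (digit (w + 1) X) (Set.Iic n) := by
  refine strictAntiOn_of_succ_lt Set.ordConnected_Iic fun i _ _ hi => ?_
  exact digit_succ_lt_of_guardBits_eq_zero hX (Nat.eq_of_beq_eq_true h) (Nat.lt_of_succ_le hi)

theorem injOn_digit_of_isDescending_sort {zs : List ℕ} (hX : Guarded w n X)
    (h : isDescending w n (oddEvenSort w n zs X)) :
    Set.InjOn (digit (w + 1) X) (Set.Iio n) := by
  have hsort := oddEvenSort_rearranges zs hX
  exact hsort.injOn <|
    (digit_strictAntiOn_of_isDescending (hsort.guarded hX) h).injOn.mono Set.Iio_subset_Iic_self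

theorem digit_pos_of_isDescending_sort {zs : List ℕ} (hX : Guarded w n X)
    (h : isDescending w n (oddEvenSort w n zs X)) {i : ℕ} (hi : i < n) :
    0 < digit (w + 1) X i := by
  have hsort := oddEvenSort_rearranges zs hX
  have hanti := digit_strictAntiOn_of_isDescending (hsort.guarded hX) h
  exact hsort.digit_pos (fun j hj =>
    (Nat.zero_le _).trans_lt (hanti (le_of_lt hj) (le_refl n) hj)) i hi

end OddEvenSort

/-- The number with words of length `L`, equal to `1` at the positions less than `2 ^ k` whose
binary digit `e` is `1` and to `0` elsewhere. -/
def bitMask (L e : ℕ) : ℕ → ℕ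
  | 0 => 0
  | k + 1 =>
    bitMask L e k + (bif Nat.beq k e then ones L (2 ^ k) else bitMask L e k) <<< (L * 2 ^ k)

/-- The masks with which `oddEvenSort` sorts `n ≤ 2 ^ k` words. -/
def sortMasks (w n k : ℕ) : List ℕ :=
  (List.range k).reverse.map fun e => bitMask (w + 1) e k &&& ones (w + 1) n

/-! ### Enumeration of cographs -/

section OfDigits

variable {α : Type*} {w : ℕ}

theorem digit_ofDigits {l : List ℕ} (hl : ∀ x ∈ l, x < 2 ^ w) (i : ℕ) :
    digit w (Nat.ofDigits (2 ^ w) l) i = l.getD i 0 := by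
  induction l generalizing i with
  | nil => simp
  | cons x l ih =>
    rw [List.forall_mem_cons] at hl
    rw [Nat.ofDigits_cons]
    cases i with
    | zero => simp [digit_zero_right, Nat.mod_eq_of_lt hl.1]
    | succ i =>
      simp [digit_succ, Nat.add_mul_div_left _ _ (Nat.two_pow_pos w), Nat.div_eq_of_lt hl.1,
        ih hl.2]

theorem ofDigits_map_add (b : ℕ) (f g : α → ℕ) (l : List α) :
    Nat.ofDigits b (l.map fun x => f x + g x) =
      Nat.ofDigits b (l.map f) + Nat.ofDigits b (l.map g) := by
  induction l with
  | nil => rfl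
  | cons x l ih => simp only [List.map_cons, Nat.ofDigits_cons, ih]; ring

theorem ofDigits_map_sub (b : ℕ) {f g : α → ℕ} {l : List α} (h : ∀ x ∈ l, g x ≤ f x) :
    Nat.ofDigits b (l.map fun x => f x - g x) =
      Nat.ofDigits b (l.map f) - Nat.ofDigits b (l.map g) := by
  refine Nat.eq_sub_of_add_eq ?_
  rw [← ofDigits_map_add]
  exact congrArg _ (List.map_congr_left fun x hx => Nat.sub_add_cancel (h x hx))

theorem ofDigits_map_const_mul (b c : ℕ) (f : α → ℕ) (l : List α) :
    Nat.ofDigits b (l.map fun x => c * f x) = c * Nat.ofDigits b (l.map f) := by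
  rw [Nat.mul_ofDigits, List.map_map]
  rfl

end OfDigits

/-- A list of profiles stored in four numbers, each packing one of the components of the profiles
into words, so that all the profiles are combined or complemented by a few operations on numbers. -/
structure PackedList where
  length : ℕ
  packed : Profile

namespace PackedList

/-- The empty list. -/
def nil : PackedList :=
  ⟨0, 0, 0, 0, 0⟩

/-- Concatenation of packed lists with words of length `L`. -/
def append (L : ℕ) (P Q : PackedList) : PackedList where
  length := P.length + Q.length
  packed :=
    { det := P.packed.det + Q.packed.det <<< (L * P.length)
      cof := P.packed.cof + Q.packed.cof <<< (L * P.length)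
      negDet := P.packed.negDet + Q.packed.negDet <<< (L * P.length)
      negCof := P.packed.negCof + Q.packed.negCof <<< (L * P.length) }

/-- The profiles of the unions of a fixed graph with the graphs of a list. -/
def mapUnion (x : Profile) (P : PackedList) : PackedList :=
  ⟨P.length, x.union P.packed⟩

/-- The profiles of the complements of the graphs of a list. -/
def mapCompl (P : PackedList) : PackedList :=
  ⟨P.length, P.packed.compl_s16⟩

/-- The list of profiles stored by a packed list with words of length `L`. -/
def toList (L : ℕ) (P : PackedList) : List Profile :=
  (List.range P.length).map fun i =>
    ⟨digit L P.packed.det i, digit L P.packed.cof i, digit L P.packed.negDet i,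
      digit L P.packed.negCof i⟩

/-- The profiles of the unions of the graphs of two lists. -/
def unions (L : ℕ) (l : List Profile) (P : PackedList) : PackedList :=
  l.foldr (fun x Q => append L (P.mapUnion x) Q) nil

/-- The packed list of the profiles at `t` of a list of cographs. -/
def ofCotrees (L t : ℕ) (l : List Cotree) : PackedList where
  length := l.length
  packed :=
    { det := Nat.ofDigits (2 ^ L) (l.map fun T => (T.profile t).det)
      cof := Nat.ofDigits (2 ^ L) (l.map fun T => (T.profile t).cof)
      negDet := Nat.ofDigits (2 ^ L) (l.map fun T => (T.profile t).negDet)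
      negCof := Nat.ofDigits (2 ^ L) (l.map fun T => (T.profile t).negCof) }

section OfCotrees

variable {L t : ℕ} {l l' : List Cotree}

theorem ofCotrees_append :
    ofCotrees L t (l ++ l') = (ofCotrees L t l).append L (ofCotrees L t l') := by
  simp [ofCotrees, append, Nat.ofDigits_append, Nat.shiftLeft_eq, pow_mul, mul_comm]

theorem ofCotrees_map_union (T : Cotree) :
    ofCotrees L t (l.map (T.union ·)) = (ofCotrees L t l).mapUnion (T.profile t) := by
  simp [ofCotrees, mapUnion, Profile.union, Cotree.profile, Function.comp_def, ofDigits_map_add,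
    ofDigits_map_const_mul]

theorem ofCotrees_map_compl (hl : ∀ T ∈ l, T.size ≤ t) :
    ofCotrees L t (l.map Cotree.compl_s16) = (ofCotrees L t l).mapCompl := by
  have hsub := ofDigits_map_sub (2 ^ L) (l := l) (f := fun T => (T.profile t).negDet)
    (g := fun T => (T.profile t).negCof)
    fun T hT => ((Cotree.bounded_profile (hl T hT)).negCof_lt (hl T hT)).le
  simp [ofCotrees, mapCompl, Profile.compl_s16, Cotree.profile, Function.comp_def, ofDigits_map_add,
    hsub]

theorem ofCotrees_unions :
    ofCotrees L t (l.flatMap fun T => l'.map (T.union ·)) =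
      unions L (l.map (Cotree.profile t)) (ofCotrees L t l') := by
  induction l with
  | nil => rfl
  | cons T l ih =>
    rw [List.flatMap_cons, ofCotrees_append, ofCotrees_map_union, ih]
    rfl

theorem toList_ofCotrees {m : ℕ} (hl : ∀ T ∈ l, T.size = m) (hmt : m ≤ t)
    (hL : (t + 1) ^ m < 2 ^ L) :
    (ofCotrees L t l).toList L = l.map (Cotree.profile t) := by
  have hlt : ∀ T ∈ l, (T.profile t).det + (T.profile t).cof < 2 ^ L ∧
      (T.profile t).negDet < 2 ^ L ∧ (T.profile t).negCof < 2 ^ L := fun T hT => by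
    have hb := Cotree.bounded_profile (hl T hT ▸ hmt : T.size ≤ t)
    have hcof := hb.negCof_lt (hl T hT ▸ hmt)
    rw [hl T hT] at hb
    exact ⟨hb.det_add_cof_le.trans_lt hL, hb.negDet_le.trans_lt hL,
      hcof.trans (hb.negDet_le.trans_lt hL)⟩
  have hdigit {f : Cotree → ℕ} (hf : ∀ T ∈ l, f T < 2 ^ L) (i : ℕ) (hi : i < l.length) :
      digit L (Nat.ofDigits (2 ^ L) (l.map f)) i = f l[i] := by
    rw [digit_ofDigits (by simpa using hf), List.getD_eq_getElem _ _ (by simpa using hi),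
      List.getElem_map]
  refine List.ext_getElem (by simp [toList, ofCotrees]) fun i _ hi => ?_
  rw [List.length_map] at hi
  simp only [toList, ofCotrees, List.getElem_map, List.getElem_range]
  rw [hdigit (fun T hT => (Nat.le_add_right ..).trans_lt (hlt T hT).1) i hi,
    hdigit (fun T hT => (Nat.le_add_left ..).trans_lt (hlt T hT).1) i hi,
    hdigit (fun T hT => (hlt T hT).2.1) i hi, hdigit (fun T hT => (hlt T hT).2.2) i hi]

end OfCotrees

end PackedList

namespace Cotree

theorem sum_iso_union_of_mem {T : Cotree} {s : List Cotree} (hT : T ∈ s) :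
    ∃ s' : List Cotree, (∀ S ∈ s', S ∈ s) ∧ (sum_s16 s).Iso (T.union (sum_s16 s')) := by
  obtain ⟨a, b, rfl⟩ := List.append_of_mem hT
  exact ⟨a ++ b, fun S hS => by simp only [List.mem_append, List.mem_cons] at hS ⊢; tauto,
    sum_perm List.perm_middle⟩

/-- Up to isomorphism, `l` contains all disjoint unions with `m` vertices of graphs in `C`. -/
structure ListsSums (C : Set Cotree) (m : ℕ) (l : List Cotree) : Prop where
  size_eq : ∀ T ∈ l, T.size = m
  exists_iso : ∀ s : List Cotree, (∀ T ∈ s, T ∈ C) → (sum_s16 s).size = m → ∃ T ∈ l, (sum_s16 s).Iso T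

/-- Every cograph with at most `j` vertices is a disjoint union of graphs in `C`. -/
def Covers (C : Set Cotree) (j : ℕ) : Prop :=
  ∀ T : Cotree, T.size ≤ j → ∃ s : List Cotree, (∀ S ∈ s, S ∈ C) ∧ T.Iso (sum_s16 s)

section ListsSums

variable {C C' : Set Cotree} {m j : ℕ} {l l' S : List Cotree} {T : Cotree}

theorem ListsSums.mono (h : ListsSums C m l) (hC : ∀ T ∈ C', T ∉ C → m < T.size) :
    ListsSums C' m l := by
  refine ⟨h.size_eq, fun s hs hm => h.exists_iso s (fun T hT => ?_) hm⟩
  by_contra hTC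
  obtain ⟨s', -, hiso⟩ := sum_iso_union_of_mem hT
  have hsize := hiso.size_eq
  have := hC T (hs T hT) hTC
  rw [size] at hsize
  lia

theorem ListsSums.insert (h : ListsSums C (m + T.size) l) (h' : ListsSums (insert T C) m l') :
    ListsSums (insert T C) (m + T.size) (l ++ l'.map (T.union ·)) := by
  refine ⟨fun S hS => ?_, fun s hs hm => ?_⟩
  · obtain hS | hS := List.mem_append.mp hS
    · exact h.size_eq S hS
    · obtain ⟨S', hS', rfl⟩ := List.mem_map.mp hS
      rw [size, h'.size_eq S' hS', add_comm]
  · by_cases hT : T ∈ s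
    · obtain ⟨s', hs', hiso⟩ := sum_iso_union_of_mem hT
      have hsize := hiso.size_eq
      rw [size] at hsize
      obtain ⟨S, hS, hSiso⟩ := h'.exists_iso s' (fun S hS => hs S (hs' S hS)) (by lia)
      exact ⟨T.union S, List.mem_append_right _ (List.mem_map_of_mem hS),
        hiso.trans ((Iso.refl T).union hSiso)⟩
    · obtain ⟨S, hS, hiso⟩ := h.exists_iso s
        (fun S hS => (hs S hS).resolve_left (ne_of_mem_of_not_mem hS hT)) hm
      exact ⟨S, List.mem_append_left _ hS, hiso⟩

theorem ListsSums.union_of_lt (h : ListsSums C (m + j) l) (h' : ListsSums C m l')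
    (hS : ∀ T ∈ S, T.size = j) (hm : m < j) :
    ListsSums (C ∪ {T | T ∈ S}) (m + j) (l ++ l'.flatMap fun T => S.map (T.union ·)) := by
  have h'S : ListsSums (C ∪ {T | T ∈ S}) m l' :=
    h'.mono fun T hT hTC => (hS T (hT.resolve_left hTC)).symm ▸ hm
  refine ⟨fun T hT => ?_, fun s hs hmj => ?_⟩
  · simp only [List.mem_append, List.mem_flatMap, List.mem_map] at hT
    obtain hT | ⟨A, hA, B, hB, rfl⟩ := hT
    · exact h.size_eq T hT
    · rw [size, h'.size_eq A hA, hS B hB]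
  · by_cases hC : ∀ T ∈ s, T ∈ C
    · obtain ⟨T, hT, hiso⟩ := h.exists_iso s hC hmj
      exact ⟨T, List.mem_append_left _ hT, hiso⟩
    · push Not at hC
      obtain ⟨B, hBs, hBC⟩ := hC
      have hB : B ∈ S := (hs B hBs).resolve_left hBC
      obtain ⟨s', hs', hiso⟩ := sum_iso_union_of_mem hBs
      have hsize := hiso.size_eq
      rw [size, hS B hB] at hsize
      obtain ⟨A, hA, hAiso⟩ := h'S.exists_iso s' (fun T hT => hs T (hs' T hT)) (by lia)
      refine ⟨A.union B, List.mem_append_right _ ?_,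
        hiso.trans (((Iso.refl B).union hAiso).trans (union_comm ..))⟩
      exact List.mem_flatMap.mpr ⟨A, hA, List.mem_map_of_mem hB⟩

theorem covers_vertex : Covers {vertex} 1 := by
  intro T hT
  obtain h | h := Nat.le_one_iff_eq_zero_or_eq_one.mp hT
  · exact ⟨[], by simp, iso_empty_of_size_eq_zero h⟩
  · exact ⟨[vertex], by simp, (iso_vertex_of_size_eq_one h).trans (union_empty _).symm⟩

theorem Covers.exists_iso_sum_or_compl (hC : Covers C j) (hT : T.size = j + 1) (hj : 1 ≤ j) :
    ∃ s : List Cotree, (∀ S ∈ s, S ∈ C) ∧ (T.Iso (sum_s16 s) ∨ T.Iso (sum_s16 s).compl_s16) := by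
  obtain ⟨A, B, hA, hB, hiso⟩ := T.exists_iso_union_or_compl (by lia)
  have hsize : T.size = A.size + B.size := hiso.elim Iso.size_eq Iso.size_eq
  obtain ⟨a, haC, ha⟩ := hC A (by lia)
  obtain ⟨b, hbC, hb⟩ := hC B (by lia)
  have hab : (A.union B).Iso (sum_s16 (a ++ b)) := (ha.union hb).trans (sum_append a b).symm
  exact ⟨a ++ b, fun S hS => (List.mem_append.mp hS).elim (haC S) (hbC S),
    hiso.imp (·.trans hab) (·.trans hab.compl_s16)⟩

theorem Covers.succ (hC : Covers C j) (hj : 1 ≤ j) (hl : ListsSums C (j + 1) l) :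
    Covers (C ∪ {T | T ∈ l.map compl_s16}) (j + 1) := by
  intro T hT
  obtain hT | hT := Nat.le_succ_iff.mp hT
  · obtain ⟨s, hs, hiso⟩ := hC T hT
    exact ⟨s, fun S hS => .inl (hs S hS), hiso⟩
  obtain ⟨s, hs, hiso | hiso⟩ := hC.exists_iso_sum_or_compl hT hj
  · exact ⟨s, fun S hS => .inl (hs S hS), hiso⟩
  · have hsize : (sum_s16 s).size = j + 1 := hiso.size_eq.symm.trans hT
    obtain ⟨S, hS, hSiso⟩ := hl.exists_iso s hs hsize
    refine ⟨[S.compl_s16], ?_, (hiso.trans hSiso.compl_s16).trans (union_empty _).symm⟩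
    simpa using .inr hS

end ListsSums

end Cotree

namespace PackedList

open Cotree

/-- Entry `m` of the table `F` stores the profiles of the disjoint unions with `m` vertices of
graphs in `C`. -/
def IsSumTable (L t : ℕ) (C : Set Cotree) (F : List PackedList) : Prop :=
  ∀ m < F.length, ∃ l, F.getD m nil = ofCotrees L t l ∧ ListsSums C m l

/-- Updates a table of disjoint unions when a graph with profile `x` and `j` vertices joins the
class of graphs whose unions are formed. -/
def attach (L j : ℕ) (F : List PackedList) (x : Profile) : List PackedList :=
  F.foldl (fun F' P => F' ++ [if F'.length < j then P
    else P.append L ((F'.getD (F'.length - j) nil).mapUnion x)]) []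

/-- Updates a table of disjoint unions when the graphs with `j` vertices whose profiles are listed
by `P` join the class of graphs whose unions are formed. It is assumed that the entries have less
than `2 * j` vertices, so that at most one component is new. -/
def attachLarge (L j : ℕ) (F : List PackedList) (P : PackedList) : List PackedList :=
  F.mapIdx fun m Q =>
    if m < j then Q else Q.append L (unions L ((F.getD (m - j) nil).toList L) P)

section IsSumTable

variable {L t n j : ℕ} {C : Set Cotree} {F : List PackedList} {P : PackedList} {T : Cotree}
  {l : List Cotree} {x : Profile}

theorem isSumTable_append_singleton :
    IsSumTable L t C (F ++ [P]) ↔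
      IsSumTable L t C F ∧ ∃ l, P = ofCotrees L t l ∧ ListsSums C F.length l := by
  rw [IsSumTable, List.length_append, List.length_singleton, Nat.forall_lt_succ_right]
  refine and_congr (forall₂_congr fun m hm => ?_) ?_
  · rw [List.getD_append _ _ _ _ hm]
  · rw [List.getD_append_right _ _ _ _ le_rfl, Nat.sub_self, List.getD_cons_zero]

theorem attach_append_singleton :
    attach L j (F ++ [P]) x = attach L j F x ++ [if (attach L j F x).length < j then P
      else P.append L (((attach L j F x).getD ((attach L j F x).length - j) nil).mapUnion x)] := by
  rw [attach, List.foldl_append]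
  rfl

theorem length_attach : (attach L j F x).length = F.length := by
  induction F using List.reverseRecOn with
  | nil => rfl
  | append_singleton F P ih => simp [attach_append_singleton, ih]

theorem IsSumTable.attach (hT : T.size ≠ 0) (hF : IsSumTable L t C F) :
    IsSumTable L t (insert T C) (attach L T.size F (T.profile t)) := by
  induction F using List.reverseRecOn with
  | nil => exact fun m hm => absurd hm (Nat.not_lt_zero m)
  | append_singleton F P ih =>
    obtain ⟨hF', l, rfl, hl⟩ := isSumTable_append_singleton.mp hF
    rw [attach_append_singleton, isSumTable_append_singleton, length_attach]
    refine ⟨ih hF', ?_⟩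
    split_ifs with hlt
    · exact ⟨l, rfl, hl.mono fun S hS hSC => (hS.resolve_right hSC) ▸ hlt⟩
    · obtain ⟨l', hl', hsums⟩ := ih hF' (F.length - T.size) (by rw [length_attach]; lia)
      have hm : F.length - T.size + T.size = F.length := Nat.sub_add_cancel (not_lt.mp hlt)
      rw [hl', ← ofCotrees_map_union, ← ofCotrees_append]
      exact ⟨_, rfl, hm ▸ ListsSums.insert (hm.symm ▸ hl) hsums⟩

theorem length_foldl_attach (xs : List Profile) :
    (xs.foldl (PackedList.attach L j) F).length = F.length := by
  induction xs generalizing F with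
  | nil => rfl
  | cons x xs ih => rw [List.foldl_cons, ih, length_attach]

theorem IsSumTable.foldl_attach (hj : j ≠ 0) (hl : ∀ T ∈ l, T.size = j)
    (hF : IsSumTable L t C F) :
    IsSumTable L t (C ∪ {T | T ∈ l})
      ((l.map (Cotree.profile t)).foldl (PackedList.attach L j) F) := by
  induction l generalizing C F with
  | nil => simpa using hF
  | cons T l ih =>
    obtain ⟨rfl, hl⟩ := List.forall_mem_cons.mp hl
    have hset : C ∪ {S | S ∈ T :: l} = insert T C ∪ {S | S ∈ l} := by
      ext S
      simp [or_assoc, or_left_comm]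
    rw [hset]
    exact ih hl (hF.attach hj)

theorem IsSumTable.attachLarge (hl : ∀ T ∈ l, T.size = j) (hF : IsSumTable L t C F)
    (hjF : F.length ≤ 2 * j) (hjt : j ≤ t) (hL : (t + 1) ^ j < 2 ^ L) :
    IsSumTable L t (C ∪ {T | T ∈ l}) (attachLarge L j F (ofCotrees L t l)) := by
  intro m hm
  rw [PackedList.attachLarge, List.length_mapIdx] at hm
  obtain ⟨lm, hlm, hsums⟩ := hF m hm
  rw [List.getD_eq_getElem _ _ hm] at hlm
  rw [PackedList.attachLarge, List.getD_eq_getElem _ _ (by simpa using hm), List.getElem_mapIdx,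
    hlm]
  split_ifs with hlt
  · exact ⟨lm, rfl, hsums.mono fun T hT hTC => (hl T (hT.resolve_left hTC)).symm ▸ hlt⟩
  · obtain ⟨l', hl', hsums'⟩ := hF (m - j) (by lia)
    have hmj : m - j + j = m := Nat.sub_add_cancel (not_lt.mp hlt)
    have hL' : (t + 1) ^ (m - j) < 2 ^ L :=
      (Nat.pow_le_pow_right t.succ_pos (by lia)).trans_lt hL
    rw [hl', toList_ofCotrees hsums'.size_eq (by lia) hL', ← ofCotrees_unions, ← ofCotrees_append]
    exact ⟨_, rfl, hmj ▸ ListsSums.union_of_lt (hmj.symm ▸ hsums) hsums' hl (by lia)⟩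

end IsSumTable

/-- The table `F` of length `n` stores the profiles of the disjoint unions of the graphs in a class
that covers all cographs with at most `j` vertices. -/
def IsCographTable (L t n j : ℕ) (F : List PackedList) : Prop :=
  F.length = n ∧ ∃ C, Covers C j ∧ IsSumTable L t C F

/-- Adds the connected cographs with `j` vertices to the graphs whose unions are formed. These are
the complements of the disconnected ones, found in the table. -/
def attachConnected (L : ℕ) (F : List PackedList) (j : ℕ) : List PackedList :=
  ((F.getD j nil).mapCompl.toList L).foldl (attach L j) F

/-- A faster version of `attachConnected` for tables of length at most `2 * j`. -/
def attachConnectedLarge (L : ℕ) (F : List PackedList) (j : ℕ) : List PackedList :=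
  attachLarge L j F (F.getD j nil).mapCompl

section IsCographTable

variable {L t n j : ℕ} {C : Set Cotree} {F : List PackedList}

theorem IsCographTable.exists_mapCompl_eq (hF : IsCographTable L t n j F) (hj : 1 ≤ j)
    (hjn : j + 1 < n) (hjt : j + 1 ≤ t) :
    ∃ C l, IsSumTable L t C F ∧ Covers (C ∪ {T | T ∈ l}) (j + 1) ∧
      (∀ T ∈ l, T.size = j + 1) ∧ (F.getD (j + 1) nil).mapCompl = ofCotrees L t l := by
  obtain ⟨rfl, C, hC, hsum⟩ := hF
  obtain ⟨l, hl, hsums⟩ := hsum (j + 1) hjn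
  refine ⟨C, l.map compl_s16, hsum, hC.succ hj hsums, ?_, ?_⟩
  · exact List.forall_mem_map.mpr hsums.size_eq
  · rw [hl, ofCotrees_map_compl fun T hT => (hsums.size_eq T hT).trans_le hjt]

theorem IsCographTable.attachConnected (hF : IsCographTable L t n j F) (hj : 1 ≤ j)
    (hjn : j + 1 < n) (hjt : j + 1 ≤ t) (hL : (t + 1) ^ (j + 1) < 2 ^ L) :
    IsCographTable L t n (j + 1) (attachConnected L F (j + 1)) := by
  obtain ⟨C, l, hsum, hC, hl, hcompl⟩ := hF.exists_mapCompl_eq hj hjn hjt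
  rw [PackedList.attachConnected, hcompl, toList_ofCotrees hl hjt hL]
  exact ⟨(length_foldl_attach _).trans hF.1, _, hC, hsum.foldl_attach j.succ_ne_zero hl⟩

theorem IsCographTable.attachConnectedLarge (hF : IsCographTable L t n j F) (hj : 1 ≤ j)
    (hjn : j + 1 < n) (hnj : n ≤ 2 * (j + 1)) (hjt : j + 1 ≤ t)
    (hL : (t + 1) ^ (j + 1) < 2 ^ L) :
    IsCographTable L t n (j + 1) (attachConnectedLarge L F (j + 1)) := by
  obtain ⟨C, l, hsum, hC, hl, hcompl⟩ := hF.exists_mapCompl_eq hj hjn hjt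
  rw [PackedList.attachConnectedLarge, hcompl]
  exact ⟨List.length_mapIdx.trans hF.1, _, hC, hsum.attachLarge hl (hF.1.trans_le hnj) hjt hL⟩

end IsCographTable

end PackedList

/-! ### Cographs with at most 14 vertices -/

namespace Profile

/-- An invariant of the unordered pair of values at `t` of the characteristic polynomials of a graph
and of its complement. It vanishes iff the two values agree. -/
def key (x : Profile) : ℕ :=
  x.det ^^^ x.compl_s16.det

theorem key_compl (x : Profile) : x.compl_s16.key = x.key := by
  rw [key, key, Nat.xor_comm, compl_s16, compl_s16, Nat.add_sub_cancel]

end Profile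

namespace Cotree

variable {S T : Cotree} {t : ℕ}

theorem det_profile_eq_of_cospectral (hS : S.size ≤ t) (hT : T.size ≤ t)
    (h : Cospectral S.graph T.graph) : (S.profile t).det = (T.profile t).det := by
  have hdet := cospectral_iff_det_eq.mp h t
  rw [(hasProfileAt hS).det_eq, (hasProfileAt hT).det_eq] at hdet
  exact_mod_cast hdet

theorem key_profile_eq_of_genCospectral (hS : S.size ≤ t) (hT : T.size ≤ t)
    (h : GenCospectral S.graph T.graph) : (S.profile t).key = (T.profile t).key :=
  congrArg₂ (· ^^^ ·) (det_profile_eq_of_cospectral hS hT h.1)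
    (det_profile_eq_of_cospectral (S := S.compl_s16) (T := T.compl_s16) hS hT h.2)

theorem not_cospectral_compl (hT : T.size ≤ t) (hkey : (T.profile t).key ≠ 0) :
    ¬ Cospectral T.graph T.compl_s16.graph := fun h =>
  hkey <| Nat.xor_eq_zero_iff.mpr (det_profile_eq_of_cospectral (T := T.compl_s16) hT hT h)

end Cotree

namespace PackedList

open Cotree

section Key

variable {w t m : ℕ} {l : List Cotree}

theorem det_profile_lt (hl : ∀ T ∈ l, T.size = m) (hmt : m ≤ t) (hw : (t + 1) ^ m < 2 ^ w) :
    ∀ T ∈ l, (T.profile t).det < 2 ^ w ∧ (T.profile t).compl_s16.det < 2 ^ w := fun T hT => by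
  have hb := bounded_profile (hl T hT ▸ hmt : T.size ≤ t)
  rw [hl T hT] at hb
  exact ⟨((Nat.le_add_right ..).trans hb.det_add_cof_le).trans_lt hw,
    ((Nat.sub_le ..).trans hb.negDet_le).trans_lt hw⟩

theorem digit_key_ofCotrees (hl : ∀ T ∈ l, T.size = m) (hmt : m ≤ t) (hw : (t + 1) ^ m < 2 ^ w)
    (i : ℕ) :
    digit (w + 1) (ofCotrees (w + 1) t l).packed.key i =
      (l.map fun T => (T.profile t).key).getD i 0 := by
  have hlt := det_profile_lt hl hmt hw
  have hpow : 2 ^ w ≤ 2 ^ (w + 1) := Nat.pow_le_pow_right two_pos w.le_succ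
  have hcompl : (ofCotrees (w + 1) t l).packed.compl_s16 =
      (ofCotrees (w + 1) t (l.map compl_s16)).packed :=
    congrArg packed (ofCotrees_map_compl fun T hT => (hl T hT).trans_le hmt).symm
  have hdet : (ofCotrees (w + 1) t l).packed.det =
      Nat.ofDigits (2 ^ (w + 1)) (l.map fun T => (T.profile t).det) := rfl
  have hcompl_det : (ofCotrees (w + 1) t (l.map compl_s16)).packed.det =
      Nat.ofDigits (2 ^ (w + 1)) (l.map fun T => (T.profile t).compl_s16.det) := by
    rw [ofCotrees, List.map_map]
    rfl
  rw [Profile.key, hcompl, hdet, hcompl_det, digit_xor,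
    digit_ofDigits (List.forall_mem_map.mpr fun T hT => (hlt T hT).1.trans_le hpow),
    digit_ofDigits (List.forall_mem_map.mpr fun T hT => (hlt T hT).2.trans_le hpow)]
  by_cases hi : i < l.length
  · simp [hi, Profile.key]
  · simp [hi]

theorem guarded_key_ofCotrees (hl : ∀ T ∈ l, T.size = m) (hmt : m ≤ t)
    (hw : (t + 1) ^ m < 2 ^ w) :
    Guarded w l.length (ofCotrees (w + 1) t l).packed.key where
  digit_lt i := by
    rw [digit_key_ofCotrees hl hmt hw]
    by_cases hi : i < l.length
    · have hlt := det_profile_lt hl hmt hw l[i] (List.getElem_mem hi)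
      simpa [hi, Profile.key] using Nat.xor_lt_two_pow hlt.1 hlt.2
    · simp [hi]
  digit_eq_zero i hi := by
    rw [digit_key_ofCotrees hl hmt hw]
    simp [hi]

theorem key_injOn_of_isDescending_sort {zs : List ℕ} (hl : ∀ T ∈ l, T.size = m) (hmt : m ≤ t)
    (hw : (t + 1) ^ m < 2 ^ w)
    (h : isDescending w l.length
      (oddEvenSort w l.length zs (ofCotrees (w + 1) t l).packed.key)) :
    Set.InjOn (fun T : Cotree => (T.profile t).key) {T | T ∈ l} := by
  have hinj := injOn_digit_of_isDescending_sort (guarded_key_ofCotrees hl hmt hw) h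
  intro S hS T hT hST
  obtain ⟨i, hi, rfl⟩ := List.getElem_of_mem hS
  obtain ⟨j, hj, rfl⟩ := List.getElem_of_mem hT
  have hij : i = j := hinj hi hj <| by
    rw [digit_key_ofCotrees hl hmt hw, digit_key_ofCotrees hl hmt hw]
    simpa [hi, hj] using hST
  subst hij
  rfl

theorem key_ne_zero_of_isDescending_sort {zs : List ℕ} (hl : ∀ T ∈ l, T.size = m) (hmt : m ≤ t)
    (hw : (t + 1) ^ m < 2 ^ w)
    (h : isDescending w l.length
      (oddEvenSort w l.length zs (ofCotrees (w + 1) t l).packed.key)) :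
    ∀ T ∈ l, (T.profile t).key ≠ 0 := by
  intro T hT
  obtain ⟨i, hi, rfl⟩ := List.getElem_of_mem hT
  have hpos := digit_pos_of_isDescending_sort (guarded_key_ofCotrees hl hmt hw) h hi
  rw [digit_key_ofCotrees hl hmt hw] at hpos
  simpa [hi, Nat.pos_iff_ne_zero] using hpos

end Key

section IsCographTable

variable {L t n j : ℕ} {F : List PackedList}

theorem IsCographTable.foldl_attachConnected (hF : IsCographTable L t n j F) (hj : 1 ≤ j) {k : ℕ}
    (hkn : j + k < n) (hkt : j + k ≤ t) (hL : (t + 1) ^ (j + k) < 2 ^ L) :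
    IsCographTable L t n (j + k)
      ((List.range' (j + 1) k).foldl (PackedList.attachConnected L) F) := by
  induction k with
  | zero => exact hF
  | succ k ih =>
    have hL' := (Nat.pow_le_pow_right t.succ_pos (Nat.le_succ (j + k))).trans_lt hL
    rw [List.range'_1_concat, List.foldl_append, Nat.add_right_comm j 1 k]
    exact (ih (by lia) (by lia) hL').attachConnected (by lia) hkn hkt hL

theorem IsCographTable.foldl_attachConnectedLarge (hF : IsCographTable L t n j F) (hj : 1 ≤ j)
    (hnj : n ≤ 2 * (j + 1)) {k : ℕ} (hkn : j + k < n) (hkt : j + k ≤ t)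
    (hL : (t + 1) ^ (j + k) < 2 ^ L) :
    IsCographTable L t n (j + k)
      ((List.range' (j + 1) k).foldl (PackedList.attachConnectedLarge L) F) := by
  induction k with
  | zero => exact hF
  | succ k ih =>
    have hL' := (Nat.pow_le_pow_right t.succ_pos (Nat.le_succ (j + k))).trans_lt hL
    rw [List.range'_1_concat, List.foldl_append, Nat.add_right_comm j 1 k]
    exact (ih (by lia) (by lia) hL').attachConnectedLarge (by lia) hkn (by lia) hkt hL

theorem IsCographTable.exists_list (hF : IsCographTable L t n j F) (hj : 1 ≤ j)
    (hjn : j + 1 < n) :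
    ∃ l, F.getD (j + 1) nil = ofCotrees L t l ∧ (∀ T ∈ l, T.size = j + 1) ∧
      ∀ T : Cotree, T.size = j + 1 → ∃ S ∈ l, T.Iso S ∨ T.Iso S.compl_s16 := by
  obtain ⟨rfl, C, hC, hsum⟩ := hF
  obtain ⟨l, hl, hsums⟩ := hsum (j + 1) hjn
  refine ⟨l, hl, hsums.size_eq, fun T hT => ?_⟩
  obtain ⟨s, hs, hiso⟩ := hC.exists_iso_sum_or_compl hT hj
  have hsize : T.size = (sum_s16 s).size := hiso.elim Iso.size_eq Iso.size_eq
  obtain ⟨S, hS, hSiso⟩ := hsums.exists_iso s hs (hsize.symm.trans hT)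
  exact ⟨S, hS, hiso.imp (·.trans hSiso) (·.trans hSiso.compl_s16)⟩

end IsCographTable

/-- The table of length `n + 1` of the disjoint unions of no graphs. -/
def emptySums (n : ℕ) : List PackedList :=
  ⟨1, 1, 0, 1, 0⟩ :: List.replicate n nil

theorem isSumTable_emptySums (L t n : ℕ) : IsSumTable L t ∅ (emptySums n) := by
  have hnil {s : List Cotree} (hs : ∀ T ∈ s, T ∈ (∅ : Set Cotree)) : s = [] :=
    List.eq_nil_iff_forall_not_mem.mpr hs
  rintro (_ | m) hm
  · refine ⟨[empty], ?_, by simp [size], fun s hs _ => ⟨empty, by simp, ?_⟩⟩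
    · simp [emptySums, ofCotrees, Cotree.profile]
    · rw [hnil hs]
      exact .refl _
  · refine ⟨[], ?_, by simp, fun s hs hsize => ?_⟩
    · rw [emptySums, List.length_cons, Nat.add_lt_add_iff_right] at hm
      rw [emptySums, List.getD_cons_succ, List.getD_eq_getElem _ _ hm, List.getElem_replicate]
      rfl
    · rw [hnil hs] at hsize
      exact absurd hsize.symm m.succ_ne_zero

/-- The table of the disjoint unions of at most `n` isolated vertices. -/
def vertexSums (L t n : ℕ) : List PackedList :=
  attach L 1 (emptySums n) ⟨t, 1, t + 1, 1⟩

theorem isCographTable_vertexSums (L t n : ℕ) :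
    IsCographTable L t (n + 1) 1 (vertexSums L t n) := by
  refine ⟨by simp [vertexSums, length_attach, emptySums], {vertex}, covers_vertex, ?_⟩
  rw [← insert_empty_eq]
  exact (isSumTable_emptySums L t n).attach (T := vertex) one_ne_zero

/-- The table used for the cographs with 14 vertices. The values at `t = 15` of their generalized
characteristic polynomials are less than `16 ^ 14 = 2 ^ 56`, and sorting requires a guard bit. -/
def cographTable : List PackedList :=
  (List.range' 8 6).foldl (attachConnectedLarge 58)
    ((List.range' 2 6).foldl (attachConnected 58) (vertexSums 58 15 14))

theorem isCographTable_cographTable : IsCographTable 58 15 15 13 cographTable :=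
  ((isCographTable_vertexSums 58 15 14).foldl_attachConnected (k := 6) le_rfl (by norm_num)
    (by norm_num) (by norm_num)).foldl_attachConnectedLarge (k := 6) (by norm_num) (by norm_num)
    (by norm_num) (by norm_num) (by norm_num)

/-- The profiles of the disconnected cographs with 14 vertices. -/
def disconnectedCographs : PackedList :=
  cographTable.getD 14 nil

set_option maxRecDepth 100000 in
theorem length_disconnectedCographs : disconnectedCographs.length = 218751 :=
  Nat.eq_of_beq_eq_true (by decide +kernel)

set_option maxRecDepth 100000 in
theorem isDescending_sort_key_disconnectedCographs :
    isDescending 57 218751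
      (oddEvenSort 57 218751 (sortMasks 57 218751 18) disconnectedCographs.packed.key) := by
  decide +kernel

end PackedList

namespace Cotree

theorem exists_list_key_injOn : ∃ l : List Cotree, (∀ T ∈ l, T.size = 14) ∧
    Set.InjOn (fun T : Cotree => (T.profile 15).key) {T | T ∈ l} ∧
      (∀ T ∈ l, (T.profile 15).key ≠ 0) ∧
      ∀ T : Cotree, T.size = 14 → ∃ S ∈ l, T.Iso S ∨ T.Iso S.compl_s16 := by
  obtain ⟨l, hl, hsize, hiso⟩ :=
    PackedList.isCographTable_cographTable.exists_list (by norm_num) (by norm_num)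
  change PackedList.disconnectedCographs = _ at hl
  have hlength := congrArg PackedList.length hl
  have hsort := PackedList.isDescending_sort_key_disconnectedCographs
  rw [PackedList.length_disconnectedCographs] at hlength
  rw [hlength, hl] at hsort
  exact ⟨l, hsize,
    PackedList.key_injOn_of_isDescending_sort hsize (by norm_num) (by norm_num) hsort,
    PackedList.key_ne_zero_of_isDescending_sort hsize (by norm_num) (by norm_num) hsort, hiso⟩

theorem iso_of_genCospectral_of_size_eq_fourteen {S T : Cotree} (hS : S.size = 14)
    (hT : T.size = 14) (h : GenCospectral S.graph T.graph) : S.Iso T := by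
  obtain ⟨l, hsize, hinj, hkey, hiso⟩ := exists_list_key_injOn
  have key_eq {U A : Cotree} (hA : A ∈ l) (hUA : U.Iso A ∨ U.Iso A.compl_s16) :
      (U.profile 15).key = (A.profile 15).key := by
    have hA15 : A.size ≤ 15 := (hsize A hA).trans_le (by norm_num)
    obtain hUA | hUA := hUA <;> obtain ⟨e⟩ := id hUA
    · exact key_profile_eq_of_genCospectral (hUA.size_eq.trans_le hA15) hA15 (.of_iso e)
    · exact (key_profile_eq_of_genCospectral (T := A.compl_s16) (hUA.size_eq.trans_le hA15) hA15
        (.of_iso e)).trans (A.profile 15).key_compl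
  obtain ⟨A, hA, hSA⟩ := hiso S hS
  obtain ⟨B, hB, hTB⟩ := hiso T hT
  have hST : (S.profile 15).key = (T.profile 15).key :=
    key_profile_eq_of_genCospectral (hS.trans_le (by norm_num)) (hT.trans_le (by norm_num)) h
  obtain rfl : A = B := hinj hA hB ((key_eq hA hSA).symm.trans (hST.trans (key_eq hB hTB)))
  have hcospectral {U U' : Cotree} (hU : U.Iso A) (hU' : U'.Iso A.compl_s16)
      (hUU' : Cospectral U.graph U'.graph) : False := by
    obtain ⟨e⟩ := hU
    obtain ⟨e'⟩ := hU'
    exact not_cospectral_compl ((hsize A hA).trans_le (by norm_num)) (hkey A hA)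
      (((cospectral_of_iso e).symm.trans hUU').trans (cospectral_of_iso e'))
  obtain hS' | hS' := hSA <;> obtain hT' | hT' := hTB
  · exact hS'.trans hT'.symm
  · exact (hcospectral hS' hT' h.1).elim
  · exact (hcospectral hT' hS' h.1.symm).elim
  · exact hS'.trans hT'.symm

end Cotree

section IsolatedVertices

variable {V W : Type}

theorem not_adj_sum_bot_inr {U : Type} (G : SimpleGraph V) (u : U) (x : V ⊕ U) :
    ¬ (G ⊕g (⊥ : SimpleGraph U)).Adj (.inr u) x := by
  cases x <;> simp

theorem nonempty_iso_of_sum_unit_iso {G : SimpleGraph V} {H : SimpleGraph W}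
    (e : G ⊕g (⊥ : SimpleGraph Unit) ≃g H ⊕g (⊥ : SimpleGraph Unit)) : Nonempty (G ≃g H) := by
  let f : Option V ≃ Option W :=
    (Equiv.optionEquivSumPUnit V).trans (e.toEquiv.trans (Equiv.optionEquivSumPUnit W).symm)
  have heq_or (x : V) : .inl (f.removeNone x) = e (.inl x) ∨
      .inr () = e (.inl x) ∧ .inl (f.removeNone x) = e (.inr ()) := by
    cases hx : e (.inl x) with
    | inl w =>
      have hfx : f (some x) = some w := by simp [f, hx]
      have hw := f.removeNone_some ⟨w, hfx⟩
      rw [hfx, Option.some_inj] at hw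
      exact .inl (congrArg Sum.inl hw)
    | inr u =>
      have hw := f.removeNone_none (x := x) (by simp [f, hx])
      exact .inr ⟨rfl, (congrArg (Equiv.optionEquivSumPUnit W) hw).trans
        (Equiv.apply_symm_apply ..)⟩
  have hadj (x : V) (z : W ⊕ Unit) :
      (H ⊕g ⊥).Adj (.inl (f.removeNone x)) z ↔ (H ⊕g ⊥).Adj (e (.inl x)) z := by
    obtain hx | ⟨hx, hx'⟩ := heq_or x
    · rw [hx]
    · rw [hx', ← hx, ← e.apply_symm_apply z, e.map_adj_iff]
      exact iff_of_false (not_adj_sum_bot_inr G () _) (not_adj_sum_bot_inr H () _)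
  refine ⟨f.removeNone, fun {x y} => ?_⟩
  rw [← sum_adj_inl (H := (⊥ : SimpleGraph Unit)), hadj, adj_comm, hadj, adj_comm, e.map_adj_iff,
    sum_adj_inl]

end IsolatedVertices

section UniqueReconstruction

variable {V W : Type} [Fintype V] [DecidableEq V] [Fintype W] [DecidableEq W]
  {G : SimpleGraph V} {H : SimpleGraph W}

theorem IsCograph.nonempty_iso_of_card_eq_fourteen (hG : IsCograph G) (hH : IsCograph H)
    (hcard : Fintype.card V = 14) (h : GenCospectral G H) : Nonempty (G ≃g H) := by
  obtain ⟨S, ⟨eS⟩⟩ := Cotree.exists_graph_iso G hG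
  obtain ⟨T, ⟨eT⟩⟩ := Cotree.exists_graph_iso H hH
  have hS : S.size = 14 := by rw [← S.card_vert, Fintype.card_congr eS.toEquiv, hcard]
  have hT : T.size = 14 := by
    rw [← T.card_vert, Fintype.card_congr eT.toEquiv, ← h.1.card_eq, hcard]
  obtain ⟨e⟩ := Cotree.iso_of_genCospectral_of_size_eq_fourteen hS hT
    (((GenCospectral.of_iso eS).trans h).trans (.of_iso eT.symm))
  exact ⟨(eS.symm.trans e).trans eT⟩

theorem IsCograph.nonempty_iso_of_card_le_fourteen (hG : IsCograph G) (hH : IsCograph H)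
    (hcard : Fintype.card V ≤ 14) (h : GenCospectral G H) : Nonempty (G ≃g H) := by
  obtain ⟨k, hk⟩ := Nat.exists_eq_add_of_le hcard
  induction k generalizing V W with
  | zero => exact hG.nonempty_iso_of_card_eq_fourteen hH hk.symm h
  | succ k ih =>
    have hcard' : Fintype.card (V ⊕ Unit) + k = 14 := by
      rw [Fintype.card_sum, Fintype.card_unit]
      lia
    have hbot : IsCograph (⊥ : SimpleGraph Unit) := isCograph_of_subsingleton ⊥
    obtain ⟨e⟩ := ih (hG.sum_s16 hbot) (hH.sum_s16 hbot) (by lia) (h.sum_s16 ⊥) hcard'.symm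
    exact nonempty_iso_of_sum_unit_iso e

end UniqueReconstruction

/-! ### A pair of cographs with 15 vertices -/

namespace Cotree

section Pair

variable {S T : Cotree}

theorem cospectral_of_det_profile_eq (hsize : S.size = T.size)
    (h : ∀ i < T.size, (S.profile (T.size + i)).det = (T.profile (T.size + i)).det) :
    Cospectral S.graph T.graph := by
  have hcard (U : Cotree) : (adjCharPoly U.graph).degree = U.size := by
    rw [Polynomial.degree_eq_natDegree (monic_adjCharPoly _).ne_zero, natDegree_adjCharPoly,
      card_vert]
  refine Polynomial.eq_of_degree_le_of_eval_index_eq (Finset.range T.size)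
    (v := fun i => ((T.size + i : ℕ) : ℝ)) (fun i _ j _ hij => ?_) ?_ ?_ ?_ fun i hi => ?_
  · exact Nat.add_left_cancel (Nat.cast_injective hij)
  · rw [hcard, hsize, Finset.card_range]
  · rw [hcard, hcard, hsize]
  · rw [monic_adjCharPoly, monic_adjCharPoly]
  · have hT : T.size ≤ T.size + i := Nat.le_add_right ..
    rw [eval_adjCharPoly, eval_adjCharPoly, (hasProfileAt (hsize.trans_le hT)).det_eq,
      (hasProfileAt hT).det_eq, h i (Finset.mem_range.mp hi)]

theorem genCospectral_of_det_profile_eq (hsize : S.size = T.size)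
    (h : ∀ i < T.size, (S.profile (T.size + i)).det = (T.profile (T.size + i)).det ∧
      (S.profile (T.size + i)).compl_s16.det = (T.profile (T.size + i)).compl_s16.det) :
    GenCospectral S.graph T.graph :=
  ⟨cospectral_of_det_profile_eq hsize fun i hi => (h i hi).1,
    cospectral_of_det_profile_eq (S := S.compl_s16) (T := T.compl_s16) hsize fun i hi => (h i hi).2⟩

theorem exists_iso_fin {n : ℕ} (hT : T.size = n) :
    ∃ G : SimpleGraph (Fin n), Nonempty (T.graph ≃g G) :=
  ⟨_, ⟨SimpleGraph.Iso.map (Fintype.equivFinOfCardEq (T.card_vert.trans hT)) T.graph⟩⟩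

end Pair

instance instDecidableRelAdj : (T : Cotree) → DecidableRel T.graph.Adj
  | empty => inferInstanceAs (DecidableRel (⊥ : SimpleGraph Empty).Adj)
  | vertex => inferInstanceAs (DecidableRel (⊥ : SimpleGraph Unit).Adj)
  | union S T =>
    fun (x y : S.Vert ⊕ T.Vert) => match x, y with
    | .inl x, .inl y => S.instDecidableRelAdj x y
    | .inl _, .inr _ => .isFalse Bool.false_ne_true
    | .inr _, .inl _ => .isFalse Bool.false_ne_true
    | .inr x, .inr y => T.instDecidableRelAdj x y
  | compl_s16 T =>
    letI := T.instDecidableRelAdj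
    inferInstanceAs (DecidableRel T.graphᶜ.Adj)

/-- The join of two cographs: their disjoint union with all edges between them. -/
def join (S T : Cotree) : Cotree :=
  compl_s16 (S.compl_s16.union T.compl_s16)

/-- The edgeless graph with `n` vertices. -/
def edgeless (n : ℕ) : Cotree :=
  sum_s16 (List.replicate n vertex)

/-- The path with 3 vertices. -/
def path₃ : Cotree :=
  vertex.join (edgeless 2)

/-- The member with a component `K_{1,4}` of the pair of generalized cospectral cographs. -/
def starMate : Cotree :=
  (vertex.join (edgeless 4)).union
    ((edgeless 2).join (((edgeless 2).join ((edgeless 2).join vertex)).union path₃))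

/-- The member with a component `K_{2,2}` of the pair of generalized cospectral cographs. -/
def squareMate : Cotree :=
  ((edgeless 2).join (edgeless 2)).union
    (vertex.join (((edgeless 4).join ((edgeless 2).join vertex)).union path₃))

theorem genCospectral_starMate_squareMate : GenCospectral starMate.graph squareMate.graph :=
  genCospectral_of_det_profile_eq rfl (by decide +kernel)

theorem exists_degree_starMate_eq_one : ∃ v, starMate.graph.degree v = 1 := by
  decide +kernel

theorem degree_squareMate_ne_one : ∀ v, squareMate.graph.degree v ≠ 1 := by
  decide +kernel

theorem not_iso_starMate_squareMate : ¬ starMate.Iso squareMate := by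
  rintro ⟨e⟩
  obtain ⟨v, hv⟩ := exists_degree_starMate_eq_one
  exact degree_squareMate_ne_one (e v) ((e.degree_eq v).trans hv)

end Cotree

/-- There is a pair of non-isomorphic generalized cospectral cographs on `15` vertices,
and `15` is minimal: on fewer vertices, generalized cospectral cographs are isomorphic. -/
theorem minimal_generalized_cospectral_cograph_pair_has_fifteen_vertices :
    (∃ G H : SimpleGraph (Fin 15),
        IsCograph G ∧ IsCograph H ∧ GenCospectral G H ∧ ¬ Nonempty (G ≃g H)) ∧
      ∀ n < 15, ∀ G H : SimpleGraph (Fin n),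
        IsCograph G → IsCograph H → GenCospectral G H → Nonempty (G ≃g H) := by
  constructor
  · obtain ⟨G, ⟨eG⟩⟩ := Cotree.exists_iso_fin (T := .starMate) (n := 15) rfl
    obtain ⟨H, ⟨eH⟩⟩ := Cotree.exists_iso_fin (T := .squareMate) (n := 15) rfl
    refine ⟨G, H, (Cotree.isCograph_graph _).of_embedding_s16 eG.symm.toEmbedding,
      (Cotree.isCograph_graph _).of_embedding_s16 eH.symm.toEmbedding, ?_, ?_⟩
    · exact ((GenCospectral.of_iso eG.symm).trans
        Cotree.genCospectral_starMate_squareMate).trans (.of_iso eH)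
    · rintro ⟨e⟩
      exact Cotree.not_iso_starMate_squareMate ⟨(eG.trans e).trans eH.symm⟩
  · intro n hn G H hG hH h
    exact hG.nonempty_iso_of_card_le_fourteen hH (by rw [Fintype.card_fin]; lia) h
end
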